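/- arXiv:1502.01779 — 3 statements merged into one kernel-verified Lean document; each statement's English description precedes it below -/
import Mathlib

section
/- There exists a compact convex body K ⊆ ℝ³ (a compact convex set with nonempty interior) such that for every positive integer m there are translation vectors t₁, …, t₍₃ₘ₎ ∈ ℝ³ for which the complement ℝ³ ∖ ⋃_{i=1}^{3m} (tᵢ + K) has exactly m³ − m + 1 connected components. In particular, the maximum number of holes in the union of n translates of a compact convex body in ℝ³ is Ω(n³). -/
open Pointwise

/-
The body has a concave upper and a convex lower boundary, each with one piece for every dyadic
scale. Of its `3 * m` translates, `m` are floors, `m` are ceilings high above them, one for each of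
`m` consecutive scales, and `m` are walls. A floor and the ceiling of scale `r` meet only along
their pieces of scale `r`, over a convex set of the plane, a blade, which surrounds a nearly
horizontal contact curve, is thin at its right end and widens to the left. The contact curves of the
`m ^ 2` blades are stacked above one another, so that they bound `m ^ 2 - 1` rows, which the walls
cut into `m` columns; the left end of the first column is closed by the blades themselves.

Over a point outside blades and walls the floors lie below the ceilings, so the components of the
complement can be studied in the plane. Moving right never enters a blade. This makes the free part
of each cell connected and lets every free point outside the cells reach a place not covered by
floors or not covered by ceilings, from where one leaves vertically. Thus each of the
`(m ^ 2 - 1) * m` cells carries exactly one hole, and the exterior is the only other component.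
-/

namespace CubicVoids

open Set

section Topology

variable {X Y : Type*} [TopologicalSpace X] [TopologicalSpace Y]

lemma isPreconnected_inter_preimage_of_isOpenMap {f : X → Y} (hf : IsOpenMap f) {U : Set X}
    (hU : IsOpen U) (hfiber : ∀ y, IsPreconnected (U ∩ f ⁻¹' {y})) {S : Set Y}
    (hS : IsPreconnected S) (hSU : S ⊆ f '' U) : IsPreconnected (U ∩ f ⁻¹' S) := by
  rintro V W hV hW hcover ⟨v, ⟨hvU, hvS⟩, hvV⟩ ⟨w, ⟨hwU, hwS⟩, hwW⟩
  obtain ⟨y, hyS, ⟨v', ⟨hv'U, hv'V⟩, rfl⟩, w', ⟨hw'U, hw'W⟩, hvw⟩ :=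
    hS (f '' (U ∩ V)) (f '' (U ∩ W)) (hf _ (hU.inter hV)) (hf _ (hU.inter hW))
      (fun y hy => by
        obtain ⟨x, hxU, rfl⟩ := hSU hy
        exact (hcover ⟨hxU, hy⟩).imp (fun h => ⟨x, ⟨hxU, h⟩, rfl⟩) fun h => ⟨x, ⟨hxU, h⟩, rfl⟩)
      ⟨f v, hvS, v, ⟨hvU, hvV⟩, rfl⟩ ⟨f w, hwS, w, ⟨hwU, hwW⟩, rfl⟩
  have hsub : U ∩ f ⁻¹' {f v'} ⊆ U ∩ f ⁻¹' S :=
    inter_subset_inter_right U (preimage_mono (singleton_subset_iff.2 hyS))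
  obtain ⟨x, hx, hxVW⟩ := hfiber (f v') V W hV hW (hsub.trans hcover)
    ⟨v', ⟨hv'U, rfl⟩, hv'V⟩ ⟨w', ⟨hw'U, hvw⟩, hw'W⟩
  exact ⟨x, hsub hx, hxVW⟩

lemma subset_connectedComponentIn_of_inter_nonempty {S F : Set X} {x : X} (hS : IsPreconnected S)
    (hSF : S ⊆ F) (hSx : (S ∩ connectedComponentIn F x).Nonempty) :
    S ⊆ connectedComponentIn F x := by
  obtain ⟨y, hyS, hyx⟩ := hSx
  rw [connectedComponentIn_eq hyx]
  exact hS.subset_connectedComponentIn hyS hSF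

lemma card_connectedComponents_of_isClopen {ι : Type*} [Finite ι] {U : ι → Set X} {x : X}
    (hclopen : ∀ i, IsClopen (U i)) (hconn : ∀ i, IsConnected (U i))
    (hdisj : Pairwise (Function.onFun Disjoint U)) (hx : ∀ i, x ∉ U i)
    (hcompl : (⋃ i, U i)ᶜ ⊆ connectedComponent x) :
    Nat.card (ConnectedComponents X) = Nat.card ι + 1 := by
  have hVclopen : IsClopen (⋃ i, U i)ᶜ := (isClopen_iUnion_of_finite hclopen).compl
  have hV : (⋃ i, U i)ᶜ = connectedComponent x :=
    hcompl.antisymm (hVclopen.connectedComponent_subset (by simpa using hx))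
  let V : Option ι → Set X := fun o => o.elim (⋃ i, U i)ᶜ U
  have hVconn : ∀ o, IsConnected (V o) := by
    rintro (_ | i)
    · change IsConnected (⋃ i, U i)ᶜ
      rw [hV]
      exact isConnected_connectedComponent
    · exact hconn i
  have hVdisj : Pairwise (Function.onFun Disjoint V) := by
    rintro (_ | i) (_ | j) hij
    · exact absurd rfl hij
    · exact disjoint_compl_left.mono_right (subset_iUnion U j)
    · exact disjoint_compl_right.mono_left (subset_iUnion U i)
    · exact hdisj fun h => hij (congrArg some h)
  have hVunion : ⋃ o, V o = univ := by
    rw [iUnion_option]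
    exact compl_union_self _
  have (o : Option ι) : ConnectedSpace (V o) := isConnected_iff_connectedSpace.1 (hVconn o)
  have (o : Option ι) : Unique (ConnectedComponents (V o)) :=
    (nonempty_unique _).some
  rw [← Finite.card_option, Nat.card_congr <| (ConnectedComponents.equivOfIsClopen
    (Option.rec hVclopen hclopen) hVdisj hVunion).trans (Equiv.sigmaUnique _ _)]

end Topology

section Convexity

variable {E ι : Type*} [AddCommMonoid E] [Module ℝ E] [Nonempty ι] {s : Set E} {f : ι → E → ℝ}

lemma convexOn_ciSup (hf : ∀ i, ConvexOn ℝ s (f i))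
    (hbdd : ∀ x ∈ s, BddAbove (range fun i => f i x)) : ConvexOn ℝ s fun x => ⨆ i, f i x := by
  refine ⟨(hf (Classical.arbitrary ι)).1, fun x hx y hy a b ha hb hab => ciSup_le fun i => ?_⟩
  calc f i (a • x + b • y) ≤ a • f i x + b • f i y := (hf i).2 hx hy ha hb hab
    _ ≤ _ := by
      gcongr
      exacts [le_ciSup (hbdd x hx) i, le_ciSup (hbdd y hy) i]

lemma concaveOn_ciInf (hf : ∀ i, ConcaveOn ℝ s (f i))
    (hbdd : ∀ x ∈ s, BddBelow (range fun i => f i x)) : ConcaveOn ℝ s fun x => ⨅ i, f i x := by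
  refine ⟨(hf (Classical.arbitrary ι)).1, fun x hx y hy a b ha hb hab => le_ciInf fun i => ?_⟩
  calc _ ≤ a • f i x + b • f i y := by
        gcongr
        exacts [ciInf_le (hbdd x hx) i, ciInf_le (hbdd y hy) i]
    _ ≤ f i (a • x + b • y) := (hf i).2 hx hy ha hb hab

end Convexity

lemma exists_mem_Ico_succ {α : Type*} [LinearOrder α] {f : ℕ → α} {y : α} {l : ℕ}
    (hy : y ∈ Ico (f 0) (f l)) : ∃ k < l, y ∈ Ico (f k) (f (k + 1)) := by
  induction l with
  | zero => exact absurd (hy.1.trans_lt hy.2) (lt_irrefl _)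
  | succ l ih =>
    rcases lt_or_ge y (f l) with hlt | hge
    · exact (ih ⟨hy.1, hlt⟩).imp fun k hk => ⟨hk.1.trans l.lt_succ_self, hk.2⟩
    · exact ⟨l, l.lt_succ_self, hge, hy.2⟩

section Scale

/-- The dyadic scales `2⁻ᵏ` at which the facets of the body are placed. -/
noncomputable def scale (k : ℕ) : ℝ := (1 / 2) ^ k

lemma scale_pos (k : ℕ) : 0 < scale k := by
  unfold scale
  positivity

lemma scale_succ (k : ℕ) : scale (k + 1) = scale k / 2 := by
  rw [scale, scale, pow_succ, mul_one_div]

lemma antitone_scale : Antitone scale :=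
  pow_right_anti₀ (by norm_num) (by norm_num)

lemma scale_le_one (k : ℕ) : scale k ≤ 1 :=
  pow_le_one₀ (by norm_num) (by norm_num)

lemma scale_trichotomy (j k : ℕ) :
    2 * scale j ≤ scale k ∨ scale k = scale j ∨ scale k ≤ scale j / 2 := by
  rcases lt_trichotomy j k with h | rfl | h
  · have := antitone_scale (Nat.succ_le_of_lt h)
    rw [Nat.succ_eq_add_one, scale_succ] at this
    exact .inr (.inr (by linarith))
  · exact .inr (.inl rfl)
  · have := antitone_scale (Nat.succ_le_of_lt h)
    rw [Nat.succ_eq_add_one, scale_succ] at this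
    exact .inl (by linarith)

lemma eight_mul_scale_le_or_le_four_mul (j k : ℕ) :
    8 * scale j ≤ scale k ∨ scale k ≤ 4 * scale j := by
  rcases le_total j (k + 2) with h | h
  · have := antitone_scale h
    simp only [scale_succ] at this
    exact .inr (by linarith)
  · rcases eq_or_lt_of_le h with rfl | h
    · exact .inr (by simp only [scale_succ]; linarith)
    · have := antitone_scale (show k + 3 ≤ j from h)
      simp only [scale_succ] at this
      exact .inl (by linarith)

end Scale

section Profile

/-- The height over the point `q` of the ridge of scale `s` bounding the body from above. The affine
part is tangent to the parabola `-y ^ 2` at `y = -s`; the absolute value bends it down away from the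
line `y = -s * (1 + x / 16)`. -/
noncomputable def roof (s : ℝ) (q : ℝ × ℝ) : ℝ :=
  s ^ 2 + 2 * s * q.2 - s / 4 * |q.2 + s * (1 + q.1 / 16)|

/-- The height over the point `q` of the plane of scale `s` bounding the body from below. Its slope
in the first coordinate makes the blades defined below widen to the left. -/
noncomputable def keel (s : ℝ) (q : ℝ × ℝ) : ℝ :=
  2 * s * (q.2 + 7) + s ^ 2 * (q.1 + 1) / 4 - 4 * s ^ 2

/-- The upper boundary of the body, up to a vertical shift. -/
noncomputable def roofHeight (q : ℝ × ℝ) : ℝ := ⨅ k, roof (scale k) q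

/-- The lower boundary of the body, up to a vertical shift. -/
noncomputable def keelHeight (q : ℝ × ℝ) : ℝ := ⨆ k, keel (scale k) q

lemma scale_mem_Icc (k : ℕ) : scale k ∈ Icc (0 : ℝ) 1 := ⟨(scale_pos k).le, scale_le_one k⟩

lemma bddBelow_range_roof (q : ℝ × ℝ) : BddBelow (range fun k => roof (scale k) q) := by
  have hcont : Continuous fun s => roof s q := by
    unfold roof
    fun_prop
  exact (isCompact_Icc.bddBelow_image hcont.continuousOn).mono <|
    range_subset_iff.2 fun k => mem_image_of_mem _ (scale_mem_Icc k)

lemma bddAbove_range_keel (q : ℝ × ℝ) : BddAbove (range fun k => keel (scale k) q) := by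
  have hcont : Continuous fun s => keel s q := by
    unfold keel
    fun_prop
  exact (isCompact_Icc.bddAbove_image hcont.continuousOn).mono <|
    range_subset_iff.2 fun k => mem_image_of_mem _ (scale_mem_Icc k)

lemma roofHeight_le (q : ℝ × ℝ) (k : ℕ) : roofHeight q ≤ roof (scale k) q :=
  ciInf_le (bddBelow_range_roof q) k

lemma le_keelHeight (q : ℝ × ℝ) (k : ℕ) : keel (scale k) q ≤ keelHeight q :=
  le_ciSup (bddAbove_range_keel q) k

lemma concaveOn_roof {s : ℝ} (hs : 0 ≤ s) : ConcaveOn ℝ univ (roof s) := by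
  refine ⟨convex_univ, fun p _ q _ a b ha hb hab => ?_⟩
  have habs : |(a • p + b • q).2 + s * (1 + (a • p + b • q).1 / 16)| ≤
      a * |p.2 + s * (1 + p.1 / 16)| + b * |q.2 + s * (1 + q.1 / 16)| := by
    calc _ = |a * (p.2 + s * (1 + p.1 / 16)) + b * (q.2 + s * (1 + q.1 / 16))| := by
          congr 1
          simp only [Prod.snd_add, Prod.fst_add, Prod.smul_fst, Prod.smul_snd, smul_eq_mul]
          linear_combination -s * hab
      _ ≤ _ := (abs_add_le _ _).trans_eq (by rw [abs_mul, abs_mul, abs_of_nonneg ha,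
          abs_of_nonneg hb])
  have hmul := mul_le_mul_of_nonneg_left habs (show 0 ≤ s / 4 by linarith)
  calc a • roof s p + b • roof s q
      = s ^ 2 + 2 * s * (a * p.2 + b * q.2)
          - s / 4 * (a * |p.2 + s * (1 + p.1 / 16)| + b * |q.2 + s * (1 + q.1 / 16)|) := by
        unfold roof
        simp only [smul_eq_mul]
        linear_combination s ^ 2 * hab
    _ ≤ s ^ 2 + 2 * s * (a * p.2 + b * q.2)
          - s / 4 * |(a • p + b • q).2 + s * (1 + (a • p + b • q).1 / 16)| := by linarith
    _ = roof s (a • p + b • q) := rfl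

lemma convexOn_keel (s : ℝ) : ConvexOn ℝ univ (keel s) := by
  refine ⟨convex_univ, fun p _ q _ a b _ _ hab => le_of_eq ?_⟩
  simp only [keel, Prod.snd_add, Prod.fst_add, Prod.smul_fst, Prod.smul_snd, smul_eq_mul]
  linear_combination (-14 * s + 15 / 4 * s ^ 2) * hab

lemma concaveOn_roofHeight : ConcaveOn ℝ univ roofHeight :=
  concaveOn_ciInf (fun k => concaveOn_roof (scale_pos k).le) fun q _ => bddBelow_range_roof q

lemma convexOn_keelHeight : ConvexOn ℝ univ keelHeight :=
  convexOn_ciSup (fun k => convexOn_keel (scale k)) fun q _ => bddAbove_range_keel q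

lemma continuous_roofHeight : Continuous roofHeight :=
  continuousOn_univ.1 (concaveOn_roofHeight.continuousOn isOpen_univ)

lemma continuous_keelHeight : Continuous keelHeight :=
  continuousOn_univ.1 (convexOn_keelHeight.continuousOn isOpen_univ)

/-- The projection of the body to the first two coordinates. -/
def triangle : Set (ℝ × ℝ) := {q | -2 ≤ q.1 ∧ q.2 ≤ 0 ∧ q.1 - q.2 ≤ 10}

lemma isClosed_triangle : IsClosed triangle := by
  unfold triangle
  refine .and ?_ (.and ?_ ?_) <;> exact isClosed_le (by fun_prop) (by fun_prop)

lemma convex_triangle : Convex ℝ triangle := by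
  rintro p ⟨hp₁, hp₂, hp₃⟩ q ⟨hq₁, hq₂, hq₃⟩ a b ha hb hab
  simp only [triangle, mem_ofPred_eq, Prod.snd_add, Prod.fst_add, Prod.smul_fst, Prod.smul_snd,
    smul_eq_mul]
  refine ⟨?_, ?_, ?_⟩ <;> nlinarith

lemma abs_roofHeight_le {q : ℝ × ℝ} (hq : q ∈ triangle) : |roofHeight q| ≤ 40 := by
  obtain ⟨h₁, h₂, h₃⟩ := hq
  refine abs_le.2 ⟨le_ciInf fun k => ?_, (roofHeight_le q 0).trans ?_⟩
  · have hs := scale_pos k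
    have hs' := scale_le_one k
    have habs : |q.2 + scale k * (1 + q.1 / 16)| ≤ 12 := abs_le.2 ⟨by nlinarith, by nlinarith⟩
    unfold roof
    nlinarith
  · have := abs_nonneg (q.2 + 1 * (1 + q.1 / 16))
    simp only [roof, scale, pow_zero]
    linarith

lemma abs_keelHeight_le {q : ℝ × ℝ} (hq : q ∈ triangle) : |keelHeight q| ≤ 40 := by
  obtain ⟨h₁, h₂, h₃⟩ := hq
  refine abs_le.2 ⟨le_trans ?_ (le_keelHeight q 0), ciSup_le fun k => ?_⟩
  · simp only [keel, scale, pow_zero]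
    linarith
  · have hs := scale_pos k
    have hs' := scale_le_one k
    unfold keel
    nlinarith

end Profile

section Body

/-- The vertical projection of space onto its first two coordinates. -/
def plan : (Fin 3 → ℝ) →ₗ[ℝ] ℝ × ℝ := (LinearMap.proj 0).prod (LinearMap.proj 1)

@[simp] lemma plan_apply (p : Fin 3 → ℝ) : plan p = (p 0, p 1) := rfl

lemma continuous_plan : Continuous plan := plan.continuous_of_finiteDimensional

lemma isOpenMap_plan : IsOpenMap plan :=
  plan.isOpenMap_of_finiteDimensional fun q => ⟨![q.1, q.2, 0], rfl⟩

/-- The convex body of the theorem: the part of space over `triangle` between `keelHeight` and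
`roofHeight`, thickened by `100` in both vertical directions. -/
def body : Set (Fin 3 → ℝ) :=
  {p | plan p ∈ triangle ∧ keelHeight (plan p) - 100 ≤ p 2 ∧ p 2 ≤ roofHeight (plan p) + 100}

lemma isClosed_body : IsClosed body :=
  (isClosed_triangle.preimage continuous_plan).and <|
    (isClosed_le ((continuous_keelHeight.comp continuous_plan).sub continuous_const)
      (continuous_apply 2)).and
      (isClosed_le (continuous_apply 2)
        ((continuous_roofHeight.comp continuous_plan).add continuous_const))

lemma isCompact_body : IsCompact body := by
  refine (isCompact_Icc (a := ![-2, -12, -140]) (b := ![10, 0, 140])).of_isClosed_subset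
    isClosed_body fun p hp => ?_
  obtain ⟨hpt, hlow, hup⟩ := hp
  have hroof := abs_le.1 (abs_roofHeight_le hpt)
  have hkeel := abs_le.1 (abs_keelHeight_le hpt)
  obtain ⟨h₁, h₂, h₃⟩ := hpt
  simp only [plan_apply] at h₁ h₂ h₃
  simp only [mem_Icc, Pi.le_def, Fin.forall_fin_succ, Fin.isValue, Matrix.cons_val_zero,
    Matrix.cons_val_succ, IsEmpty.forall_iff, and_true, Fin.succ_zero_eq_one, Fin.succ_one_eq_two]
  refine ⟨⟨?_, ?_, ?_⟩, ?_, ?_, ?_⟩ <;> linarith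

lemma convex_body : Convex ℝ body := by
  have hkeel : ConvexOn ℝ univ fun p : Fin 3 → ℝ => keelHeight (plan p) - p 2 :=
    (convexOn_keelHeight.comp_linearMap plan).sub
      ((LinearMap.proj 2 : (Fin 3 → ℝ) →ₗ[ℝ] ℝ).concaveOn convex_univ)
  have hroof : ConcaveOn ℝ univ fun p : Fin 3 → ℝ => roofHeight (plan p) - p 2 :=
    (concaveOn_roofHeight.comp_linearMap plan).sub
      ((LinearMap.proj 2 : (Fin 3 → ℝ) →ₗ[ℝ] ℝ).convexOn convex_univ)
  have hbody : body = plan ⁻¹' triangle ∩ ({p | p ∈ univ ∧ keelHeight (plan p) - p 2 ≤ 100} ∩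
      {p | p ∈ univ ∧ -100 ≤ roofHeight (plan p) - p 2}) := by
    ext p
    simp only [body, mem_ofPred_eq, mem_inter_iff, mem_preimage, mem_univ, true_and]
    refine and_congr_right fun _ => and_congr ?_ ?_ <;> constructor <;> intro h <;> linarith
  rw [hbody]
  exact (convex_triangle.linear_preimage plan).inter
    ((hkeel.convex_le 100).inter (hroof.convex_ge (-100)))

lemma nonempty_interior_body : (interior body).Nonempty := by
  refine ⟨![0, -5, 0], mem_interior.2 ⟨Metric.ball ![0, -5, 0] 1, fun p hp => ?_,
    Metric.isOpen_ball, Metric.mem_ball_self one_pos⟩⟩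
  have hcoord (i : Fin 3) := abs_lt.1 ((dist_le_pi_dist p _ i).trans_lt (Metric.mem_ball.1 hp))
  have h₀ := hcoord 0
  have h₁ := hcoord 1
  have h₂ := hcoord 2
  simp only [Matrix.cons_val] at h₀ h₁ h₂
  have hpt : plan p ∈ triangle :=
    ⟨by simp only [plan_apply]; linarith, by simp only [plan_apply]; linarith,
      by simp only [plan_apply]; linarith⟩
  have hroof := abs_le.1 (abs_roofHeight_le hpt)
  have hkeel := abs_le.1 (abs_keelHeight_le hpt)
  exact ⟨hpt, by linarith, by linarith⟩

lemma mem_vadd_body {t p : Fin 3 → ℝ} : p ∈ t +ᵥ body ↔ plan p - plan t ∈ triangle ∧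
    keelHeight (plan p - plan t) + t 2 - 100 ≤ p 2 ∧
      p 2 ≤ roofHeight (plan p - plan t) + t 2 + 100 := by
  rw [mem_vadd_set_iff_neg_vadd_mem, vadd_eq_add, neg_add_eq_sub]
  simp only [body, mem_ofPred_eq, map_sub, Pi.sub_apply]
  refine and_congr_right fun _ => and_congr ?_ ?_ <;> constructor <;> intro h <;> linarith

end Body

section Roof

variable {j k : ℕ} {q : ℝ × ℝ}

lemma le_roof_of_snd_eq (hx : q.1 ∈ Icc (-2) 0) (hq : q.2 = -scale j * (1 + q.1 / 16)) :
    scale j ^ 2 + 2 * scale j * q.2 ≤ roof (scale k) q := by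
  have hj := scale_pos j
  have hk := scale_pos k
  obtain ⟨w, hw⟩ : ∃ w, w = 1 + q.1 / 16 := ⟨_, rfl⟩
  have hw₁ : 7 / 8 ≤ w := by linarith [hx.1]
  have hw₂ : w ≤ 1 := by linarith [hx.2]
  rw [roof, ← hw, hq, ← hw, show -scale j * w + scale k * w = (scale k - scale j) * w by ring,
    abs_mul, abs_of_nonneg (show 0 ≤ w by linarith)]
  generalize hr : scale j = r at *
  generalize hs : scale k = s at *
  rcases hr ▸ hs ▸ scale_trichotomy j k with h | h | h
  · rw [abs_of_nonneg (by linarith)]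
    have : 0 ≤ (s - r) * (s - r * (2 * w - 1) - s / 4 * w) :=
      mul_nonneg (by linarith) (by nlinarith)
    linarith
  · rw [h, sub_self, abs_zero]
    linarith
  · rw [abs_of_nonpos (by linarith)]
    have : 0 ≤ (r - s) * (r * (2 * w - 1) - s - s / 4 * w) :=
      mul_nonneg (by linarith) (by nlinarith)
    linarith

lemma sq_le_roof_of_eight_mul_le (h : 8 * scale j ≤ scale k) (hx : q.1 ∈ Icc (-2) 0)
    (hy : q.2 ∈ Icc (-2 * scale j) 0) : scale j ^ 2 ≤ roof (scale k) q := by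
  have hj := scale_pos j
  obtain ⟨⟨hx, hx'⟩, hy, -⟩ := And.intro hx hy
  generalize scale j = r at *
  generalize scale k = s at *
  rw [roof, abs_of_nonneg (by nlinarith)]
  have hridge : s / 4 * (s * (1 + q.1 / 16)) ≤ s / 4 * s :=
    mul_le_mul_of_nonneg_left (by nlinarith) (by linarith)
  have hslope : s * (-2 * r) ≤ s * q.2 := by gcongr; linarith
  nlinarith

end Roof

section Blade

variable {a x y : ℝ} {j k : ℕ} {q : ℝ × ℝ}

/-- The horizontal position of the ceiling attached to the scale `r`; it is placed at height
`100 - 7 * r ^ 2`. -/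
def ceilingPos (r : ℝ) : ℝ × ℝ := (1, 7 - 6 * r)

/-- The set of points over which the floor at `(a, 0)` and the ceiling of scale `r` leave no
vertical gap. -/
def blade (a r : ℝ) : Set (ℝ × ℝ) :=
  {q | q - (a, 0) ∈ triangle ∧ q - ceilingPos r ∈ triangle ∧
    keelHeight (q - ceilingPos r) - 7 * r ^ 2 ≤ roofHeight (q - (a, 0))}

/-- The height of the facet of scale `r` of the ceiling of scale `r`. -/
noncomputable def facet (r : ℝ) (q : ℝ × ℝ) : ℝ := r ^ 2 + 2 * r * q.2 + r ^ 2 * q.1 / 4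

/-- The second coordinate at which the ridge of scale `r` of the floor at `(a, 0)` passes over the
first coordinate `x`. -/
noncomputable def contact (a r x : ℝ) : ℝ := -r * (1 + (x - a) / 16)

lemma contact_sub_contact (a r x x' : ℝ) :
    contact a r x - contact a r x' = r * (x' - x) / 16 := by
  unfold contact
  ring

lemma mem_triangle_sub_floor :
    q - (a, 0) ∈ triangle ↔ -2 ≤ q.1 - a ∧ q.2 ≤ 0 ∧ q.1 - a - q.2 ≤ 10 := by
  simp only [triangle, mem_ofPred_eq, Prod.fst_sub, Prod.snd_sub, sub_zero]

lemma mem_triangle_sub_ceilingPos {r : ℝ} :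
    q - ceilingPos r ∈ triangle ↔ -1 ≤ q.1 ∧ q.2 ≤ 7 - 6 * r ∧ q.1 - q.2 ≤ 4 + 6 * r := by
  simp only [triangle, ceilingPos, mem_ofPred_eq, Prod.fst_sub, Prod.snd_sub]
  refine and_congr ?_ (and_congr ?_ ?_) <;> constructor <;> intro h <;> linarith

lemma roof_sub_floor (a r : ℝ) (q : ℝ × ℝ) :
    roof r (q - (a, 0)) = r ^ 2 + 2 * r * q.2 - r / 4 * |q.2 - contact a r q.1| := by
  simp only [roof, contact, Prod.fst_sub, Prod.snd_sub, sub_zero]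
  ring_nf

lemma keel_sub_ceilingPos_self (r : ℝ) (q : ℝ × ℝ) :
    keel r (q - ceilingPos r) - 7 * r ^ 2 = facet r q := by
  simp only [keel, ceilingPos, facet, Prod.fst_sub, Prod.snd_sub]
  ring

lemma keel_sub_ceilingPos_le_facet (j k : ℕ) (hx : q.1 ∈ Icc (-1) 0)
    (hy : q.2 ∈ Icc (-(5 / 2) * scale j) 0) :
    keel (scale k) (q - ceilingPos (scale j)) - 7 * scale j ^ 2 ≤ facet (scale j) q := by
  obtain ⟨⟨hx, hx'⟩, hy, hy'⟩ := And.intro hx hy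
  have hj := scale_pos j
  have hk := scale_pos k
  have hprod : 0 ≤ (scale j - scale k) *
      (2 * (q.2 + 6 * scale j) - (4 - q.1 / 4) * (scale j + scale k)) := by
    rcases scale_trichotomy j k with h | h | h
    · exact mul_nonneg_of_nonpos_of_nonpos (by linarith) (by nlinarith)
    · rw [h, sub_self, zero_mul]
    · exact mul_nonneg (by linarith) (by nlinarith)
  simp only [keel, ceilingPos, facet, Prod.fst_sub, Prod.snd_sub]
  linarith

lemma facet_le_roof_of_mem_blade (hq : q ∈ blade a (scale j)) (k : ℕ) :
    facet (scale j) q ≤ roof (scale k) (q - (a, 0)) :=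
  calc facet (scale j) q
      = keel (scale j) (q - ceilingPos (scale j)) - 7 * scale j ^ 2 :=
        (keel_sub_ceilingPos_self _ _).symm
    _ ≤ keelHeight (q - ceilingPos (scale j)) - 7 * scale j ^ 2 :=
        sub_le_sub_right (le_keelHeight _ j) _
    _ ≤ roofHeight (q - (a, 0)) := hq.2.2
    _ ≤ roof (scale k) (q - (a, 0)) := roofHeight_le _ k

lemma mem_blade_of_facet_le_roof (ha : a ∈ Icc 0 1) (hx : q.1 ∈ Icc (-1) 0)
    (hy : q.2 ∈ Icc (-(5 / 2) * scale j) 0)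
    (h : ∀ k, facet (scale j) q ≤ roof (scale k) (q - (a, 0))) : q ∈ blade a (scale j) := by
  have hkeel : keelHeight (q - ceilingPos (scale j)) ≤ facet (scale j) q + 7 * scale j ^ 2 :=
    ciSup_le fun k => by linarith [keel_sub_ceilingPos_le_facet j k hx hy]
  have hj := scale_pos j
  have hj' := scale_le_one j
  obtain ⟨⟨ha, ha'⟩, ⟨hx, hx'⟩, hy, hy'⟩ := And.intro ha (And.intro hx hy)
  exact ⟨mem_triangle_sub_floor.2 ⟨by linarith, hy', by linarith⟩,
    mem_triangle_sub_ceilingPos.2 ⟨hx, by linarith, by linarith⟩,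
    (sub_le_iff_le_add.2 hkeel).trans (le_ciInf h)⟩

lemma abs_sub_contact_le_of_mem_blade (hq : q ∈ blade a (scale j)) :
    |q.2 - contact a (scale j) q.1| ≤ -scale j * q.1 := by
  have hj := scale_pos j
  have h := facet_le_roof_of_mem_blade hq j
  rw [roof_sub_floor, facet] at h
  refine le_of_mul_le_mul_left ?_ hj
  linarith

lemma fst_nonpos_of_mem_blade (hq : q ∈ blade a (scale j)) : q.1 ≤ 0 := by
  have h := (abs_nonneg _).trans (abs_sub_contact_le_of_mem_blade hq)
  rw [neg_mul, neg_nonneg] at h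
  exact nonpos_of_mul_nonpos_right h (scale_pos j)

lemma snd_nonpos_of_mem_blade {r : ℝ} (hq : q ∈ blade a r) : q.2 ≤ 0 :=
  (mem_triangle_sub_floor.1 hq.1).2.1

lemma contact_mem_blade (ha : a ∈ Icc 0 1) (hx : x ∈ Icc (-1) 0) :
    (x, contact a (scale j) x) ∈ blade a (scale j) := by
  have hj := scale_pos j
  obtain ⟨ha₀, ha₁⟩ := ha
  obtain ⟨hx₀, hx₁⟩ := hx
  have hlow : -(5 / 2) * scale j ≤ contact a (scale j) x := by
    unfold contact
    nlinarith
  have hup : contact a (scale j) x ≤ 0 := by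
    unfold contact
    nlinarith
  refine mem_blade_of_facet_le_roof ⟨ha₀, ha₁⟩ ⟨hx₀, hx₁⟩ ⟨hlow, hup⟩ fun k => ?_
  calc facet (scale j) (x, contact a (scale j) x)
      ≤ scale j ^ 2 + 2 * scale j * (contact a (scale j) x - 0) := by
        unfold facet
        nlinarith [sq_nonneg (scale j)]
    _ ≤ roof (scale k) ((x, contact a (scale j) x) - (a, 0)) :=
        le_roof_of_snd_eq (q := (x - a, _ - 0)) ⟨by linarith, by linarith⟩ (sub_zero _)

/- At a scale comparable to `scale j`, moving left raises the roof relative to the facet; at a much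
larger scale the roof is far above the facet anyway. -/
lemma mem_blade_of_fst_le (ha : a ∈ Icc 0 1) {x' : ℝ} (hx : -1 ≤ x) (hxx' : x ≤ x')
    (h : (x', y) ∈ blade a (scale j)) : (x, y) ∈ blade a (scale j) := by
  have hj := scale_pos j
  have hx' : x' ≤ 0 := fst_nonpos_of_mem_blade h
  have hy : y ≤ 0 := snd_nonpos_of_mem_blade h
  have hy' : -2 * scale j ≤ y := by
    have := (abs_le.1 (abs_sub_contact_le_of_mem_blade h)).1
    simp only [contact] at this
    nlinarith [ha.1]
  refine mem_blade_of_facet_le_roof ha ⟨hx, hxx'.trans hx'⟩ ⟨by linarith, hy⟩ fun k => ?_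
  have hk := scale_pos k
  rcases eight_mul_scale_le_or_le_four_mul j k with h8 | h4
  · refine le_trans ?_ (sq_le_roof_of_eight_mul_le h8 (q := (x, y) - (a, 0))
      ⟨?_, ?_⟩ ⟨?_, ?_⟩)
    · unfold facet
      nlinarith [sq_nonneg (scale j)]
    all_goals simp only [Prod.fst_sub, Prod.snd_sub]; linarith [ha.1, ha.2]
  · have hroof := facet_le_roof_of_mem_blade h k
    have habs : |y - contact a (scale k) x| ≤
        |y - contact a (scale k) x'| + scale k * (x' - x) / 16 := by
      refine (abs_sub_le y (contact a (scale k) x') (contact a (scale k) x)).trans_eq ?_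
      have hprod := mul_nonneg hk.le (sub_nonneg.2 hxx')
      rw [abs_sub_comm (contact a (scale k) x'), contact_sub_contact,
        abs_of_nonneg (show 0 ≤ scale k * (x' - x) / 16 by linarith)]
    have hmul := mul_le_mul_of_nonneg_left habs (show 0 ≤ scale k / 4 by linarith)
    have hsq : scale k ^ 2 * (x' - x) ≤ (4 * scale j) ^ 2 * (x' - x) := by
      gcongr
    rw [roof_sub_floor, facet] at hroof ⊢
    nlinarith

lemma convex_blade (a r : ℝ) : Convex ℝ (blade a r) := by
  let shift (v : ℝ × ℝ) : ℝ × ℝ →ᵃ[ℝ] ℝ × ℝ := (AffineEquiv.vaddConst ℝ v).symm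
  have hkeel : ConvexOn ℝ univ fun q => keelHeight (q - ceilingPos r) - roofHeight (q - (a, 0)) :=
    (convexOn_keelHeight.comp_affineMap (shift (ceilingPos r))).sub
      (concaveOn_roofHeight.comp_affineMap (shift (a, 0)))
  have hblade : blade a r = shift (a, 0) ⁻¹' triangle ∩ (shift (ceilingPos r) ⁻¹' triangle ∩
      {q | q ∈ univ ∧
        keelHeight (q - ceilingPos r) - roofHeight (q - (a, 0)) ≤ 7 * r ^ 2}) := by
    ext q
    simp only [blade, mem_ofPred_eq, mem_inter_iff, mem_univ, true_and, sub_le_comm]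
    rfl
  rw [hblade]
  exact (convex_triangle.affine_preimage _).inter <|
    (convex_triangle.affine_preimage _).inter (hkeel.convex_le _)

lemma ordConnected_blade_fiber (a r x : ℝ) : {y | (x, y) ∈ blade a r}.OrdConnected := by
  refine ⟨fun y hy y' hy' z hz => ?_⟩
  refine (convex_blade a r).segment_subset hy hy' ?_
  rw [← Prod.image_mk_segment_right, segment_eq_Icc (hz.1.trans hz.2)]
  exact mem_image_of_mem _ hz

lemma neg_one_mem_blade (hy : y ∈ Icc (-(3 / 2) * scale j) (-(3 / 4) * scale j)) :
    (-1, y) ∈ blade 0 (scale j) := by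
  have hj := scale_pos j
  obtain ⟨hy, hy'⟩ := hy
  refine mem_blade_of_facet_le_roof ⟨le_rfl, zero_le_one⟩ ⟨le_rfl, by norm_num⟩
    ⟨by dsimp only; linarith, by dsimp only; linarith⟩ fun k => ?_
  have hk := scale_pos k
  rw [roof_sub_floor, facet, contact]
  dsimp only
  generalize hr : scale j = r at *
  generalize hs : scale k = s at *
  rcases hr ▸ hs ▸ scale_trichotomy j k with h | rfl | h
  · rw [abs_of_nonneg (by linarith)]
    nlinarith
  · have habs : |y - -s * (1 + (-1 - 0) / 16)| ≤ s := abs_le.2 ⟨by linarith, by linarith⟩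
    nlinarith
  · rw [abs_of_nonpos (by linarith)]
    nlinarith

end Blade

section Arrangement

variable {m N n n' k k' j i : ℕ} {x x' y y' : ℝ} {q : ℝ × ℝ}

/-- The distance between consecutive walls. -/
noncomputable def wallSpacing (m : ℕ) : ℝ := 1 / (64 * (m : ℝ) ^ 2)

/-- The column boundaries: `wallX m (k + 1)` is the left end of the `k`-th wall, and `wallX m 0` is
the left end of the ceilings. -/
noncomputable def wallX (m : ℕ) : ℕ → ℝ
  | 0 => -1
  | k + 1 => -((m : ℝ) - k) * wallSpacing m

/-- The horizontal position of the `k`-th wall; it is placed at height `0`. -/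
noncomputable def wallPos (m N k : ℕ) : ℝ × ℝ := (2 + wallX m (k + 1), 12 - 2 * scale N)

/-- The points of the plane covered by the projection of the `k`-th wall. -/
def wall (m N k : ℕ) : Set (ℝ × ℝ) := {q | q - wallPos m N k ∈ triangle}

/-- The first coordinate of the `i`-th floor; it is placed at second coordinate `0` and at height
`-100`. -/
noncomputable def floorX (m i : ℕ) : ℝ := (i : ℝ) / m

/-- The blades in the order in which they are stacked: the `n`-th blade is cut out by the floor
`n % m` and the ceiling of scale `scale (N + n / m)`. -/
def bladeAt (m N n : ℕ) : Set (ℝ × ℝ) := blade (floorX m (n % m)) (scale (N + n / m))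

/-- The second coordinate of the contact curve of the `n`-th blade. -/
noncomputable def contactAt (m N n : ℕ) (x : ℝ) : ℝ :=
  contact (floorX m (n % m)) (scale (N + n / m)) x

/-- The points of the plane off all walls over which all floors lie below all ceilings. -/
def freePlan (m N : ℕ) : Set (ℝ × ℝ) :=
  {q | (∀ n < m ^ 2, q ∉ bladeAt m N n) ∧ ∀ k < m, q ∉ wall m N k}

/-- The region of the `k`-th column between the `n`-th and the `n + 1`-st contact curve. -/
def cell (m N n k : ℕ) : Set (ℝ × ℝ) :=
  {q | q.1 ∈ Ioo (wallX m k) (wallX m (k + 1)) ∧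
    q.2 ∈ Ioo (contactAt m N n q.1) (contactAt m N (n + 1) q.1)}

lemma mem_wall : q ∈ wall m N k ↔ wallX m (k + 1) ≤ q.1 ∧
    q.1 ≤ wallX m (k + 1) + q.2 + 2 * scale N ∧ q.2 ≤ 12 - 2 * scale N := by
  simp only [wall, wallPos, triangle, mem_ofPred_eq, Prod.fst_sub, Prod.snd_sub]
  constructor <;> rintro ⟨h₁, h₂, h₃⟩ <;> refine ⟨?_, ?_, ?_⟩ <;> linarith

lemma one_le_cast (m : ℕ) [NeZero m] : (1 : ℝ) ≤ m := Nat.one_le_cast.2 (NeZero.one_le)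

lemma wallSpacing_pos (m : ℕ) [NeZero m] : 0 < wallSpacing m := by
  have := one_le_cast m
  unfold wallSpacing
  positivity

lemma mul_wallSpacing (m : ℕ) [NeZero m] : m * wallSpacing m = 1 / (64 * m) := by
  have := one_le_cast m
  unfold wallSpacing
  field_simp

lemma mul_wallSpacing_le (m : ℕ) [NeZero m] : m * wallSpacing m ≤ 1 / 64 := by
  rw [mul_wallSpacing]
  exact one_div_le_one_div_of_le (by norm_num) (by linarith [one_le_cast m])

lemma wallSpacing_le_mul (m : ℕ) [NeZero m] : wallSpacing m ≤ m * wallSpacing m :=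
  le_mul_of_one_le_left (wallSpacing_pos m).le (one_le_cast m)

lemma wallX_add_wallSpacing_le (m k : ℕ) [NeZero m] :
    wallX m k + wallSpacing m ≤ wallX m (k + 1) := by
  rcases k with _ | k
  · simp only [wallX]
    push_cast
    linarith [mul_wallSpacing_le m, wallSpacing_le_mul m]
  · simp only [wallX]
    push_cast
    linarith

lemma strictMono_wallX (m : ℕ) [NeZero m] : StrictMono (wallX m) :=
  strictMono_nat_of_lt_succ fun k => by
    linarith [wallX_add_wallSpacing_le m k, wallSpacing_pos m]

lemma wallX_self (m : ℕ) [NeZero m] : wallX m m = -wallSpacing m := by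
  obtain ⟨k, rfl⟩ := Nat.exists_eq_succ_of_ne_zero (NeZero.ne m)
  simp only [wallX]
  push_cast
  ring

lemma neg_one_le_wallX (m k : ℕ) [NeZero m] : -1 ≤ wallX m k :=
  (strictMono_wallX m).monotone k.zero_le

lemma wallX_neg [NeZero m] (hk : k ≤ m) : wallX m k < 0 := by
  have := (strictMono_wallX m).monotone hk
  rw [wallX_self] at this
  linarith [wallSpacing_pos m]

lemma wallX_succ_neg [NeZero m] (hk : k < m) : wallX m (k + 1) < 0 :=
  wallX_neg (Nat.succ_le_of_lt hk)

lemma neg_mul_wallSpacing_le_wallX_succ (m k : ℕ) [NeZero m] :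
    -(m * wallSpacing m) ≤ wallX m (k + 1) := by
  simp only [wallX]
  nlinarith [wallSpacing_pos m, k.cast_nonneg (α := ℝ)]

lemma notMem_wall_of_fst_mem_column [NeZero m] (hq : wallX m k + q.2 + 2 * scale N < q.1)
    (hq' : k < m → q.1 < wallX m (k + 1)) : ∀ k' < m, q ∉ wall m N k' := by
  intro k' hk' hmem
  obtain ⟨hleft, hright, -⟩ := mem_wall.1 hmem
  rcases Nat.lt_or_ge k' k with h | h
  · linarith [(strictMono_wallX m).monotone (Nat.succ_le_of_lt h)]
  · linarith [(strictMono_wallX m).monotone (Nat.succ_le_succ h), hq' (h.trans_lt hk')]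

lemma notMem_wall_of_le_fst [NeZero m] (hkx : wallX m k ≤ x) (hxx' : x ≤ x')
    (hx' : k < m → x' < wallX m (k + 1)) (h : ∀ k' < m, (x, y) ∉ wall m N k') :
    ∀ k' < m, (x', y) ∉ wall m N k' := by
  intro k' hk' hmem
  obtain ⟨hleft, hright, hy⟩ := mem_wall.1 hmem
  dsimp only at hleft hright
  rcases Nat.lt_or_ge k' k with hk | hk
  · exact h k' hk' (mem_wall.2
      ⟨((strictMono_wallX m).monotone (Nat.succ_le_of_lt hk)).trans hkx, hxx'.trans hright, hy⟩)
  · linarith [(strictMono_wallX m).monotone (Nat.succ_le_succ hk), hx' (hk.trans_lt hk')]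

lemma notMem_wall_of_snd_le (h : (x, y') ∉ wall m N k) (hyy' : y ≤ y') (hy' : y' ≤ 10) :
    (x, y) ∉ wall m N k := by
  intro hmem
  obtain ⟨hleft, hright, -⟩ := mem_wall.1 hmem
  dsimp only at hright
  exact h (mem_wall.2 ⟨hleft, by dsimp only; linarith,
    by dsimp only; linarith [scale_le_one N]⟩)

lemma floorX_mem_Icc (hi : i < m) : floorX m i ∈ Icc 0 1 :=
  ⟨by unfold floorX; positivity, div_le_one_of_le₀ (by exact_mod_cast hi.le) m.cast_nonneg⟩

lemma floorX_mod_mem_Icc (m n : ℕ) [NeZero m] : floorX m (n % m) ∈ Icc 0 1 :=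
  floorX_mem_Icc (Nat.mod_lt n (NeZero.pos m))

lemma bladeAt_mul_add (hi : i < m) :
    bladeAt m N (m * j + i) = blade (floorX m i) (scale (N + j)) := by
  rw [bladeAt, Nat.mul_add_mod, Nat.mod_eq_of_lt hi, Nat.mul_add_div (by lia),
    Nat.div_eq_of_lt hi, add_zero]

lemma contactAt_mul_add (hi : i < m) :
    contactAt m N (m * j + i) x = contact (floorX m i) (scale (N + j)) x := by
  rw [contactAt, Nat.mul_add_mod, Nat.mod_eq_of_lt hi, Nat.mul_add_div (by lia),
    Nat.div_eq_of_lt hi, add_zero]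

lemma contactAt_add_le_contactAt_succ (m N n : ℕ) [NeZero m] (hx : -1 ≤ x) :
    contactAt m N n x + scale (N + n / m) / (16 * m) ≤ contactAt m N (n + 1) x := by
  have hm := one_le_cast m
  have hr := scale_pos (N + n / m)
  have hi := Nat.mod_lt n (NeZero.pos m)
  rcases Nat.lt_or_ge (n % m + 1) m with hi' | hi'
  · have hsucc : n + 1 = m * (n / m) + (n % m + 1) := by
      rw [← add_assoc, Nat.div_add_mod]
    rw [hsucc, contactAt_mul_add hi', contactAt]
    simp only [contact, floorX]
    push_cast
    apply le_of_eq
    field_simp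
    ring
  · have hsucc : n + 1 = m * (n / m + 1) + 0 := by
      have := Nat.div_add_mod n m
      rw [mul_add_one]
      lia
    have hlast : ((n % m : ℕ) : ℝ) / m = 1 - 1 / m := by
      have : ((n % m : ℕ) : ℝ) + 1 = m := by exact_mod_cast (show n % m + 1 = m by lia)
      field_simp
      linarith
    rw [hsucc, contactAt_mul_add (NeZero.pos m), ← add_assoc, scale_succ, contactAt]
    simp only [contact, floorX, hlast, Nat.cast_zero, zero_div]
    rw [show scale (N + n / m) / (16 * m) = scale (N + n / m) / 16 * (1 / m) by field_simp]
    nlinarith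

lemma strictMono_contactAt (m N : ℕ) [NeZero m] (hx : -1 ≤ x) :
    StrictMono fun n => contactAt m N n x :=
  strictMono_nat_of_lt_succ fun n => by
    have := scale_pos (N + n / m)
    have := one_le_cast m
    have : 0 < scale (N + n / m) / (16 * m) := by positivity
    linarith [contactAt_add_le_contactAt_succ m N n hx]

lemma antitone_contactAt (m N n : ℕ) : Antitone (contactAt m N n) := by
  intro x x' h
  have := contact_sub_contact (floorX m (n % m)) (scale (N + n / m)) x x'
  simp only [contactAt]
  nlinarith [scale_pos (N + n / m)]

lemma contactAt_neg (m N n : ℕ) [NeZero m] (hx : -1 ≤ x) : contactAt m N n x < 0 := by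
  have := (floorX_mod_mem_Icc m n).2
  unfold contactAt contact
  nlinarith [scale_pos (N + n / m)]

lemma neg_scale_le_contactAt (m N n : ℕ) [NeZero m] (hx : x ≤ 0) :
    -scale N ≤ contactAt m N n x := by
  have := (floorX_mod_mem_Icc m n).1
  have := antitone_scale (Nat.le_add_right N (n / m))
  unfold contactAt contact
  nlinarith [scale_pos (N + n / m)]

lemma continuous_contactAt (m N n : ℕ) : Continuous (contactAt m N n) := by
  unfold contactAt contact
  fun_prop

lemma contactAt_mem_bladeAt [NeZero m] (N n : ℕ) (hx : x ∈ Icc (-1) 0) :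
    (x, contactAt m N n x) ∈ bladeAt m N n :=
  contact_mem_blade (floorX_mod_mem_Icc m n) hx

lemma contactAt_neg_one_lt [NeZero m] (N : ℕ) (hn : n < m ^ 2) :
    contactAt m N n (-1) < -(3 / 2) * scale (N + m) := by
  have ha := (floorX_mod_mem_Icc m n).2
  have hdiv : n / m < m := Nat.div_lt_of_lt_mul (by rwa [← sq])
  have hscale := antitone_scale (show N + n / m + 1 ≤ N + m by lia)
  rw [scale_succ] at hscale
  unfold contactAt contact
  nlinarith [scale_pos (N + n / m)]

lemma exists_neg_one_mem_bladeAt [NeZero m] (hn : n < m ^ 2)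
    (hy : y ∈ Icc (contactAt m N 0 (-1)) (contactAt m N n (-1))) :
    ∃ n' < m ^ 2, (-1, y) ∈ bladeAt m N n' := by
  have hlow := (neg_scale_le_contactAt m N 0 (x := -1) (by norm_num)).trans hy.1
  obtain ⟨j, hj, hyj⟩ := exists_mem_Ico_succ (f := fun j => -(3 / 2) * scale (N + j)) (y := y)
    (l := m) ⟨by rw [add_zero]; linarith [scale_pos N], hy.2.trans_lt (contactAt_neg_one_lt N hn)⟩
  rw [← add_assoc, scale_succ] at hyj
  refine ⟨m * j + 0, by nlinarith, ?_⟩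
  rw [bladeAt_mul_add (NeZero.pos m), floorX, Nat.cast_zero, zero_div]
  exact neg_one_mem_blade ⟨hyj.1, by linarith [hyj.2]⟩

lemma notMem_bladeAt_of_le_contactAt [NeZero m] (hx : x ∈ Icc (-1) 0) (h : (x, y') ∉ bladeAt m N n)
    (hyy' : y ≤ y') (hy' : y' ≤ contactAt m N n x) : (x, y) ∉ bladeAt m N n := fun hmem =>
  h ((ordConnected_blade_fiber _ _ x).out hmem (contactAt_mem_bladeAt N n hx) ⟨hyy', hy'⟩)

lemma notMem_bladeAt_of_contactAt_le [NeZero m] (hx : x ∈ Icc (-1) 0) (h : (x, y) ∉ bladeAt m N n)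
    (hy : contactAt m N n x ≤ y) (hyy' : y ≤ y') : (x, y') ∉ bladeAt m N n := fun hmem =>
  h ((ordConnected_blade_fiber _ _ x).out (contactAt_mem_bladeAt N n hx) hmem ⟨hy, hyy'⟩)

lemma notMem_bladeAt_of_le_fst [NeZero m] (hx : -1 ≤ x) (hxx' : x ≤ x')
    (h : (x, y) ∉ bladeAt m N n) : (x', y) ∉ bladeAt m N n := fun hmem =>
  h (mem_blade_of_fst_le (floorX_mod_mem_Icc m n) hx hxx' hmem)

end Arrangement

section FreePlan

variable {m N n n' k k' : ℕ} {x x' y : ℝ} {q : ℝ × ℝ}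

lemma isClosed_blade (a r : ℝ) : IsClosed (blade a r) :=
  (isClosed_triangle.preimage (by fun_prop)).inter <|
    (isClosed_triangle.preimage (by fun_prop)).inter <|
      isClosed_le ((continuous_keelHeight.comp (by fun_prop)).sub (by fun_prop))
        (continuous_roofHeight.comp (by fun_prop))

lemma isClosed_wall (m N k : ℕ) : IsClosed (wall m N k) :=
  isClosed_triangle.preimage (by fun_prop)

lemma isOpen_freePlan (m N : ℕ) : IsOpen (freePlan m N) := by
  simp only [freePlan, ofPred_and, ofPred_forall]
  exact ((finite_lt_nat _).isOpen_biInter fun n _ => (isClosed_blade _ _).isOpen_compl).inter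
    ((finite_lt_nat _).isOpen_biInter fun k _ => (isClosed_wall m N k).isOpen_compl)

lemma isOpen_cell (m N n k : ℕ) : IsOpen (cell m N n k) :=
  (isOpen_Ioo.preimage continuous_fst).inter <|
    (isOpen_lt ((continuous_contactAt m N n).comp continuous_fst) continuous_snd).inter
      (isOpen_lt continuous_snd ((continuous_contactAt m N (n + 1)).comp continuous_fst))

lemma abs_sub_contactAt_lt_of_mem_bladeAt (hx : -x < 1 / (32 * m)) (h : (x, y) ∈ bladeAt m N n) :
    |y - contactAt m N n x| < scale (N + n / m) / (32 * m) :=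
  (abs_sub_contact_le_of_mem_blade h).trans_lt <| by
    have := mul_lt_mul_of_pos_left hx (scale_pos (N + n / m))
    rw [mul_one_div] at this
    dsimp only
    linarith

variable [NeZero m]

lemma mem_freePlan_of_le_fst (hkx : wallX m k ≤ x) (hxx' : x ≤ x')
    (hx' : k < m → x' < wallX m (k + 1)) (h : (x, y) ∈ freePlan m N) : (x', y) ∈ freePlan m N :=
  ⟨fun n hn => notMem_bladeAt_of_le_fst ((neg_one_le_wallX m k).trans hkx) hxx' (h.1 n hn),
    notMem_wall_of_le_fst hkx hxx' hx' h.2⟩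

lemma contactAt_ne_of_mem_freePlan (hn : n < m ^ 2) (hx : x ∈ Icc (-1) 0)
    (h : (x, y) ∈ freePlan m N) : contactAt m N n x ≠ y := by
  rintro rfl
  exact h.1 n hn (contactAt_mem_bladeAt N n hx)

-- A contact curve crossed on the way to the right would meet the path inside a blade, and blades
-- extend to the left.
lemma lt_contactAt_of_le_fst (hn : n < m ^ 2) (hx : -1 ≤ x) (hxx' : x ≤ x') (hx' : x' ≤ 0)
    (h : (x, y) ∈ freePlan m N) (hy : y < contactAt m N n x) : y < contactAt m N n x' := by
  by_contra! hcross
  obtain ⟨u, hu, rfl⟩ := intermediate_value_Icc' hxx' (continuous_contactAt m N n).continuousOn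
    ⟨hcross, hy.le⟩
  exact notMem_bladeAt_of_le_fst hx hu.1 (h.1 n hn)
    (contactAt_mem_bladeAt N n ⟨hx.trans hu.1, hu.2.trans hx'⟩)

lemma mem_freePlan_of_snd_mem_Icc (hx : x ∈ Ioo (wallX m k) (wallX m (k + 1))) (hk : k < m)
    {y₁ y₂ : ℝ} (h₁ : (x, y₁) ∈ freePlan m N) (h₂ : (x, y₂) ∈ freePlan m N)
    (hy₁ : contactAt m N n x < y₁) (hy₂ : y₂ < contactAt m N (n + 1) x) (hy : y ∈ Icc y₁ y₂) :
    (x, y) ∈ freePlan m N := by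
  have hx' : x ∈ Icc (-1) 0 :=
    ⟨(neg_one_le_wallX m k).trans hx.1.le, (hx.2.trans (wallX_succ_neg hk)).le⟩
  have hmono := (strictMono_contactAt m N hx'.1).monotone
  refine ⟨fun n' hn' => ?_, fun k' hk' => ?_⟩
  · rcases Nat.lt_or_ge n n' with hlt | hge
    · exact notMem_bladeAt_of_le_contactAt hx' (h₂.1 n' hn') hy.2 (hy₂.le.trans (hmono hlt))
    · exact notMem_bladeAt_of_contactAt_le hx' (h₁.1 n' hn') ((hmono hge).trans hy₁.le) hy.1
  · exact notMem_wall_of_snd_le (h₂.2 k' hk') hy.2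
      (by linarith [contactAt_neg m N (n + 1) hx'.1])

lemma isPreconnected_cell_inter_freePlan (hn : n + 1 < m ^ 2) (hk : k < m) :
    IsPreconnected (cell m N n k ∩ freePlan m N) := by
  set U := cell m N n k ∩ freePlan m N
  have hfiber (x : ℝ) : IsPreconnected (U ∩ Prod.fst ⁻¹' {x}) := by
    have hord : {y | (x, y) ∈ U}.OrdConnected := ⟨fun y₁ h₁ y₂ h₂ y hy =>
      ⟨⟨h₁.1.1, h₁.1.2.1.trans_le hy.1, hy.2.trans_lt h₂.1.2.2⟩,
        mem_freePlan_of_snd_mem_Icc h₁.1.1 hk h₁.2 h₂.2 h₁.1.2.1 h₂.1.2.2 hy⟩⟩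
    convert hord.isPreconnected.image (Prod.mk x) (by fun_prop) using 1
    aesop
  have hrange : (Prod.fst '' U).OrdConnected := by
    refine ⟨?_⟩
    rintro _ ⟨⟨x, y⟩, ⟨⟨hx, hy⟩, hfree⟩, rfl⟩ _ ⟨q, ⟨hq, -⟩, rfl⟩ u hu
    have hux : u < wallX m (k + 1) := hu.2.trans_lt hq.1.2
    refine ⟨(u, y), ⟨⟨⟨hx.1.trans_le hu.1, hux⟩, ?_, ?_⟩,
      mem_freePlan_of_le_fst hx.1.le hu.1 (fun _ => hux) hfree⟩, rfl⟩
    · exact (antitone_contactAt m N n hu.1).trans_lt hy.1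
    · exact lt_contactAt_of_le_fst hn ((neg_one_le_wallX m k).trans hx.1.le) hu.1
        (hux.trans (wallX_succ_neg hk)).le hfree hy.2
  have hU := isPreconnected_inter_preimage_of_isOpenMap isOpenMap_fst
    ((isOpen_cell m N n k).inter (isOpen_freePlan m N)) hfiber hrange.isPreconnected subset_rfl
  rwa [inter_eq_left.2 (subset_preimage_image Prod.fst U)] at hU

lemma midpoint_contactAt_notMem_bladeAt (hx : -1 ≤ x) (hx' : -x < 1 / (32 * m)) :
    (x, (contactAt m N n x + contactAt m N (n + 1) x) / 2) ∉ bladeAt m N n' := by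
  intro hmem
  have hdist := abs_lt.1 (abs_sub_contactAt_lt_of_mem_bladeAt hx' hmem)
  have hgap (l : ℕ) : contactAt m N l x + 2 * (scale (N + l / m) / (32 * m)) ≤
      contactAt m N (l + 1) x := by
    convert contactAt_add_le_contactAt_succ m N l hx using 2
    field_simp
    ring
  have hmono := (strictMono_contactAt m N hx).monotone
  rcases Nat.lt_or_ge n n' with hlt | hge
  · have hscale : scale (N + n' / m) / (32 * m) ≤ scale (N + n / m) / (32 * m) := by
      gcongr
      exact antitone_scale (Nat.add_le_add_left (Nat.div_le_div_right hlt.le) N)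
    linarith [hgap n, hmono hlt]
  · rcases hge.eq_or_lt with rfl | hlt
    · linarith [hgap n']
    · have : 0 ≤ contactAt m N (n + 1) x - contactAt m N n x :=
        sub_nonneg.2 (hmono n.le_succ)
      linarith [hgap n', hmono hlt]

lemma nonempty_cell_inter_freePlan (hN : 2 * scale N ≤ wallSpacing m / 2) :
    (cell m N n k ∩ freePlan m N).Nonempty := by
  have hδ := wallSpacing_pos m
  have hcol := wallX_add_wallSpacing_le m k
  set x := wallX m (k + 1) - wallSpacing m / 4 with hx
  have hx₁ : -1 ≤ x := by linarith [neg_one_le_wallX m k]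
  have hx₂ : -x < 1 / (32 * m) := by
    have := neg_mul_wallSpacing_le_wallX_succ m k
    have := wallSpacing_le_mul m
    have := one_le_cast m
    have : 1 / (32 * (m : ℝ)) = 2 * (m * wallSpacing m) := by
      rw [mul_wallSpacing]
      field_simp
      norm_num
    linarith
  have hlt := strictMono_contactAt m N hx₁ n.lt_succ_self
  refine ⟨(x, (contactAt m N n x + contactAt m N (n + 1) x) / 2),
    ⟨⟨by dsimp only; linarith, by dsimp only; linarith⟩, by dsimp only at hlt ⊢; linarith,
      by dsimp only at hlt ⊢; linarith⟩,
    fun n' _ => midpoint_contactAt_notMem_bladeAt hx₁ hx₂,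
    notMem_wall_of_fst_mem_column (k := k) ?_ fun _ => by dsimp only; linarith⟩
  dsimp only
  linarith [contactAt_neg m N n hx₁, contactAt_neg m N (n + 1) hx₁]

lemma cell_subset_Icc_prod_Icc (hk : k < m) :
    cell m N n k ⊆ Icc (-1) 0 ×ˢ Icc (-1) 0 := by
  rintro ⟨x, y⟩ ⟨hx, hy⟩
  have hx₁ : -1 ≤ x := (neg_one_le_wallX m k).trans hx.1.le
  have hx₀ : x ≤ 0 := (hx.2.trans (wallX_succ_neg hk)).le
  exact ⟨⟨hx₁, hx₀⟩, by linarith [neg_scale_le_contactAt m N n hx₀, scale_le_one N, hy.1],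
    by linarith [contactAt_neg m N (n + 1) hx₁, hy.2]⟩

lemma mem_cell_of_mem_Icc (hn : n + 1 < m ^ 2) (hk : k < m) (h : (x, y) ∈ freePlan m N)
    (hx : x ∈ Icc (wallX m k) (wallX m (k + 1)))
    (hy : y ∈ Icc (contactAt m N n x) (contactAt m N (n + 1) x)) : (x, y) ∈ cell m N n k := by
  have hx₁ : -1 ≤ x := (neg_one_le_wallX m k).trans hx.1
  have hx₀ : x ≤ 0 := hx.2.trans (wallX_succ_neg hk).le
  have hy₀ : y < 0 := hy.2.trans_lt (contactAt_neg m N _ hx₁)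
  have hy₁ : -scale N ≤ y := (neg_scale_le_contactAt m N n hx₀).trans hy.1
  have hmono := (strictMono_contactAt m N hx₁).monotone
  have hwall : ∀ k' < m, wallX m (k' + 1) ≠ x := by
    rintro k' hk' rfl
    exact h.2 k' hk' (mem_wall.2 ⟨le_rfl, by dsimp only; linarith [scale_pos N],
      by dsimp only; linarith [scale_le_one N]⟩)
  have hleft : wallX m k ≠ x := by
    rcases k with _ | k
    · rintro rfl
      obtain ⟨n', hn', hmem⟩ := exists_neg_one_mem_bladeAt (N := N) hn
        ⟨(hmono n.zero_le).trans hy.1, hy.2⟩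
      exact h.1 n' hn' hmem
    · exact hwall k (by lia)
  exact ⟨⟨hx.1.lt_of_ne hleft, hx.2.lt_of_ne (hwall k hk).symm⟩,
    hy.1.lt_of_ne (contactAt_ne_of_mem_freePlan (by lia) ⟨hx₁, hx₀⟩ h),
    hy.2.lt_of_ne (contactAt_ne_of_mem_freePlan hn ⟨hx₁, hx₀⟩ h).symm⟩

lemma eq_of_mem_cell (h : q ∈ cell m N n k) (h' : q ∈ cell m N n' k') : n = n' ∧ k = k' := by
  have hmono := strictMono_contactAt m N ((neg_one_le_wallX m k).trans h.1.1.le)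
  have hk := (strictMono_wallX m).lt_iff_lt.1 (h.1.1.trans h'.1.2)
  have hk' := (strictMono_wallX m).lt_iff_lt.1 (h'.1.1.trans h.1.2)
  have hn := hmono.lt_iff_lt.1 (h.2.1.trans h'.2.2)
  have hn' := hmono.lt_iff_lt.1 (h'.2.1.trans h.2.2)
  lia

end FreePlan

section Escape

variable {m N k : ℕ} {x x' y y' : ℝ} {q q' : ℝ × ℝ} {S : Set (ℝ × ℝ)}

/-- The points of the plane covered by the projection of no floor or by that of no ceiling; over
such a point one can leave the arrangement vertically. -/
def openPlan (m N : ℕ) : Set (ℝ × ℝ) :=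
  {q | (∀ i < m, q - (floorX m i, 0) ∉ triangle) ∨
    ∀ j < m, q - ceilingPos (scale (N + j)) ∉ triangle}

/-- The points of the plane from which one can reach `openPlan` inside `freePlan`. -/
def Escapes (m N : ℕ) (q : ℝ × ℝ) : Prop :=
  (connectedComponentIn (freePlan m N) q ∩ openPlan m N).Nonempty

lemma Escapes.of_isPreconnected (hq' : Escapes m N q') (hS : IsPreconnected S)
    (hSfree : S ⊆ freePlan m N) (hqS : q ∈ S) (hqS' : q' ∈ S) : Escapes m N q := by
  rwa [Escapes, connectedComponentIn_eq (hS.subset_connectedComponentIn hqS hSfree hqS')]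

lemma escapes_of_mem_openPlan (hfree : q ∈ freePlan m N) (hopen : q ∈ openPlan m N) :
    Escapes m N q :=
  ⟨q, mem_connectedComponentIn hfree, hopen⟩

lemma Escapes.of_fst (h : Escapes m N (x', y)) (hxx' : x ≤ x')
    (hfree : ∀ u ∈ Icc x x', (u, y) ∈ freePlan m N) : Escapes m N (x, y) := by
  refine h.of_isPreconnected (isPreconnected_Icc.prod (isPreconnected_singleton (x := y))) ?_
    ⟨left_mem_Icc.2 hxx', rfl⟩ ⟨right_mem_Icc.2 hxx', rfl⟩
  rintro ⟨u, _⟩ ⟨hu, rfl⟩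
  exact hfree u hu

lemma Escapes.of_snd (h : Escapes m N (x, y')) (hfree : ∀ v ∈ uIcc y y', (x, v) ∈ freePlan m N) :
    Escapes m N (x, y) := by
  refine h.of_isPreconnected ((isPreconnected_singleton (x := x)).prod isPreconnected_uIcc) ?_
    ⟨rfl, left_mem_uIcc⟩ ⟨rfl, right_mem_uIcc⟩
  rintro ⟨_, v⟩ ⟨rfl, hv⟩
  exact hfree v hv

lemma mem_openPlan_of_fst_lt (hx : q.1 < -1) : q ∈ openPlan m N :=
  Or.inr fun _ _ hmem => hx.not_ge (mem_triangle_sub_ceilingPos.1 hmem).1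

lemma mem_openPlan_of_snd_pos (hy : 0 < q.2) : q ∈ openPlan m N :=
  Or.inl fun _ _ hmem => hy.not_ge (mem_triangle_sub_floor.1 hmem).2.1

lemma mem_openPlan_of_lt_fst_sub_snd (hq : 11 < q.1 - q.2) : q ∈ openPlan m N :=
  Or.inl fun _ hi hmem => by
    linarith [(mem_triangle_sub_floor.1 hmem).2.2, (floorX_mem_Icc hi).2]

variable [NeZero m]

lemma escapes_of_wallX_le (hx : wallX m m ≤ x) (hy : y ≤ 0) (h : (x, y) ∈ freePlan m N) :
    Escapes m N (x, y) := by
  have hfree : ∀ u ∈ Icc x (max x 12), (u, y) ∈ freePlan m N := fun u hu =>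
    mem_freePlan_of_le_fst hx hu.1 (fun hlt => (lt_irrefl m hlt).elim) h
  refine Escapes.of_fst (escapes_of_mem_openPlan (hfree _ (right_mem_Icc.2 (le_max_left x 12)))
    (mem_openPlan_of_lt_fst_sub_snd ?_)) (le_max_left x 12) hfree
  dsimp only
  linarith [le_max_right x 12]

lemma escapes_of_lt_contactAt (hx : x ∈ Icc (-1) 0) (hy : y < contactAt m N 0 x)
    (h : (x, y) ∈ freePlan m N) : Escapes m N (x, y) := by
  have hmono := (strictMono_contactAt m N hx.1).monotone
  have hfree : ∀ v ≤ y, (x, v) ∈ freePlan m N := fun v hv =>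
    ⟨fun n hn => notMem_bladeAt_of_le_contactAt hx (h.1 n hn) hv (hy.le.trans (hmono n.zero_le)),
      fun k hk => notMem_wall_of_snd_le (h.2 k hk) hv (by linarith [contactAt_neg m N 0 hx.1])⟩
  have hle : min y (-20) ≤ y := min_le_left _ _
  refine Escapes.of_snd (escapes_of_mem_openPlan (hfree _ hle) (mem_openPlan_of_lt_fst_sub_snd ?_))
    fun v hv => hfree v ?_
  · dsimp only
    linarith [min_le_right y (-20), hx.1]
  · rw [uIcc_of_ge hle] at hv
    exact hv.2

-- The slit between two walls is passed by first moving to the right, close to its right end.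
lemma escapes_of_contactAt_lt (hN : 2 * scale N ≤ wallSpacing m / 2) (hk : k < m)
    (hx : x ∈ Ico (wallX m k) (wallX m (k + 1))) (hy : contactAt m N (m ^ 2 - 1) x < y)
    (hy₀ : y ≤ 0) (h : (x, y) ∈ freePlan m N) : Escapes m N (x, y) := by
  have hδ := wallSpacing_pos m
  set x' := max x (wallX m k + 3 * wallSpacing m / 4)
  have hxx' : x ≤ x' := le_max_left _ _
  have hkx' : wallX m k + 3 * wallSpacing m / 4 ≤ x' := le_max_right _ _
  have hx' : x' < wallX m (k + 1) :=
    max_lt hx.2 (by linarith [wallX_add_wallSpacing_le m k])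
  have hx'Icc : x' ∈ Icc (-1) 0 :=
    ⟨((neg_one_le_wallX m k).trans hx.1).trans hxx', (hx'.trans (wallX_succ_neg hk)).le⟩
  have hright : ∀ u ∈ Icc x x', (u, y) ∈ freePlan m N := fun u hu =>
    mem_freePlan_of_le_fst hx.1 hu.1 (fun _ => hu.2.trans_lt hx') h
  have hmono := (strictMono_contactAt m N hx'Icc.1).monotone
  have hup : ∀ v ∈ Icc y (wallSpacing m / 8), (x', v) ∈ freePlan m N := by
    refine fun v hv => ⟨fun n hn => ?_, notMem_wall_of_fst_mem_column ?_ fun _ => hx'⟩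
    · exact notMem_bladeAt_of_contactAt_le hx'Icc
        ((hright x' (right_mem_Icc.2 hxx')).1 n hn)
        (((hmono (Nat.le_pred_of_lt hn)).trans (antitone_contactAt m N _ hxx')).trans hy.le) hv.1
    · dsimp only
      linarith [hv.2]
  have hle : y ≤ wallSpacing m / 8 := by linarith
  refine Escapes.of_fst (Escapes.of_snd (y' := wallSpacing m / 8) ?_ fun v hv => ?_) hxx' hright
  · exact escapes_of_mem_openPlan (hup _ (right_mem_Icc.2 hle))
      (mem_openPlan_of_snd_pos (by dsimp only; linarith))
  · exact hup v (uIcc_of_le hle ▸ hv)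

lemma exists_mem_cell_of_not_escapes (hN : 2 * scale N ≤ wallSpacing m / 2)
    (hq : q ∈ freePlan m N) (hesc : ¬Escapes m N q) :
    ∃ n k, n + 1 < m ^ 2 ∧ k < m ∧ q ∈ cell m N n k := by
  obtain ⟨x, y⟩ := q
  have hx : -1 ≤ x := not_lt.1 fun hlt =>
    hesc (escapes_of_mem_openPlan hq (mem_openPlan_of_fst_lt hlt))
  have hy : y ≤ 0 := not_lt.1 fun hlt =>
    hesc (escapes_of_mem_openPlan hq (mem_openPlan_of_snd_pos hlt))
  have hxm : x < wallX m m := not_le.1 fun hle => hesc (escapes_of_wallX_le hle hy hq)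
  have hxIcc : x ∈ Icc (-1) 0 := ⟨hx, (hxm.trans (wallX_neg le_rfl)).le⟩
  obtain ⟨k, hk, hxk⟩ := exists_mem_Ico_succ (f := wallX m) ⟨hx, hxm⟩
  have hlow : contactAt m N 0 x ≤ y := not_lt.1 fun hlt =>
    hesc (escapes_of_lt_contactAt hxIcc hlt hq)
  have hhigh : y ≤ contactAt m N (m ^ 2 - 1) x := not_lt.1 fun hlt =>
    hesc (escapes_of_contactAt_lt hN hk hxk hlt hy hq)
  have hlast : m ^ 2 - 1 < m ^ 2 := Nat.sub_lt (pow_pos (NeZero.pos m) 2) one_pos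
  obtain ⟨n, hn, hyn⟩ := exists_mem_Ico_succ (f := fun n => contactAt m N n x)
    ⟨hlow, hhigh.lt_of_ne (contactAt_ne_of_mem_freePlan hlast hxIcc hq).symm⟩
  have hn' : n + 1 < m ^ 2 := by lia
  exact ⟨n, k, hn', hk,
    mem_cell_of_mem_Icc hn' hk hq (Ico_subset_Icc_self hxk) (Ico_subset_Icc_self hyn)⟩

lemma exists_two_mul_scale_le (m : ℕ) [NeZero m] : ∃ N, 2 * scale N ≤ wallSpacing m / 2 := by
  obtain ⟨N, hN⟩ := exists_pow_lt_of_lt_one (show 0 < wallSpacing m / 4 by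
    linarith [wallSpacing_pos m]) (show (1 / 2 : ℝ) < 1 by norm_num)
  refine ⟨N, ?_⟩
  unfold scale
  linarith

end Escape

section Space

variable {m N : ℕ} {p : Fin 3 → ℝ} {q : ℝ × ℝ} {S : Set (ℝ × ℝ)} {I : Set ℝ}

/-- The translation vectors of the arrangement: `(0, i)` indexes the floors, `(1, j)` the ceilings
and `(2, k)` the walls. -/
noncomputable def translation (m N : ℕ) : Fin 3 × Fin m → Fin 3 → ℝ
  | (0, i) => ![floorX m i, 0, -100]
  | (1, j) => ![(ceilingPos (scale (N + j))).1, (ceilingPos (scale (N + j))).2,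
      100 - 7 * scale (N + j) ^ 2]
  | (2, k) => ![(wallPos m N k).1, (wallPos m N k).2, 0]

/-- The complement of the union of the translates. -/
def air (m N : ℕ) : Set (Fin 3 → ℝ) := (⋃ c, translation m N c +ᵥ body)ᶜ

/-- The points above all floors, below all ceilings and off all walls, where floors are extended
infinitely downwards, ceilings infinitely upwards and walls in both directions. -/
def gap (m N : ℕ) : Set (Fin 3 → ℝ) :=
  {p | (∀ i < m, plan p - (floorX m i, 0) ∈ triangle →
      roofHeight (plan p - (floorX m i, 0)) < p 2) ∧
    (∀ j < m, plan p - ceilingPos (scale (N + j)) ∈ triangle →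
      p 2 < keelHeight (plan p - ceilingPos (scale (N + j))) - 7 * scale (N + j) ^ 2) ∧
    ∀ k < m, plan p ∉ wall m N k}

lemma mem_air : p ∈ air m N ↔ ∀ c, p ∉ translation m N c +ᵥ body := by
  simp only [air, mem_compl_iff, mem_iUnion, not_exists]

lemma gap_subset_air (m N : ℕ) : gap m N ⊆ air m N := by
  rintro p ⟨hfloor, hceiling, hwall⟩
  refine mem_air.2 ?_
  rintro ⟨c, l⟩ hmem
  obtain ⟨htri, hkeel, hroof⟩ := mem_vadd_body.1 hmem
  fin_cases c
  · have := hfloor l l.2 htri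
    change p 2 ≤ roofHeight (plan p - (floorX m l, 0)) + -100 + 100 at hroof
    linarith
  · have := hceiling l l.2 htri
    change keelHeight (plan p - ceilingPos (scale (N + l))) + (100 - 7 * scale (N + l) ^ 2) - 100
      ≤ p 2 at hkeel
    linarith
  · exact hwall l l.2 htri

lemma mem_gap_of_mem_air (hp : p ∈ air m N) (hp₂ : |p 2| ≤ 50) : p ∈ gap m N := by
  have hp₂ := abs_le.1 hp₂
  refine ⟨fun i hi htri => ?_, fun j hj htri => ?_, fun k hk htri => ?_⟩
  · by_contra! hle
    refine mem_air.1 hp (0, ⟨i, hi⟩) (mem_vadd_body.2 ⟨htri, ?_, ?_⟩)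
    · change keelHeight (plan p - (floorX m i, 0)) + -100 - 100 ≤ p 2
      linarith [(abs_le.1 (abs_keelHeight_le htri)).2]
    · change p 2 ≤ roofHeight (plan p - (floorX m i, 0)) + -100 + 100
      linarith
  · by_contra! hle
    refine mem_air.1 hp (1, ⟨j, hj⟩) (mem_vadd_body.2 ⟨htri, ?_, ?_⟩)
    · change keelHeight (plan p - ceilingPos (scale (N + j))) + (100 - 7 * scale (N + j) ^ 2) - 100
        ≤ p 2
      linarith
    · change p 2 ≤ roofHeight (plan p - ceilingPos (scale (N + j))) +
        (100 - 7 * scale (N + j) ^ 2) + 100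
      nlinarith [(abs_le.1 (abs_roofHeight_le htri)).1, scale_pos (N + j), scale_le_one (N + j)]
  · refine mem_air.1 hp (2, ⟨k, hk⟩) (mem_vadd_body.2 ⟨htri, ?_, ?_⟩)
    · change keelHeight (plan p - wallPos m N k) + 0 - 100 ≤ p 2
      linarith [(abs_le.1 (abs_keelHeight_le htri)).2]
    · change p 2 ≤ roofHeight (plan p - wallPos m N k) + 0 + 100
      linarith [(abs_le.1 (abs_roofHeight_le htri)).1]

lemma isOpen_gap (m N : ℕ) : IsOpen (gap m N) := by
  have hsub (c : ℝ × ℝ) : Continuous fun p => plan p - c := continuous_plan.sub continuous_const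
  have htri (c : ℝ × ℝ) : IsOpen {p | plan p - c ∉ triangle} :=
    (isClosed_triangle.preimage (hsub c)).isOpen_compl
  simp only [gap, imp_iff_not_or (b := _ < _), ofPred_and, ofPred_forall, ofPred_or]
  refine ((finite_lt_nat m).isOpen_biInter fun i _ => ?_).inter
    (((finite_lt_nat m).isOpen_biInter fun j _ => ?_).inter
      ((finite_lt_nat m).isOpen_biInter fun k _ => htri _))
  · exact (htri _).union
      (isOpen_lt (continuous_roofHeight.comp (hsub _)) (continuous_apply 2))
  · exact (htri _).union (isOpen_lt (continuous_apply 2)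
      ((continuous_keelHeight.comp (hsub _)).sub continuous_const))

lemma gap_subset_preimage_freePlan [NeZero m] : gap m N ⊆ plan ⁻¹' freePlan m N := by
  rintro p ⟨hfloor, hceiling, hwall⟩
  refine ⟨fun n hn hmem => ?_, hwall⟩
  obtain ⟨hf, hc, hle⟩ := hmem
  exact (hle.trans_lt (hfloor _ (Nat.mod_lt n (NeZero.pos m)) hf)).not_gt
    (hceiling _ (Nat.div_lt_of_lt_mul (by rwa [← sq])) hc)

lemma freePlan_subset_image_gap : freePlan m N ⊆ plan '' gap m N := by
  intro q hq
  obtain ⟨z, hfloor, hceiling⟩ := Set.Finite.exists_between'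
    (s := (fun i => roofHeight (q - (floorX m i, 0))) ''
      {i | i < m ∧ q - (floorX m i, 0) ∈ triangle})
    (t := (fun j => keelHeight (q - ceilingPos (scale (N + j))) - 7 * scale (N + j) ^ 2) ''
      {j | j < m ∧ q - ceilingPos (scale (N + j)) ∈ triangle})
    (((finite_lt_nat m).subset fun i hi => hi.1).image _)
    (((finite_lt_nat m).subset fun j hj => hj.1).image _) (by
      rintro _ ⟨i, ⟨hi, hif⟩, rfl⟩ _ ⟨j, ⟨hj, hjc⟩, rfl⟩
      by_contra! hle
      refine hq.1 (m * j + i) (by nlinarith) ?_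
      rw [bladeAt_mul_add hi]
      exact ⟨hif, hjc, hle⟩)
  exact ⟨![q.1, q.2, z], ⟨fun i hi hif => hfloor _ ⟨i, ⟨hi, hif⟩, rfl⟩,
    fun j hj hjc => hceiling _ ⟨j, ⟨hj, hjc⟩, rfl⟩, hq.2⟩, rfl⟩

lemma isPreconnected_vertical (q : ℝ × ℝ) (hI : I.OrdConnected) :
    IsPreconnected {p : Fin 3 → ℝ | plan p = q ∧ p 2 ∈ I} := by
  convert hI.isPreconnected.image (fun z => (![q.1, q.2, z] : Fin 3 → ℝ)) (by fun_prop) using 1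
  ext p
  constructor
  · rintro ⟨rfl, hp⟩
    refine ⟨p 2, hp, ?_⟩
    ext i
    fin_cases i <;> rfl
  · rintro ⟨z, hz, rfl⟩
    exact ⟨rfl, hz⟩

lemma isPreconnected_gap_inter_preimage (hS : IsPreconnected S) (hSfree : S ⊆ freePlan m N) :
    IsPreconnected (gap m N ∩ plan ⁻¹' S) := by
  refine isPreconnected_inter_preimage_of_isOpenMap isOpenMap_plan (isOpen_gap m N) (fun q => ?_)
    hS (hSfree.trans freePlan_subset_image_gap)
  have hI : {z | ![q.1, q.2, z] ∈ gap m N}.OrdConnected := ⟨fun z₁ h₁ z₂ h₂ z hz =>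
    ⟨fun i hi hf => (h₁.1 i hi hf).trans_le hz.1,
      fun j hj hc => hz.2.trans_lt (h₂.2.1 j hj hc), h₁.2.2⟩⟩
  convert isPreconnected_vertical q hI using 1
  ext p
  have hp : p = ![(plan p).1, (plan p).2, p 2] := by
    ext i
    fin_cases i <;> rfl
  constructor
  · rintro ⟨h, rfl⟩
    exact ⟨rfl, by rwa [mem_ofPred_eq, ← hp]⟩
  · rintro ⟨rfl, h⟩
    exact ⟨by rwa [mem_ofPred_eq, ← hp] at h, rfl⟩

lemma abs_lt_of_mem_gap [NeZero m] (hp : p ∈ gap m N) (hq : plan p ∈ Icc (-1) 0 ×ˢ Icc (-1) 0) :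
    |p 2| < 50 := by
  obtain ⟨⟨hx₁, hx₀⟩, hy₁, hy₀⟩ := hq
  have hm := NeZero.pos m
  have hr := scale_pos (N + 0)
  have hr₁ := scale_le_one (N + 0)
  have hfloor : plan p - (floorX m 0, 0) ∈ triangle := by
    rw [floorX, Nat.cast_zero, zero_div]
    exact mem_triangle_sub_floor.2 ⟨by linarith, hy₀, by linarith⟩
  have hceiling : plan p - ceilingPos (scale (N + 0)) ∈ triangle :=
    mem_triangle_sub_ceilingPos.2 ⟨hx₁, by linarith, by linarith⟩
  have hroof := (abs_le.1 (abs_roofHeight_le hfloor)).1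
  have hkeel := (abs_le.1 (abs_keelHeight_le hceiling)).2
  exact abs_lt.2 ⟨by linarith [hp.1 0 hm hfloor],
    by linarith [hp.2.1 0 hm hceiling, sq_nonneg (scale (N + 0))]⟩

end Space

section Exterior

variable {m N : ℕ} {p : Fin 3 → ℝ} {I : Set ℝ}

/-- A connected region of space which avoids the arrangement. -/
def far : Set (Fin 3 → ℝ) := {p | 300 ≤ |p 2|} ∪ {p | 20 ≤ p 0}

/-- A point of `far` which serves as a base point. -/
def farPoint : Fin 3 → ℝ := ![20, 0, 0]

/-- The unbounded component of the complement of the arrangement. -/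
def exterior (m N : ℕ) : Set (Fin 3 → ℝ) := connectedComponentIn (air m N) farPoint

lemma isPreconnected_far : IsPreconnected far := by
  have hproj (i : Fin 3) : IsLinearMap ℝ fun p : Fin 3 → ℝ => p i :=
    (LinearMap.proj (R := ℝ) (φ := fun _ : Fin 3 => ℝ) i).isLinear
  have hside : IsPreconnected {p : Fin 3 → ℝ | 20 ≤ p 0} :=
    (convex_halfSpace_ge (hproj 0) 20).isPreconnected
  have habove : IsPreconnected {p : Fin 3 → ℝ | 300 ≤ p 2} :=
    (convex_halfSpace_ge (hproj 2) 300).isPreconnected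
  have hbelow : IsPreconnected {p : Fin 3 → ℝ | p 2 ≤ -300} :=
    (convex_halfSpace_le (hproj 2) (-300)).isPreconnected
  have hfar : far = {p | p 2 ≤ -300} ∪ ({p | 300 ≤ p 2} ∪ {p | 20 ≤ p 0}) := by
    ext p
    simp only [far, mem_union, mem_ofPred_eq, le_abs', or_assoc]
  rw [hfar]
  have hunion := habove.union' ⟨![20, 0, 300], show (300 : ℝ) ≤ 300 from le_rfl,
    show (20 : ℝ) ≤ 20 from le_rfl⟩ hside
  exact hbelow.union' ⟨![20, 0, -300], show (-300 : ℝ) ≤ -300 from le_rfl,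
    Or.inr (show (20 : ℝ) ≤ 20 from le_rfl)⟩ hunion

lemma farPoint_mem_far : farPoint ∈ far := Or.inr (show (20 : ℝ) ≤ 20 from le_rfl)

lemma translation_fst_le (m N : ℕ) (c : Fin 3 × Fin m) : translation m N c 0 ≤ 2 := by
  obtain ⟨c, l⟩ := c
  have : NeZero m := ⟨l.pos.ne'⟩
  fin_cases c
  · change floorX m l ≤ 2
    linarith [(floorX_mem_Icc l.2).2]
  · change (1 : ℝ) ≤ 2
    norm_num
  · change 2 + wallX m (l + 1) ≤ 2
    linarith [wallX_succ_neg l.2]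

lemma abs_translation_le (m N : ℕ) (c : Fin 3 × Fin m) : |translation m N c 2| ≤ 100 := by
  obtain ⟨c, l⟩ := c
  fin_cases c
  · change |(-100 : ℝ)| ≤ 100
    norm_num
  · change |100 - 7 * scale (N + l) ^ 2| ≤ 100
    have := scale_pos (N + l)
    have := scale_le_one (N + l)
    rw [abs_le]
    constructor <;> nlinarith
  · change |(0 : ℝ)| ≤ 100
    norm_num

lemma far_subset_air (m N : ℕ) : far ⊆ air m N := by
  refine fun p hp => mem_air.2 fun c hmem => ?_
  obtain ⟨htri, hkeel, hroof⟩ := mem_vadd_body.1 hmem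
  have hheight := abs_le.1 (abs_translation_le m N c)
  rcases hp with hp | hp
  · refine (show 300 ≤ |p 2| from hp).not_gt (abs_lt.2 ?_)
    constructor <;>
      linarith [abs_le.1 (abs_keelHeight_le htri), (abs_le.1 (abs_roofHeight_le htri)).2]
  · obtain ⟨-, hy, hxy⟩ := htri
    simp only [mem_ofPred_eq, Prod.fst_sub, Prod.snd_sub, plan_apply] at hp hy hxy
    linarith [translation_fst_le m N c]

lemma far_subset_exterior (m N : ℕ) : far ⊆ exterior m N :=
  isPreconnected_far.subset_connectedComponentIn farPoint_mem_far (far_subset_air m N)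

lemma mem_exterior_of_vertical (hI : I.OrdConnected) (hpI : p 2 ∈ I) (hfar : ∃ z ∈ I, 300 ≤ |z|)
    (hair : ∀ p', plan p' = plan p → p' 2 ∈ I → p' ∈ air m N) : p ∈ exterior m N := by
  obtain ⟨z, hz, hz'⟩ := hfar
  exact subset_connectedComponentIn_of_inter_nonempty (isPreconnected_vertical (plan p) hI)
    (fun p' hp' => hair p' hp'.1 hp'.2)
    ⟨![p 0, p 1, z], ⟨rfl, hz⟩, far_subset_exterior m N (Or.inl hz')⟩ ⟨rfl, hpI⟩

lemma exists_ge_le_abs (z b : ℝ) : ∃ z' ∈ Ici z, b ≤ |z'| :=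
  ⟨max z b, le_max_left z b, (le_max_right z b).trans (le_abs_self _)⟩

lemma exists_le_le_abs (z b : ℝ) : ∃ z' ∈ Iic z, b ≤ |z'| :=
  ⟨min z (-b), min_le_left z (-b),
    (le_neg.2 (min_le_right z (-b))).trans (neg_le_abs _)⟩

lemma mem_exterior_of_lt_abs (hp : p ∈ air m N) (hp₂ : 50 < |p 2|) : p ∈ exterior m N := by
  rcases lt_abs.1 hp₂ with habove | hbelow
  · refine mem_exterior_of_vertical ordConnected_Ici self_mem_Ici (exists_ge_le_abs _ _)
      fun p' hplan hle => mem_air.2 fun c hmem => ?_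
    obtain ⟨htri, hkeel, hroof⟩ := mem_vadd_body.1 hmem
    rw [hplan] at htri hroof
    refine mem_air.1 hp c (mem_vadd_body.2 ⟨htri, ?_, (mem_Ici.1 hle).trans hroof⟩)
    linarith [abs_le.1 (abs_translation_le m N c), abs_le.1 (abs_keelHeight_le htri)]
  · refine mem_exterior_of_vertical ordConnected_Iic self_mem_Iic (exists_le_le_abs _ _)
      fun p' hplan hle => mem_air.2 fun c hmem => ?_
    obtain ⟨htri, hkeel, hroof⟩ := mem_vadd_body.1 hmem
    rw [hplan] at htri hkeel
    refine mem_air.1 hp c (mem_vadd_body.2 ⟨htri, hkeel.trans (mem_Iic.1 hle), ?_⟩)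
    linarith [abs_le.1 (abs_translation_le m N c), abs_le.1 (abs_roofHeight_le htri)]

lemma mem_exterior_of_mem_openPlan (hp : p ∈ gap m N) (hopen : plan p ∈ openPlan m N) :
    p ∈ exterior m N := by
  rcases hopen with hfloor | hceiling
  · refine mem_exterior_of_vertical ordConnected_Iic self_mem_Iic (exists_le_le_abs _ _)
      fun p' hplan hle => gap_subset_air m N ?_
    rw [gap, mem_ofPred_eq, hplan]
    exact ⟨fun i hi hmem => (hfloor i hi hmem).elim,
      fun j hj hmem => (mem_Iic.1 hle).trans_lt (hp.2.1 j hj hmem), hp.2.2⟩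
  · refine mem_exterior_of_vertical ordConnected_Ici self_mem_Ici (exists_ge_le_abs _ _)
      fun p' hplan hle => gap_subset_air m N ?_
    rw [gap, mem_ofPred_eq, hplan]
    exact ⟨fun i hi hmem => (hp.1 i hi hmem).trans_le hle,
      fun j hj hmem => (hceiling j hj hmem).elim, hp.2.2⟩

lemma mem_exterior_of_escapes [NeZero m] (hp : p ∈ gap m N) (hesc : Escapes m N (plan p)) :
    p ∈ exterior m N := by
  obtain ⟨q, hq, hopen⟩ := hesc
  set S := connectedComponentIn (freePlan m N) (plan p)
  have hS : S ⊆ freePlan m N := connectedComponentIn_subset _ _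
  obtain ⟨p', hp', rfl⟩ := freePlan_subset_image_gap (hS hq)
  exact subset_connectedComponentIn_of_inter_nonempty
    (isPreconnected_gap_inter_preimage isPreconnected_connectedComponentIn hS)
    (inter_subset_left.trans (gap_subset_air m N))
    ⟨p', ⟨hp', hq⟩, mem_exterior_of_mem_openPlan hp' hopen⟩
    ⟨hp, mem_connectedComponentIn (gap_subset_preimage_freePlan hp)⟩

end Exterior

section Chamber

variable {m N n k : ℕ} {p : Fin 3 → ℝ}

/-- The hole over the cell with indices `n` and `k`. -/
def chamber (m N n k : ℕ) : Set (Fin 3 → ℝ) := gap m N ∩ plan ⁻¹' cell m N n k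

/-- The holes as subsets of the complement of the arrangement, indexed by their cells. -/
def chamberInAir (m N : ℕ) (c : Fin (m ^ 2 - 1) × Fin m) : Set (air m N) :=
  Subtype.val ⁻¹' chamber m N c.1 c.2

lemma chamber_subset_air (m N n k : ℕ) : chamber m N n k ⊆ air m N :=
  inter_subset_left.trans (gap_subset_air m N)

lemma isOpen_chamber (m N n k : ℕ) : IsOpen (chamber m N n k) :=
  (isOpen_gap m N).inter ((isOpen_cell m N n k).preimage continuous_plan)

variable [NeZero m]

lemma isConnected_chamber (hN : 2 * scale N ≤ wallSpacing m / 2) (hn : n + 1 < m ^ 2)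
    (hk : k < m) : IsConnected (chamber m N n k) := by
  constructor
  · obtain ⟨q, hq, hfree⟩ := nonempty_cell_inter_freePlan (n := n) (k := k) hN
    obtain ⟨p, hp, rfl⟩ := freePlan_subset_image_gap hfree
    exact ⟨p, hp, hq⟩
  · convert isPreconnected_gap_inter_preimage (isPreconnected_cell_inter_freePlan hn hk)
      inter_subset_right using 1
    rw [preimage_inter, inter_comm (plan ⁻¹' _), ← inter_assoc,
      inter_eq_left.2 gap_subset_preimage_freePlan, chamber]

/-- The closed region of space over a cell up to height `50`; a chamber is the part of `air` inside
it, hence closed in `air`. -/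
def closedBox (m N n k : ℕ) : Set (Fin 3 → ℝ) :=
  {p | p 0 ∈ Icc (wallX m k) (wallX m (k + 1)) ∧
    p 1 ∈ Icc (contactAt m N n (p 0)) (contactAt m N (n + 1) (p 0)) ∧ |p 2| ≤ 50}

lemma isClosed_closedBox (m N n k : ℕ) : IsClosed (closedBox m N n k) := by
  have hcontact (l : ℕ) : Continuous fun p : Fin 3 → ℝ => contactAt m N l (p 0) :=
    (continuous_contactAt m N l).comp (continuous_apply 0)
  exact (isClosed_Icc.preimage (continuous_apply 0)).inter <|
    ((isClosed_le (hcontact n) (continuous_apply 1)).inter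
      (isClosed_le (continuous_apply 1) (hcontact (n + 1)))).inter
        (isClosed_le (continuous_apply 2).abs continuous_const)

lemma chamber_eq_air_inter_closedBox (hn : n + 1 < m ^ 2) (hk : k < m) :
    chamber m N n k = air m N ∩ closedBox m N n k := by
  ext p
  constructor
  · rintro ⟨hgap, hcell⟩
    exact ⟨gap_subset_air m N hgap, Ioo_subset_Icc_self hcell.1, Ioo_subset_Icc_self hcell.2,
      (abs_lt_of_mem_gap hgap (cell_subset_Icc_prod_Icc hk hcell)).le⟩
  · rintro ⟨hair, hx, hy, hz⟩
    have hgap := mem_gap_of_mem_air hair hz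
    exact ⟨hgap, mem_cell_of_mem_Icc hn hk (gap_subset_preimage_freePlan hgap) hx hy⟩

lemma exists_mem_chamber_of_notMem_exterior (hN : 2 * scale N ≤ wallSpacing m / 2)
    (hp : p ∈ air m N) (hext : p ∉ exterior m N) :
    ∃ n k, n + 1 < m ^ 2 ∧ k < m ∧ p ∈ chamber m N n k := by
  have hgap := mem_gap_of_mem_air hp (not_lt.1 fun hlt => hext (mem_exterior_of_lt_abs hp hlt))
  obtain ⟨n, k, hn, hk, hcell⟩ := exists_mem_cell_of_not_escapes hN
    (gap_subset_preimage_freePlan hgap) fun hesc => hext (mem_exterior_of_escapes hgap hesc)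
  exact ⟨n, k, hn, hk, hgap, hcell⟩

lemma isClopen_chamberInAir (c : Fin (m ^ 2 - 1) × Fin m) : IsClopen (chamberInAir m N c) := by
  refine ⟨?_, (isOpen_chamber _ _ _ _).preimage continuous_subtype_val⟩
  rw [chamberInAir, chamber_eq_air_inter_closedBox (Nat.add_lt_of_lt_sub c.1.2) c.2.2,
    preimage_inter, Subtype.coe_preimage_self, univ_inter]
  exact (isClosed_closedBox _ _ _ _).preimage continuous_subtype_val

lemma isConnected_chamberInAir (hN : 2 * scale N ≤ wallSpacing m / 2)
    (c : Fin (m ^ 2 - 1) × Fin m) : IsConnected (chamberInAir m N c) := by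
  have hconn := isConnected_chamber hN (Nat.add_lt_of_lt_sub c.1.2) c.2.2
  have himage : Subtype.val '' chamberInAir m N c = chamber m N c.1 c.2 := by
    rw [chamberInAir, Subtype.image_preimage_coe, inter_eq_right.2 (chamber_subset_air _ _ _ _)]
  rw [← himage] at hconn
  exact ⟨hconn.nonempty.of_image,
    Topology.IsInducing.subtypeVal.isPreconnected_image.1 hconn.isPreconnected⟩

lemma pairwise_disjoint_chamberInAir (m N : ℕ) [NeZero m] :
    Pairwise (Function.onFun Disjoint (chamberInAir m N)) := by
  refine fun c c' hne => disjoint_left.2 fun p hp hp' => hne ?_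
  obtain ⟨hn, hk⟩ := eq_of_mem_cell hp.2 hp'.2
  exact Prod.ext (Fin.ext hn) (Fin.ext hk)

lemma farPoint_notMem_chamber (hk : k < m) : farPoint ∉ chamber m N n k := by
  intro hmem
  have hlt : (20 : ℝ) < wallX m (k + 1) := hmem.2.1.2
  linarith [wallX_succ_neg hk]

lemma compl_iUnion_chamberInAir_subset (hN : 2 * scale N ≤ wallSpacing m / 2)
    (hfar : farPoint ∈ air m N) :
    (⋃ c, chamberInAir m N c)ᶜ ⊆ connectedComponent ⟨farPoint, hfar⟩ := by
  intro p hp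
  by_contra hnot
  have hext : p.1 ∉ exterior m N := by
    rwa [exterior, connectedComponentIn_eq_image hfar, Subtype.val_injective.mem_set_image]
  obtain ⟨n, k, hn, hk, hmem⟩ := exists_mem_chamber_of_notMem_exterior hN p.2 hext
  exact hp (mem_iUnion.2 ⟨(⟨n, Nat.lt_sub_of_add_lt hn⟩, ⟨k, hk⟩), hmem⟩)

lemma card_connectedComponents_air (hN : 2 * scale N ≤ wallSpacing m / 2) :
    Nat.card (ConnectedComponents (air m N)) = m ^ 3 - m + 1 := by
  rw [card_connectedComponents_of_isClopen isClopen_chamberInAir (isConnected_chamberInAir hN)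
      (pairwise_disjoint_chamberInAir m N) (fun c => farPoint_notMem_chamber c.2.2)
      (compl_iUnion_chamberInAir_subset hN (far_subset_air m N farPoint_mem_far)),
    Nat.card_prod, Nat.card_fin, Nat.card_fin, Nat.sub_mul, one_mul, ← pow_succ]

end Chamber

end CubicVoids

/-- **Theorem 1 (lower bound part).** There exists a compact convex body `K ⊆ ℝ³`
(compact, convex, with nonempty interior) such that for every positive integer `m`
there are `3m` translation vectors for which the complement of the union of the
translates has exactly `m³ − m + 1` connected components. -/
theorem cubic_voids :
    ∃ K : Set (Fin 3 → ℝ),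
      IsCompact K ∧ Convex ℝ K ∧ (interior K).Nonempty ∧
      ∀ m : ℕ, 0 < m →
        ∃ t : Fin (3 * m) → (Fin 3 → ℝ),
          Nat.card (ConnectedComponents ↥((⋃ i, t i +ᵥ K)ᶜ)) = m ^ 3 - m + 1 := by
  refine ⟨CubicVoids.body, CubicVoids.isCompact_body, CubicVoids.convex_body,
    CubicVoids.nonempty_interior_body, fun m hm => ?_⟩
  have : NeZero m := ⟨hm.ne'⟩
  obtain ⟨N, hN⟩ := CubicVoids.exists_two_mul_scale_le m
  refine ⟨fun i => CubicVoids.translation m N (finProdFinEquiv.symm i), ?_⟩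
  rw [finProdFinEquiv.symm.surjective.iUnion_comp fun c =>
    CubicVoids.translation m N c +ᵥ CubicVoids.body]
  exact CubicVoids.card_connectedComponents_air hN
end

section
/- For every integer d ≥ 1, every integer n ≥ 1, and every family X₁, …, Xₙ of compact convex subsets of ℝ^d, the number of connected components of ℝ^d ∖ (X₁ ∪ ⋯ ∪ Xₙ) is at most C(n, d) + 1, where C(n, d) is the binomial coefficient 'n choose d'. -/
/-!
Outer polyhedra that avoid one point of each of finitely many holes keep those holes apart, so the
convex sets may be replaced by polyhedra whose facets are in general position. Fix a generic linear
functional `f`. The union is bounded, so at most one hole is unbounded below with respect to `f`.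
Any other hole has a lowest point `v` in its closure. Near `v` it contains an open cone with apex
`v`, cut out by one facet of each polyhedron through `v`, and `f` is at least `f v` on that cone. As
`f` is generic, there are exactly `d` such polyhedra, and `f` is a positive combination of the outer
normals of these facets, so `v` is the unique highest point of the intersection of the `d`
polyhedra. Hence the `d` polyhedra determine `v`, and the facets through `v` determine the hole.
This injects the holes that are bounded below into the `d`-element sets of indices.
-/

open Set Module Filter Topology
open scoped Cardinal

section LinearAlgebra

variable {k V S : Type*} [Field k] [AddCommGroup V] [Module k V]

variable (k) in
/-- A vector is generic for a family when it avoids every proper subspace spanned by members of the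
family. Linear functionals to be minimized are chosen generic for the constraints at hand, so that
they are extremal only at vertices. -/
def IsGenericFor (b : S → V) (f : V) : Prop :=
  ∀ A : Set S, f ∈ Submodule.span k (b '' A) → Submodule.span k (b '' A) = ⊤

theorem exists_isGenericFor [Infinite k] [Finite S] (b : S → V) : ∃ f, IsGenericFor k b f := by
  by_contra! h
  simp only [IsGenericFor, not_forall] at h
  choose A hfA hA using h
  have hcover : ⋃ B : {B : Set S // Submodule.span k (b '' B) ≠ ⊤},
      (Submodule.span k (b '' B.1) : Set V) = univ :=
    eq_univ_of_forall fun f ↦ mem_iUnion.2 ⟨⟨A f, hA f⟩, hfA f⟩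
  obtain ⟨B, hB⟩ := Subspace.exists_eq_top_of_iUnion_eq_univ hcover
  exact B.2 hB

theorem IsGenericFor.comp {R : Type*} {b : S → V} {f : V} (hf : IsGenericFor k b f) (e : R → S) :
    IsGenericFor k (b ∘ e) f := fun A h ↦ by
  rw [image_comp] at h ⊢
  exact hf _ h

theorem IsGenericFor.notMem_span_sdiff_singleton {b : S → V} {f : V} (hf : IsGenericFor k b f)
    {A : Set S} (hA : LinearIndepOn k b A) {s : S} (hs : s ∈ A) :
    f ∉ Submodule.span k (b '' (A \ {s})) := fun hmem ↦
  linearIndepOn_iff_notMem_span.1 hA s hs (hf _ hmem ▸ Submodule.mem_top)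

theorem card_eq_finrank_of_linearIndepOn_of_span_eq_top {b : S → V} {T : Finset S}
    (hT : LinearIndepOn k b T) (hspan : Submodule.span k (b '' T) = ⊤) :
    T.card = finrank k V := by
  have hcard := finrank_span_eq_card hT
  rw [show range (fun s : (T : Set S) ↦ b s) = b '' T from (image_eq_range _ _).symm, hspan,
    finrank_top] at hcard
  simpa using hcard.symm

theorem mem_of_linearIndepOn_of_span_eq_top {b : S → V} {A T : Set S} (hA : LinearIndepOn k b A)
    (hTA : T ⊆ A) (hspan : Submodule.span k (b '' T) = ⊤) {s : S} (hs : s ∈ A) : s ∈ T := by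
  by_contra hsT
  refine linearIndepOn_iff_notMem_span.1 hA s hs ?_
  have hle := Submodule.span_mono (R := k) (image_mono (f := b) (subset_sdiff_singleton hTA hsT))
  exact hle (hspan ▸ Submodule.mem_top)

theorem eq_zero_of_span_dual_eq_top {b : S → Dual k V} {A : Set S}
    (hspan : Submodule.span k (b '' A) = ⊤) {x : V} (hx : ∀ s ∈ A, b s x = 0) : x = 0 := by
  have hmem : x ∈ (Submodule.span k (b '' A)).dualCoannihilator := by
    rw [← SetLike.mem_coe, Submodule.coe_dualCoannihilator_span]
    exact forall_mem_image.2 hx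
  rwa [hspan, Submodule.dualCoannihilator_top] at hmem

theorem linearIndepOn_of_forall_exists_eq {b : S → Dual k V} {A : Set S}
    (h : ∀ c : S → k, ∃ v, ∀ s ∈ A, b s v = c s) : LinearIndepOn k b A := by
  classical
  rw [linearIndepOn_iff']
  intro t g htA hsum s hs
  obtain ⟨v, hv⟩ := h (Pi.single s 1)
  calc g s = ∑ r ∈ t, g r * b r v := by
        rw [Finset.sum_congr rfl fun r hr ↦ by rw [hv r (htA hr)]]
        simp [Pi.single_apply, hs]
    _ = (∑ r ∈ t, g r • b r) v := by simp
    _ = 0 := by rw [hsum, LinearMap.zero_apply]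

end LinearAlgebra

section OrderedField

variable {k V S : Type*} [Field k] [LinearOrder k] [IsStrictOrderedRing k]
  [AddCommGroup V] [Module k V] {b : S → Dual k V} {f : Dual k V}

theorem nonneg_of_forall_le_add_mul {m a b : k} (h : ∀ t, 0 ≤ t → m ≤ a + t * b) : 0 ≤ b := by
  by_contra! hb
  have hma : m ≤ a := by simpa using h 0 le_rfl
  have := h ((m - 1 - a) / b) (div_nonneg_of_nonpos (by linarith) hb.le)
  rw [div_mul_cancel₀ _ hb.ne] at this
  linarith

theorem exists_eq_zero_and_pos_of_notMem_span {A : Set S} (hA : A.Finite)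
    (hf : f ∉ Submodule.span k (b '' A)) : ∃ w, (∀ s ∈ A, b s w = 0) ∧ 0 < f w := by
  have := hA.to_subtype
  obtain ⟨w, hw, hfw⟩ : ∃ w, (∀ s ∈ A, b s w = 0) ∧ f w ≠ 0 := by
    by_contra! h
    rw [image_eq_range] at hf
    refine hf (mem_span_of_iInf_ker_le_ker (L := fun s : A ↦ b s) fun x hx ↦ ?_)
    simp only [Submodule.mem_iInf, LinearMap.mem_ker] at hx
    exact h x fun s hs ↦ hx ⟨s, hs⟩
  rcases hfw.lt_or_gt with hneg | hpos
  · exact ⟨-w, fun s hs ↦ by simp [hw s hs], by simpa using hneg⟩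
  · exact ⟨w, hw, hpos⟩

theorem nonneg_on_closed_cone_of_nonneg_on_open_cone {A : Set S} {q : V}
    (hq : ∀ s ∈ A, 0 < b s q) (hf : ∀ x, (∀ s ∈ A, 0 < b s x) → 0 ≤ f x) {x : V}
    (hx : ∀ s ∈ A, 0 ≤ b s x) : 0 ≤ f x := by
  refine nonneg_of_forall_le_add_mul (m := 0) (a := f q) fun t ht ↦ ?_
  have := hf (q + t • x) fun s hs ↦ by
    rw [map_add, map_smul, smul_eq_mul]
    exact add_pos_of_pos_of_nonneg (hq s hs) (mul_nonneg ht (hx s hs))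
  simpa using this

theorem mem_span_of_nonneg_on_cone {A : Set S} (hA : A.Finite)
    (hf : ∀ x, (∀ s ∈ A, 0 ≤ b s x) → 0 ≤ f x) : f ∈ Submodule.span k (b '' A) := by
  by_contra hmem
  obtain ⟨w, hw, hfw⟩ := exists_eq_zero_and_pos_of_notMem_span hA hmem
  have := hf (-w) fun s hs ↦ by simp [hw s hs]
  rw [map_neg] at this
  linarith

theorem exists_pos_coeff_of_nonneg_on_cone {T : Finset S}
    (hf : ∀ x, (∀ s ∈ T, 0 ≤ b s x) → 0 ≤ f x)
    (hT : ∀ s ∈ T, f ∉ Submodule.span k (b '' (T \ {s}))) :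
    ∃ l : S → k, (∀ s ∈ T, 0 < l s) ∧ f = ∑ s ∈ T, l s • b s := by
  obtain ⟨l, hl⟩ := (Submodule.mem_span_image_finset_iff_exists_fun' k).1
    (mem_span_of_nonneg_on_cone T.finite_toSet hf)
  refine ⟨l, fun s hs ↦ ?_, hl.symm⟩
  obtain ⟨w, hw, hfw⟩ := exists_eq_zero_and_pos_of_notMem_span (T.finite_toSet.sdiff) (hT s hs)
  have hfw_eq : f w = l s * b s w := by
    rw [← hl, LinearMap.sum_apply, Finset.sum_eq_single_of_mem s hs fun t ht hts ↦ by
      simp [hw t ⟨ht, hts⟩], LinearMap.smul_apply, smul_eq_mul]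
  have hbw : 0 ≤ b s w := by
    by_contra! hneg
    have := hf (-w) fun t ht ↦ by
      rcases eq_or_ne t s with rfl | hts
      · simpa using hneg.le
      · simp [hw t ⟨ht, hts⟩]
    rw [map_neg] at this
    linarith
  exact pos_of_mul_pos_left (hfw_eq ▸ hfw) hbw

theorem eq_of_forall_le_of_sum_le {T : Finset S} (hspan : Submodule.span k (b '' T) = ⊤)
    {l : S → k} (hl : ∀ s ∈ T, 0 < l s) {v y : V} (hle : ∀ s ∈ T, b s y ≤ b s v)
    (hsum : (∑ s ∈ T, l s • b s) v ≤ (∑ s ∈ T, l s • b s) y) : y = v := by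
  simp only [LinearMap.sum_apply, LinearMap.smul_apply, smul_eq_mul] at hsum
  have hterm : ∀ s ∈ T, l s * b s y ≤ l s * b s v := fun s hs ↦
    mul_le_mul_of_nonneg_left (hle s hs) (hl s hs).le
  have heq := (Finset.sum_eq_sum_iff_of_le hterm).1 ((Finset.sum_le_sum hterm).antisymm hsum)
  refine sub_eq_zero.1 (eq_zero_of_span_dual_eq_top hspan fun s hs ↦ ?_)
  rw [map_sub, sub_eq_zero]
  exact mul_left_cancel₀ (hl s hs).ne' (heq s hs)

end OrderedField

section Perturbation

theorem dense_compl_of_ne_top {k F : Type*} [NontriviallyNormedField k] [AddCommGroup F]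
    [Module k F] [TopologicalSpace F] [ContinuousAdd F] [ContinuousSMul k F] {p : Submodule k F}
    (hp : p ≠ ⊤) : Dense (p : Set F)ᶜ := by
  rw [← interior_eq_empty_iff_dense_compl, ← not_nonempty_iff_eq_empty]
  exact fun h ↦ hp (Submodule.eq_top_of_nonempty_interior' p h)

theorem dense_setOf_forall_linearIndepOn {V S : Type*} [AddCommGroup V] [Module ℝ V] [Finite S]
    (b : S → Dual ℝ V) : Dense {c : S → ℝ | ∀ v, LinearIndepOn ℝ b {s | b s v = c s}} := by
  have := Fintype.ofFinite S
  -- The right-hand sides that are attained on `A` form a subspace, proper when `A` is dependent.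
  let attained (A : Set S) : Submodule ℝ (S → ℝ) :=
    (LinearMap.range (LinearMap.pi fun s : A ↦ b s)).comap (LinearMap.funLeft ℝ ℝ Subtype.val)
  have hmem (A : Set S) (c : S → ℝ) : c ∈ attained A ↔ ∃ v, ∀ s ∈ A, b s v = c s := by
    simp [attained, funext_iff, LinearMap.funLeft_apply]
  have hproper (A : {A : Set S // ¬ LinearIndepOn ℝ b A}) : attained A ≠ ⊤ := fun htop ↦
    A.2 (linearIndepOn_of_forall_exists_eq fun c ↦ (hmem A c).1 (htop ▸ Submodule.mem_top))
  refine (dense_iInter_of_isOpen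
    (fun A : {A : Set S // ¬ LinearIndepOn ℝ b A} ↦
      (attained A).closed_of_finiteDimensional.isOpen_compl)
    (fun A ↦ dense_compl_of_ne_top (hproper A))).mono fun c hc v ↦ ?_
  by_contra hv
  exact mem_iInter.1 hc ⟨_, hv⟩ ((hmem _ c).2 ⟨v, fun _ hs ↦ hs⟩)

theorem exists_mem_Ioo_forall_linearIndepOn {V S : Type*} [AddCommGroup V] [Module ℝ V] [Finite S]
    (b : S → Dual ℝ V) {lo hi : S → ℝ} (h : ∀ s, lo s < hi s) :
    ∃ c : S → ℝ, (∀ s, c s ∈ Ioo (lo s) (hi s)) ∧ ∀ v, LinearIndepOn ℝ b {s | b s v = c s} := by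
  obtain ⟨c, hgen, hc⟩ := (dense_setOf_forall_linearIndepOn b).exists_mem_open
    (isOpen_set_pi finite_univ fun s _ ↦ isOpen_Ioo (a := lo s) (b := hi s))
    (univ_pi_nonempty_iff.2 fun s ↦ nonempty_Ioo.2 (h s))
  exact ⟨c, fun s ↦ hc s (mem_univ s), hgen⟩

end Perturbation

section Components

theorem subset_connectedComponentIn_of_inter_nonempty {α : Type*} [TopologicalSpace α]
    {U W : Set α} {x : α} (hW : IsPreconnected W) (hWU : W ⊆ U)
    (h : (W ∩ connectedComponentIn U x).Nonempty) : W ⊆ connectedComponentIn U x := by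
  obtain ⟨y, hyW, hy⟩ := h
  exact connectedComponentIn_eq hy ▸ hW.subset_connectedComponentIn hyW hWU

theorem connectedComponentIn_eq_of_inter_nonempty {α : Type*} [TopologicalSpace α] {U : Set α}
    {x y : α} (h : (connectedComponentIn U x ∩ connectedComponentIn U y).Nonempty) :
    connectedComponentIn U x = connectedComponentIn U y := by
  obtain ⟨z, hzx, hzy⟩ := h
  exact (connectedComponentIn_eq hzx).trans (connectedComponentIn_eq hzy).symm

theorem connectedComponents_mk_eq_of_connectedComponentIn_eq {α : Type*} [TopologicalSpace α]
    {U : Set α} {x y : U} (h : connectedComponentIn U (x : α) = connectedComponentIn U (y : α)) :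
    (x : ConnectedComponents U) = y := by
  rw [connectedComponentIn_eq_image x.2, connectedComponentIn_eq_image y.2] at h
  exact ConnectedComponents.coe_eq_coe.2 (Subtype.val_injective.image_injective h)

theorem closure_connectedComponentIn_inter_compl_nonempty {α : Type*} [TopologicalSpace α]
    [LocallyConnectedSpace α] [PreconnectedSpace α] {U : Set α} {x : α} (hU : IsOpen U)
    (hUne : U ≠ univ) (hx : x ∈ U) : (closure (connectedComponentIn U x) ∩ Uᶜ).Nonempty := by
  by_contra! hempty
  have hsub : closure (connectedComponentIn U x) ⊆ U :=
    disjoint_compl_right_iff_subset.1 (disjoint_iff_inter_eq_empty.2 hempty)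
  have hclosed : IsClosed (connectedComponentIn U x) := isClosed_of_closure_subset <|
    isPreconnected_connectedComponentIn.closure.subset_connectedComponentIn
      (subset_closure (mem_connectedComponentIn hx)) hsub
  have huniv := IsClopen.eq_univ ⟨hclosed, hU.connectedComponentIn⟩ ⟨x, mem_connectedComponentIn hx⟩
  exact hUne (univ_subset_iff.1 (huniv ▸ connectedComponentIn_subset U x))

/- The ray from a point outside `Q` that leads away from a point of `Q` never enters `Q`. It
therefore stays in the component, and `f` cannot decrease along it. -/
theorem le_of_mem_of_notMem_of_bddBelow {E : Type*} [AddCommGroup E] [Module ℝ E]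
    [TopologicalSpace E] [ContinuousAdd E] [ContinuousSMul ℝ E] {U Q : Set E} {x : E}
    (hQ : Convex ℝ Q) (hQU : Qᶜ ⊆ U) {f : Dual ℝ E} (hf : BddBelow (f '' connectedComponentIn U x))
    {q z : E} (hq : q ∈ Q) (hz : z ∈ connectedComponentIn U x) (hzQ : z ∉ Q) : f q ≤ f z := by
  let ray : Set E := (fun t : ℝ ↦ z + t • (z - q)) '' Ici 0
  have hray : ray ⊆ Qᶜ := by
    rintro _ ⟨t, ht, rfl⟩ hmem
    rw [mem_Ici] at ht
    refine hzQ ?_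
    convert hQ hmem hq (a := 1 / (1 + t)) (b := t / (1 + t)) (by positivity) (by positivity)
      (by field_simp) using 1
    match_scalars <;> grind
  have hpre : IsPreconnected ray := (convex_Ici 0).isPreconnected.image _ (by fun_prop)
  have hrayC : ray ⊆ connectedComponentIn U x :=
    subset_connectedComponentIn_of_inter_nonempty hpre (hray.trans hQU) ⟨z, ⟨0, by simp⟩, hz⟩
  obtain ⟨m, hm⟩ := hf
  have hslope : 0 ≤ f (z - q) := nonneg_of_forall_le_add_mul (m := m) (a := f z) fun t ht ↦ by
    have := hm ⟨_, hrayC ⟨t, ht, rfl⟩, rfl⟩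
    simpa using this
  rwa [map_sub, sub_nonneg] at hslope

variable {E : Type*} [NormedAddCommGroup E] [NormedSpace ℝ E] [FiniteDimensional ℝ E] {U : Set E}
  {x y : E}

theorem connectedComponentIn_eq_of_not_bddBelow (hbdd : Bornology.IsBounded Uᶜ) (f : Dual ℝ E)
    (hx : ¬ BddBelow (f '' connectedComponentIn U x))
    (hy : ¬ BddBelow (f '' connectedComponentIn U y)) :
    connectedComponentIn U x = connectedComponentIn U y := by
  have := FiniteDimensional.proper_real E
  have hf : Continuous f := f.continuous_of_finiteDimensional
  obtain ⟨m, hm⟩ := hbdd.isCompact_closure.bddBelow_image hf.continuousOn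
  have hsub : {z | f z < m} ⊆ U := fun z hz ↦ by
    by_contra hzU
    exact (hm ⟨z, subset_closure hzU, rfl⟩).not_gt hz
  have hpre : IsPreconnected {z | f z < m} := (convex_halfSpace_lt f.isLinear m).isPreconnected
  have meets {z : E} (hz : ¬ BddBelow (f '' connectedComponentIn U z)) :
      ({z | f z < m} ∩ connectedComponentIn U z).Nonempty := by
    obtain ⟨_, ⟨w, hw, rfl⟩, hwm⟩ := not_bddBelow_iff.1 hz m
    exact ⟨w, hwm, hw⟩
  obtain ⟨w, hwm, hw⟩ := meets hx
  exact connectedComponentIn_eq_of_inter_nonempty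
    ⟨w, hw, subset_connectedComponentIn_of_inter_nonempty hpre hsub (meets hy) hwm⟩

theorem exists_isMinOn_mem_closure_connectedComponentIn (hU : IsOpen U)
    (hbdd : Bornology.IsBounded Uᶜ) (hx : x ∈ U) {f : Dual ℝ E}
    (hf : BddBelow (f '' connectedComponentIn U x)) :
    ∃ v ∈ closure (connectedComponentIn U x), IsMinOn f (connectedComponentIn U x) v := by
  have := FiniteDimensional.proper_real E
  set C := connectedComponentIn U x
  obtain ⟨r, hr, hball⟩ := hbdd.subset_closedBall_lt 0 0
  have hQU : (Metric.closedBall (0 : E) r)ᶜ ⊆ U := compl_subset_comm.1 hball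
  have hne : (closure C ∩ Metric.closedBall 0 r).Nonempty := by
    by_cases hUne : U = univ
    · refine ⟨0, subset_closure ?_, Metric.mem_closedBall_self hr.le⟩
      simp [C, hUne, connectedComponentIn_univ, PreconnectedSpace.connectedComponent_eq_univ]
    · exact (closure_connectedComponentIn_inter_compl_nonempty hU hUne hx).mono
        (inter_subset_inter_right _ hball)
  obtain ⟨v, ⟨hvC, hvQ⟩, hv⟩ := ((isCompact_closedBall (0 : E) r).inter_left
    (isClosed_closure (s := C))).exists_isMinOn hne
      f.continuous_of_finiteDimensional.continuousOn
  refine ⟨v, hvC, fun z hz ↦ ?_⟩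
  by_cases hzQ : z ∈ Metric.closedBall 0 r
  · exact hv ⟨subset_closure hz, hzQ⟩
  · exact le_of_mem_of_notMem_of_bddBelow (convex_closedBall 0 r) hQU hf hvQ hz hzQ

end Components

/-- A family of convex polyhedra indexed by `ι`, the `i`-th one being cut out by the
inequalities `normal ⟨i, k⟩ x ≤ bound ⟨i, k⟩` with `k : κ i`. Each convex body is approximated from
outside by one of these. The inequalities are indexed jointly by a sigma type, because general
position is a condition on all of them at once. -/
structure PolyhedralFamily (ι : Type*) (κ : ι → Type*) (V : Type*) [AddCommGroup V]
    [Module ℝ V] where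
  normal : (Σ i, κ i) → Dual ℝ V
  bound : (Σ i, κ i) → ℝ

namespace PolyhedralFamily

section Algebraic

variable {ι V : Type*} {κ : ι → Type*} [AddCommGroup V] [Module ℝ V]
  (P : PolyhedralFamily ι κ V)

/-- The `i`-th member of the family. -/
def polyhedron (i : ι) : Set V := {x | ∀ k, P.normal ⟨i, k⟩ x ≤ P.bound ⟨i, k⟩}

/-- The set whose components are the holes of the family. -/
def complement : Set V := (⋃ i, P.polyhedron i)ᶜ

/-- The convex part of the complement where the inequality `k i` is violated for every `i`. The
complement is the union of these parts. -/
def piece (k : ∀ i, κ i) : Set V := {x | ∀ i, P.bound ⟨i, k i⟩ < P.normal ⟨i, k i⟩ x}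

/-- General position: the normals of the inequalities that are tight at any given point are linearly
independent. -/
def IsSimple : Prop := ∀ v, LinearIndepOn ℝ P.normal {s | P.normal s v = P.bound s}

/-- The indices of the polyhedra through a point. These are the labels used to count holes. -/
noncomputable def containing [Finite ι] (v : V) : Finset ι :=
  (toFinite {i | v ∈ P.polyhedron i}).toFinset

/-- The inequalities `k` separate `v` from the polyhedra: they all fail or are tight at `v`, and
fail for the polyhedra that do not contain `v`. -/
structure IsSeparating (k : ∀ i, κ i) (v : V) : Prop where
  bound_le (i : ι) : P.bound ⟨i, k i⟩ ≤ P.normal ⟨i, k i⟩ v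
  bound_lt (i : ι) : v ∉ P.polyhedron i → P.bound ⟨i, k i⟩ < P.normal ⟨i, k i⟩ v

/-- `v` is a lowest point, with respect to `f`, of the closure of the piece of `k`. Membership in
the closure is encoded algebraically by `IsSeparating` together with the piece being nonempty. -/
structure IsLowestPoint (f : Dual ℝ V) (k : ∀ i, κ i) (v : V) : Prop
    extends P.IsSeparating k v where
  nonempty : (P.piece k).Nonempty
  isMinOn : IsMinOn f (P.piece k) v

variable {P} {k k' : ∀ i, κ i} {v v' : V} {f : Dual ℝ V}

theorem mem_complement_iff {x : V} :
    x ∈ P.complement ↔ ∀ i, ∃ k, P.bound ⟨i, k⟩ < P.normal ⟨i, k⟩ x := by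
  simp [complement, polyhedron]

theorem piece_subset_complement (k : ∀ i, κ i) : P.piece k ⊆ P.complement := fun _ hx ↦
  mem_complement_iff.2 fun i ↦ ⟨k i, hx i⟩

theorem convex_piece (k : ∀ i, κ i) : Convex ℝ (P.piece k) := by
  simp only [piece, ofPred_forall]
  exact convex_iInter fun i ↦ convex_halfSpace_gt (P.normal ⟨i, k i⟩).isLinear _

theorem mem_containing [Finite ι] {i : ι} : i ∈ P.containing v ↔ v ∈ P.polyhedron i := by
  simp [containing]

theorem IsSeparating.eq_bound (h : P.IsSeparating k v) {i : ι} (hv : v ∈ P.polyhedron i) :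
    P.normal ⟨i, k i⟩ v = P.bound ⟨i, k i⟩ :=
  (hv (k i)).antisymm (h.bound_le i)

theorem IsSeparating.eventually_add_smul_mem_piece [Finite ι] (h : P.IsSeparating k v) {q : V}
    (hq : ∀ i, v ∈ P.polyhedron i → 0 < P.normal ⟨i, k i⟩ q) :
    ∀ᶠ t in 𝓝[>] (0 : ℝ), v + t • q ∈ P.piece k := by
  refine eventually_all.2 fun i ↦ ?_
  simp only [map_add, map_smul, smul_eq_mul]
  by_cases hv : v ∈ P.polyhedron i
  · filter_upwards [self_mem_nhdsWithin] with t ht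
    exact lt_add_of_le_of_pos (h.bound_le i) (mul_pos ht (hq i hv))
  · have hlim : Tendsto (fun t ↦ P.normal ⟨i, k i⟩ v + t * P.normal ⟨i, k i⟩ q) (𝓝[>] 0)
        (𝓝 (P.normal ⟨i, k i⟩ v)) :=
      (Continuous.tendsto' (by fun_prop) 0 _ (by simp)).mono_left nhdsWithin_le_nhds
    exact hlim.eventually_const_lt (h.bound_lt i hv)

namespace IsLowestPoint

variable [Finite ι]

theorem exists_pos_on_containing (h : P.IsLowestPoint f k v) :
    ∃ q, ∀ i ∈ P.containing v, 0 < P.normal ⟨i, k i⟩ q := by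
  obtain ⟨p, hp⟩ := h.nonempty
  refine ⟨p - v, fun i hi ↦ ?_⟩
  rw [map_sub, sub_pos, h.eq_bound (mem_containing.1 hi)]
  exact hp i

theorem nonneg_of_pos_on_containing (h : P.IsLowestPoint f k v) {x : V}
    (hx : ∀ i ∈ P.containing v, 0 < P.normal ⟨i, k i⟩ x) : 0 ≤ f x := by
  obtain ⟨t, hpiece, ht⟩ := ((h.eventually_add_smul_mem_piece fun i hi ↦
    hx i (mem_containing.2 hi)).and self_mem_nhdsWithin).exists
  have hle : f v ≤ f (v + t • x) := h.isMinOn hpiece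
  rw [map_add, map_smul, smul_eq_mul, le_add_iff_nonneg_right] at hle
  exact nonneg_of_mul_nonneg_right hle ht

theorem nonneg_of_nonneg_on_containing (h : P.IsLowestPoint f k v) {x : V}
    (hx : ∀ i ∈ P.containing v, 0 ≤ P.normal ⟨i, k i⟩ x) : 0 ≤ f x := by
  obtain ⟨q, hq⟩ := h.exists_pos_on_containing
  exact nonneg_on_closed_cone_of_nonneg_on_open_cone (b := fun i ↦ P.normal ⟨i, k i⟩)
    (A := P.containing v) hq (fun _ ↦ h.nonneg_of_pos_on_containing) hx

theorem span_eq_top (h : P.IsLowestPoint f k v) (hf : IsGenericFor ℝ P.normal f) :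
    Submodule.span ℝ ((fun i ↦ P.normal ⟨i, k i⟩) '' P.containing v) = ⊤ :=
  hf.comp (fun i ↦ ⟨i, k i⟩) _ <| mem_span_of_nonneg_on_cone (P.containing v).finite_toSet
    fun _ ↦ h.nonneg_of_nonneg_on_containing

theorem linearIndepOn_containing (h : P.IsLowestPoint f k v) (hP : P.IsSimple) :
    LinearIndepOn ℝ (fun i ↦ P.normal ⟨i, k i⟩) (P.containing v : Set ι) := by
  have htight : (fun i ↦ (⟨i, k i⟩ : Σ i, κ i)) '' P.containing v ⊆
      {s | P.normal s v = P.bound s} := by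
    rintro _ ⟨i, hi, rfl⟩
    exact h.eq_bound (mem_containing.1 hi)
  exact ((hP v).mono htight).comp_of_image fun i _ j _ hij ↦ congrArg Sigma.fst hij

theorem card_containing (h : P.IsLowestPoint f k v) (hP : P.IsSimple)
    (hf : IsGenericFor ℝ P.normal f) : (P.containing v).card = finrank ℝ V := by
  rw [card_eq_finrank_of_linearIndepOn_of_span_eq_top (h.linearIndepOn_containing hP)
    (h.span_eq_top hf), Subspace.dual_finrank_eq]

theorem eq_of_le_of_forall_mem_polyhedron (h : P.IsLowestPoint f k v) (hP : P.IsSimple)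
    (hf : IsGenericFor ℝ P.normal f) {y : V} (hy : ∀ i ∈ P.containing v, y ∈ P.polyhedron i)
    (hle : f v ≤ f y) : y = v := by
  obtain ⟨l, hl, rfl⟩ := exists_pos_coeff_of_nonneg_on_cone (T := P.containing v)
    (fun _ ↦ h.nonneg_of_nonneg_on_containing) fun i hi ↦
      (hf.comp fun i ↦ ⟨i, k i⟩).notMem_span_sdiff_singleton (h.linearIndepOn_containing hP) hi
  exact eq_of_forall_le_of_sum_le (h.span_eq_top hf) hl
    (fun i hi ↦ (hy i hi (k i)).trans (h.bound_le i)) hle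

theorem eq_of_normal_eq_bound (h : P.IsLowestPoint f k v) (hP : P.IsSimple)
    (hf : IsGenericFor ℝ P.normal f) {i : ι} {l : κ i} (hl : P.normal ⟨i, l⟩ v = P.bound ⟨i, l⟩) :
    l = k i := by
  let chosen : Set (Σ i, κ i) := (fun i ↦ ⟨i, k i⟩) '' (P.containing v : Set ι)
  have hchosen : chosen ⊆ {s | P.normal s v = P.bound s} := by
    rintro _ ⟨i, hi, rfl⟩
    exact h.eq_bound (mem_containing.1 hi)
  have hspan : Submodule.span ℝ (P.normal '' chosen) = ⊤ := by
    rw [← image_comp]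
    exact h.span_eq_top hf
  obtain ⟨j, -, hj⟩ := mem_of_linearIndepOn_of_span_eq_top (hP v) hchosen hspan hl
  cases hj
  rfl

theorem piece_inter_piece_nonempty_of_same_point (h : P.IsLowestPoint f k v)
    (h' : P.IsLowestPoint f k' v) (hP : P.IsSimple) (hf : IsGenericFor ℝ P.normal f) :
    (P.piece k ∩ P.piece k').Nonempty := by
  obtain ⟨q, hq⟩ := h.exists_pos_on_containing
  have hk' : ∀ i, v ∈ P.polyhedron i → k' i = k i := fun i hi ↦
    h.eq_of_normal_eq_bound hP hf (h'.eq_bound hi)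
  have hpos : ∀ i, v ∈ P.polyhedron i → 0 < P.normal ⟨i, k i⟩ q := fun i hi ↦
    hq i (mem_containing.2 hi)
  have hpos' : ∀ i, v ∈ P.polyhedron i → 0 < P.normal ⟨i, k' i⟩ q := fun i hi ↦
    hk' i hi ▸ hpos i hi
  obtain ⟨t, ht⟩ := ((h.eventually_add_smul_mem_piece hpos).and
    (h'.eventually_add_smul_mem_piece hpos')).exists
  exact ⟨_, ht⟩

theorem eq_of_containing_eq (h : P.IsLowestPoint f k v) (h' : P.IsLowestPoint f k' v')
    (hP : P.IsSimple) (hf : IsGenericFor ℝ P.normal f)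
    (hcontaining : P.containing v = P.containing v') : v = v' := by
  rcases le_total (f v) (f v') with hle | hle
  · exact (h.eq_of_le_of_forall_mem_polyhedron hP hf
      (fun i hi ↦ mem_containing.1 (hcontaining ▸ hi)) hle).symm
  · exact h'.eq_of_le_of_forall_mem_polyhedron hP hf
      (fun i hi ↦ mem_containing.1 (hcontaining.symm ▸ hi)) hle

theorem piece_inter_piece_nonempty (h : P.IsLowestPoint f k v) (h' : P.IsLowestPoint f k' v')
    (hP : P.IsSimple) (hf : IsGenericFor ℝ P.normal f)
    (hcontaining : P.containing v = P.containing v') : (P.piece k ∩ P.piece k').Nonempty := by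
  obtain rfl := h.eq_of_containing_eq h' hP hf hcontaining
  exact h.piece_inter_piece_nonempty_of_same_point h' hP hf

end IsLowestPoint

end Algebraic

section Holes

variable {ι E : Type*} {κ : ι → Type*} [NormedAddCommGroup E] [NormedSpace ℝ E]
  [FiniteDimensional ℝ E] {P : PolyhedralFamily ι κ E} {f : Dual ℝ E}

theorem exists_isSeparating_of_mem_closure [Finite ι] [∀ i, Finite (κ i)] {C : Set E}
    (hC : C ⊆ P.complement) {v : E} (hv : v ∈ closure C) :
    ∃ k, P.IsSeparating k v ∧ (C ∩ P.piece k).Nonempty := by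
  have hnear : ∀ᶠ p in 𝓝 v, ∀ s, (P.bound s < P.normal s v → P.bound s < P.normal s p) ∧
      (P.normal s v < P.bound s → P.normal s p < P.bound s) := by
    refine eventually_all.2 fun s ↦ ?_
    have hs := (P.normal s).continuous_of_finiteDimensional.tendsto v
    exact (eventually_imp_distrib_left.2 hs.eventually_const_lt).and
      (eventually_imp_distrib_left.2 hs.eventually_lt_const)
  obtain ⟨p, hp, hpC⟩ := mem_closure_iff_nhds.1 hv _ hnear
  have hchoice (i : ι) : ∃ l, P.bound ⟨i, l⟩ ≤ P.normal ⟨i, l⟩ v ∧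
      (v ∉ P.polyhedron i → P.bound ⟨i, l⟩ < P.normal ⟨i, l⟩ v) ∧
      P.bound ⟨i, l⟩ < P.normal ⟨i, l⟩ p := by
    by_cases hvi : v ∈ P.polyhedron i
    · obtain ⟨l, hl⟩ := mem_complement_iff.1 (hC hpC) i
      exact ⟨l, not_lt.1 fun hlt ↦ hl.not_gt ((hp _).2 hlt), fun h ↦ absurd hvi h, hl⟩
    · obtain ⟨l, hl⟩ : ∃ l, P.bound ⟨i, l⟩ < P.normal ⟨i, l⟩ v := by
        simpa [polyhedron] using hvi
      exact ⟨l, hl.le, fun _ ↦ hl, (hp _).1 hl⟩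
  choose k hle hlt hpk using hchoice
  exact ⟨k, ⟨hle, hlt⟩, p, hpC, hpk⟩

theorem isOpen_complement [Finite ι] [∀ i, Finite (κ i)] : IsOpen P.complement := by
  refine (isClosed_iUnion_of_finite fun i ↦ ?_).isOpen_compl
  simp only [polyhedron, ofPred_forall]
  exact isClosed_iInter fun k ↦
    isClosed_le (P.normal ⟨i, k⟩).continuous_of_finiteDimensional continuous_const

theorem exists_isLowestPoint [Finite ι] [∀ i, Finite (κ i)]
    (hbdd : Bornology.IsBounded (⋃ i, P.polyhedron i)) {x : E} (hx : x ∈ P.complement)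
    (hf : BddBelow (f '' connectedComponentIn P.complement x)) :
    ∃ v k, P.piece k ⊆ connectedComponentIn P.complement x ∧ P.IsLowestPoint f k v := by
  obtain ⟨v, hvC, hmin⟩ := exists_isMinOn_mem_closure_connectedComponentIn isOpen_complement
    (by rwa [complement, compl_compl]) hx hf
  obtain ⟨k, hk, hne⟩ :=
    exists_isSeparating_of_mem_closure (connectedComponentIn_subset P.complement x) hvC
  have hsub : P.piece k ⊆ connectedComponentIn P.complement x :=
    subset_connectedComponentIn_of_inter_nonempty (convex_piece k).isPreconnected
      (piece_subset_complement k) (inter_comm _ _ ▸ hne)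
  exact ⟨v, k, hsub,
    { hk with nonempty := hne.mono inter_subset_right, isMinOn := hmin.on_subset hsub }⟩

theorem mk_connectedComponents_complement_le [Finite ι] [∀ i, Finite (κ i)] (hP : P.IsSimple)
    (hbdd : Bornology.IsBounded (⋃ i, P.polyhedron i)) :
    #(ConnectedComponents P.complement) ≤ ((Nat.card ι).choose (finrank ℝ E) + 1 : ℕ) := by
  obtain ⟨f, hf⟩ := exists_isGenericFor (k := ℝ) P.normal
  choose point hpoint using ConnectedComponents.surjective_coe (α := P.complement)
  let hole (c : ConnectedComponents P.complement) : Set E :=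
    connectedComponentIn P.complement (point c : E)
  have hole_injective {c c'} (h : hole c = hole c') : c = c' := by
    rw [← hpoint c, ← hpoint c', connectedComponents_mk_eq_of_connectedComponentIn_eq h]
  let bounded : Set (ConnectedComponents P.complement) := {c | BddBelow (f '' hole c)}
  have hunbounded : #(boundedᶜ : Set _) ≤ 1 :=
    Cardinal.mk_le_one_iff_set_subsingleton.2 fun c hc c' hc' ↦ hole_injective <|
      connectedComponentIn_eq_of_not_bddBelow (by rwa [complement, compl_compl]) f hc hc'
  have hbounded : #bounded ≤ (Nat.card ι).choose (finrank ℝ E) := by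
    choose v k hk hv using fun c : bounded ↦ exists_isLowestPoint hbdd (point c.1).2 c.2
    let label (c : bounded) : {I : Finset ι // I.card = finrank ℝ E} :=
      ⟨P.containing (v c), (hv c).card_containing hP hf⟩
    have hlabel : Function.Injective label := fun c c' h ↦ Subtype.ext <| hole_injective <|
      connectedComponentIn_eq_of_inter_nonempty <|
        ((hv c).piece_inter_piece_nonempty (hv c') hP hf (Subtype.ext_iff.1 h)).mono
          (inter_subset_inter (hk c) (hk c'))
    have := Fintype.ofFinite ι
    simpa using Cardinal.lift_mk_le_lift_mk_of_injective hlabel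
  calc #(ConnectedComponents P.complement) = #bounded + #(boundedᶜ : Set _) :=
        (Cardinal.mk_sum_compl bounded).symm
    _ ≤ _ := by
      push_cast
      exact add_le_add hbounded hunbounded

end Holes

end PolyhedralFamily

section OuterApproximation

universe u

variable {ι : Type*} {E : Type u} [NormedAddCommGroup E] [NormedSpace ℝ E] [FiniteDimensional ℝ E]

variable (E) in
theorem exists_dual_forall_isBounded_setOf_forall_le :
    ∃ g : Fin (finrank ℝ E) ⊕ Fin (finrank ℝ E) → Dual ℝ E,
      ∀ R : _ → ℝ, Bornology.IsBounded {x | ∀ j, g j x ≤ R j} := by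
  let e := (finBasis ℝ E).equivFunL
  refine ⟨Sum.elim (finBasis ℝ E).coord fun j ↦ -(finBasis ℝ E).coord j, fun R ↦ ?_⟩
  refine (e.antilipschitz.isBounded_preimage (Metric.isBounded_Icc (-(R ∘ Sum.inr))
    (R ∘ Sum.inl))).subset fun x hx ↦ ⟨fun j ↦ ?_, fun j ↦ ?_⟩
  · exact neg_le.1 (hx (.inr j))
  · exact hx (.inl j)

theorem exists_separating_and_bounding_inequalities {B : Type*} {g : B → Dual ℝ E}
    (hg : ∀ R : B → ℝ, Bornology.IsBounded {x | ∀ j, g j x ≤ R j}) {X F : Set E}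
    (hcomp : IsCompact X) (hconv : Convex ℝ X) (hFX : Disjoint F X) :
    ∃ (b : F ⊕ B → Dual ℝ E) (lo hi : F ⊕ B → ℝ), (∀ s, lo s < hi s) ∧
      (∀ x ∈ X, ∀ s, b s x ≤ lo s) ∧ (∀ x ∈ F, ∃ s, hi s ≤ b s x) ∧
      Bornology.IsBounded {x | ∀ s, b s x ≤ hi s} := by
  choose f u hfX hfF using fun x : F ↦
    geometric_hahn_banach_closed_point hconv hcomp.isClosed (disjoint_left.1 hFX x.2)
  choose R hR using fun j ↦
    hcomp.bddAbove_image (g j).continuous_of_finiteDimensional.continuousOn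
  refine ⟨Sum.elim (fun x ↦ f x) g, Sum.elim u R, Sum.elim (fun x ↦ f x x) fun j ↦ R j + 1,
    ?_, ?_, fun x hx ↦ ⟨.inl ⟨x, hx⟩, le_rfl⟩, (hg fun j ↦ R j + 1).subset fun x hx j ↦ hx (.inr j)⟩
  · rintro (x | j)
    exacts [hfF x, lt_add_one (R j)]
  · rintro x hx (y | j)
    exacts [(hfX y x hx).le, hR j (mem_image_of_mem _ hx)]

theorem exists_isSimple_polyhedralFamily [Finite ι] {X : ι → Set E}
    (hcomp : ∀ i, IsCompact (X i)) (hconv : ∀ i, Convex ℝ (X i)) {F : Set E} (hF : F.Finite)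
    (hFX : F ⊆ (⋃ i, X i)ᶜ) :
    ∃ (κ : Type u) (_ : Finite κ) (P : PolyhedralFamily ι (fun _ ↦ κ) E), P.IsSimple ∧
      Bornology.IsBounded (⋃ i, P.polyhedron i) ∧ (∀ i, X i ⊆ P.polyhedron i) ∧
      F ⊆ P.complement := by
  obtain ⟨g, hg⟩ := exists_dual_forall_isBounded_setOf_forall_le E
  choose b lo hi hlt hX hF' hbdd using fun i ↦
    exists_separating_and_bounding_inequalities hg (hcomp i) (hconv i)
      ((subset_compl_iff_disjoint_right.1 hFX).mono_right (subset_iUnion X i))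
  have := hF.to_subtype
  obtain ⟨c, hc, hsimple⟩ := exists_mem_Ioo_forall_linearIndepOn
    (fun s : Σ _ : ι, _ ↦ b s.1 s.2) fun s ↦ hlt s.1 s.2
  refine ⟨_, inferInstance, ⟨fun s ↦ b s.1 s.2, c⟩, hsimple, ?_, fun i x hx k ↦ ?_, fun x hx ↦ ?_⟩
  · exact Bornology.isBounded_iUnion.2 fun i ↦
      (hbdd i).subset fun x hx k ↦ (hx k).trans (hc ⟨i, k⟩).2.le
  · exact (hX i x hx k).trans (hc ⟨i, k⟩).1.le
  · refine PolyhedralFamily.mem_complement_iff.2 fun i ↦ ?_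
    obtain ⟨k, hk⟩ := hF' i x hx
    exact ⟨k, (hc ⟨i, k⟩).2.trans_le hk⟩

theorem holes_upper_bound_general [Finite ι] (X : ι → Set E) (hcomp : ∀ i, IsCompact (X i))
    (hconv : ∀ i, Convex ℝ (X i)) :
    #(ConnectedComponents ↥((⋃ i, X i)ᶜ)) ≤ ((Nat.card ι).choose (finrank ℝ E) + 1 : ℕ) := by
  refine Cardinal.card_le_of fun s ↦ ?_
  choose point hpoint using ConnectedComponents.surjective_coe (α := ↥((⋃ i, X i)ᶜ))
  have hF : ((fun c ↦ (point c : E)) '' (s : Set _)).Finite := s.finite_toSet.image _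
  obtain ⟨κ, _, P, hP, hbdd, hXP, hFP⟩ := exists_isSimple_polyhedralFamily hcomp hconv hF
    (image_subset_iff.2 fun c _ ↦ (point c).2)
  have hsub : P.complement ⊆ (⋃ i, X i)ᶜ := compl_subset_compl.2 (iUnion_mono hXP)
  let π := (continuous_inclusion hsub).connectedComponentsMap
  have hs : (s : Set _) ⊆ range π := fun c hc ↦
    ⟨(⟨point c, hFP (mem_image_of_mem _ hc)⟩ : P.complement), hpoint c⟩
  rw [← Nat.cast_le (α := Cardinal.{u})]
  calc (s.card : Cardinal) = #(s : Set _) := by simp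
    _ ≤ #(range π) := Cardinal.mk_le_mk_of_subset hs
    _ ≤ #(ConnectedComponents P.complement) := Cardinal.mk_range_le
    _ ≤ _ := P.mk_connectedComponents_complement_le hP hbdd

end OuterApproximation

/-- **Kovalev's upper bound (compact convex version).** The union of `n` compact
convex sets in `ℝ^d` has at most `C(n,d) + 1` holes, i.e. the complement of the
union has at most `n choose d` plus one connected components. -/
theorem holes_upper_bound (d n : ℕ) (hd : 1 ≤ d) (hn : 1 ≤ n)
    (X : Fin n → Set (Fin d → ℝ))
    (hcomp : ∀ i, IsCompact (X i)) (hconv : ∀ i, Convex ℝ (X i)) :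
    Cardinal.mk (ConnectedComponents ↥((⋃ i, X i)ᶜ)) ≤ (n.choose d + 1 : ℕ) := by
  simpa only [Nat.card_fin, finrank_fin_fun] using holes_upper_bound_general X hcomp hconv
end

section
/- There exists a compact convex body K ⊆ ℝ³ such that for every positive integer m there is a finite set P ⊆ ℝ³ of 3m points for which the free space {t ∈ ℝ³ : (t + K) ∩ P = ∅} has at least m³ − m + 1 connected components. -/
open Pointwise

/-!
For `B = -K`, a translation vector `t` is forbidden when some `t - p` lies in `B`, so every obstacle
`p` blocks a translate of `B`. The top of `B` is curved as `y = -x ^ 2`. Near the point of its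
bottom over `x = 1 / m` there is a patch made of `m ^ 2` affine pieces with small kinks. The patches
for different `m` do not interfere, hence one body serves all `m`.

In coordinates `(X, Y, Z)` adapted to the `m`-th patch, the first `m` obstacles block everything
below a floor, whose upper boundary follows the tangent lines to `Y = X ^ 2` at `0, …, m - 1`. The
next `m` obstacles block everything above copies of the patch, shifted in the third direction; the
slopes of the patch in that direction differ, so that each copy exhibits the kinks of one index `j`.
The `j`-th ceiling meets the floor at the kinks `X = i + j / (4 * m)`, but between any two
consecutive kinks there is a gap above the floor and below all ceilings, so these `m ^ 2` walls
enclose `m ^ 2 - 1` intervals of `X`. The last `m` obstacles block the planes `Z = k` with the thin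
ridge of `B`, which cuts every interval into `m` bounded cells. Together with the points far away
this gives `(m ^ 2 - 1) * m + 1` components.
-/

namespace FreeSpace

open Set Function Cardinal

universe u

lemma option_le_mk_connectedComponents {X ι : Type u} [TopologicalSpace X] {V : ι → Set X}
    (hV : ∀ i, IsClopen (V i)) (hdisj : Pairwise (Disjoint on V)) (hne : ∀ i, (V i).Nonempty)
    (hcompl : (⋃ i, V i)ᶜ.Nonempty) :
    #(Option ι) ≤ #(ConnectedComponents X) := by
  choose x hx using hne
  obtain ⟨x₀, hx₀⟩ := hcompl
  simp only [mem_compl_iff, mem_iUnion, not_exists] at hx₀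
  have mem_of_coe_eq {i : ι} {y z : X} (h : (y : ConnectedComponents X) = z) (hy : y ∈ V i) :
      z ∈ V i :=
    (hV i).connectedComponent_subset hy <|
      ConnectedComponents.coe_eq_coe.1 h ▸ mem_connectedComponent
  refine mk_le_of_injective (f := fun o : Option ι ↦
    o.elim (x₀ : ConnectedComponents X) fun i ↦ (x i : ConnectedComponents X)) ?_
  rintro (_ | i) (_ | j) h
  · rfl
  · exact absurd (mem_of_coe_eq h.symm (hx j)) (hx₀ j)
  · exact absurd (mem_of_coe_eq h (hx i)) (hx₀ i)
  · exact congrArg some (hdisj.eq (not_disjoint_iff.2 ⟨x j, mem_of_coe_eq h (hx i), hx j⟩))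

lemma option_le_mk_connectedComponents_of_frontier {X ι : Type u} [TopologicalSpace X]
    {F : Set X} {U : ι → Set X} (hU : ∀ i, IsOpen (U i))
    (hfrontier : ∀ i, Disjoint (frontier (U i)) F) (hdisj : Pairwise (Disjoint on U))
    (hne : ∀ i, (F ∩ U i).Nonempty) (hcompl : (F \ ⋃ i, U i).Nonempty) :
    #(Option ι) ≤ #(ConnectedComponents F) := by
  refine option_le_mk_connectedComponents (V := fun i ↦ ((↑) : F → X) ⁻¹' U i)
    (fun i ↦ isClopen_preimage_val (hU i) (hfrontier i)) (fun i j hij ↦ (hdisj hij).preimage _)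
    (fun i ↦ ?_) ?_
  · obtain ⟨x, hxF, hxU⟩ := hne i
    exact ⟨⟨x, hxF⟩, hxU⟩
  · obtain ⟨x, hxF, hxU⟩ := hcompl
    exact ⟨⟨x, hxF⟩, by simpa using hxU⟩

/-- The free space for translating `K` among the obstacles `P`. -/
def freeSpace {E : Type*} [Add E] (K P : Set E) : Set E := {t | (t +ᵥ K) ∩ P = ∅}

lemma mem_freeSpace_neg {E : Type*} [AddCommGroup E] {B P : Set E} {t : E} :
    t ∈ freeSpace (-B) P ↔ ∀ p ∈ P, t - p ∉ B := by
  have mem_vadd_neg (p : E) : p ∈ t +ᵥ -B ↔ t - p ∈ B := by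
    rw [mem_vadd_set_iff_neg_vadd_mem, Set.mem_neg, vadd_eq_add, neg_add_rev, neg_neg,
      neg_add_eq_sub]
  simp only [freeSpace, mem_ofPred_eq, eq_empty_iff_forall_notMem, mem_inter_iff, mem_vadd_neg,
    not_and']

/-- The tangent line at `a` to the parabola `y = x ^ 2`. -/
def tangent (a x : ℝ) : ℝ := 2 * a * x - a ^ 2

lemma tangent_eq_sq_sub (a x : ℝ) : tangent a x = x ^ 2 - (x - a) ^ 2 := by
  unfold tangent; ring

lemma tangent_le_two_mul_abs {a : ℝ} (ha : 0 ≤ a) (x : ℝ) : tangent a x ≤ 2 * a * |x| :=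
  calc tangent a x ≤ 2 * a * x := sub_le_self _ (sq_nonneg a)
    _ ≤ 2 * a * |x| := by gcongr; exact le_abs_self x

lemma half_abs_le_mul_add {k : ℤ} {θ : ℝ} (h₀ : 0 ≤ θ) (h₁ : θ ≤ 1 / 4) :
    |(k : ℝ)| / 2 ≤ k * (k + 2 * θ) := by
  rcases lt_trichotomy k 0 with hk | rfl | hk
  · have : (k : ℝ) ≤ -1 := by exact_mod_cast Int.le_sub_one_of_lt hk
    rw [abs_of_nonpos (by linarith)]
    nlinarith
  · simp
  · have : (1 : ℝ) ≤ k := by exact_mod_cast hk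
    rw [abs_of_nonneg (by linarith)]
    nlinarith

lemma tangent_add_half_abs_sub_le {i i' : ℕ} {x : ℝ} (h₀ : (i : ℝ) ≤ x) (h₁ : x ≤ i + 1 / 4) :
    tangent i' x + |(i : ℝ) - i'| / 2 ≤ tangent i x := by
  have h := half_abs_le_mul_add (k := (i : ℤ) - i') (sub_nonneg.2 h₀) (sub_le_iff_le_add'.2 h₁)
  push_cast at h
  have : tangent i x - tangent i' x = (i - i') * (i - i' + 2 * (x - i)) := by
    unfold tangent; ring
  linarith

lemma one_le_abs_two_mul_add_one (n : ℤ) : (1 : ℝ) ≤ |2 * (n : ℝ) + 1| := by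
  have : (1 : ℤ) ≤ |2 * n + 1| := Int.one_le_abs (by omega)
  exact_mod_cast this

/-- The horizontal scale of the `m`-th patch. -/
noncomputable def xScale (m : ℕ) : ℝ := 1 / (4096 * (m : ℝ) ^ 8)

/-- The scale of the slopes which the `m`-th patch adds to its central tangent line. -/
noncomputable def slopeScale (m : ℕ) : ℝ := 1 / (256 * (m : ℝ) ^ 6)

/-- The vertical scale of the `m`-th patch. -/
noncomputable def yScale (m : ℕ) : ℝ := xScale m * slopeScale m

/-- The scale of the `m`-th patch in the third direction. -/
noncomputable def zScale (m : ℕ) : ℝ := 4 * m * xScale m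

section Scales

variable {m : ℕ} (hm : 0 < m)

include hm

lemma xScale_pos : 0 < xScale m := by unfold xScale; positivity

lemma slopeScale_pos : 0 < slopeScale m := by unfold slopeScale; positivity

lemma yScale_pos : 0 < yScale m := mul_pos (xScale_pos hm) (slopeScale_pos hm)

lemma zScale_pos : 0 < zScale m := by have := xScale_pos hm; unfold zScale; positivity

lemma slopeScale_eq : slopeScale m = 16 * (m : ℝ) ^ 2 * xScale m := by
  unfold xScale slopeScale; field_simp; norm_num

lemma xScale_mul_pow_le {n : ℕ} (hn : n ≤ 8) : xScale m * (m : ℝ) ^ n ≤ 1 / 4096 := by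
  have : (m : ℝ) ^ n ≤ (m : ℝ) ^ 8 := pow_le_pow_right₀ (by exact_mod_cast hm) hn
  calc xScale m * (m : ℝ) ^ n ≤ xScale m * (m : ℝ) ^ 8 := by have := xScale_pos hm; gcongr
    _ = 1 / 4096 := by unfold xScale; field_simp

lemma yScale_mul_pow_le {n : ℕ} (hn : n ≤ 2) : yScale m * (m : ℝ) ^ n ≤ 1 / 1048576 := by
  have : (m : ℝ) ^ n ≤ (m : ℝ) ^ 14 := pow_le_pow_right₀ (by exact_mod_cast hm) (by omega)
  calc yScale m * (m : ℝ) ^ n ≤ yScale m * (m : ℝ) ^ 14 := by have := yScale_pos hm; gcongr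
    _ = 1 / 1048576 := by unfold yScale xScale slopeScale; field_simp; norm_num

end Scales

/-- The position of the `(i, j)`-th wall between slots, in the scaled coordinates of the `m`-th
patch. -/
noncomputable def kink (m i j : ℕ) : ℝ := i + j / (4 * m)

lemma natCast_le_kink (m i j : ℕ) : (i : ℝ) ≤ kink m i j :=
  le_add_of_nonneg_right (by positivity)

lemma kink_add_one_div_le {m j : ℕ} (i : ℕ) (hj : j < m) :
    kink m i j + 1 / (8 * m) ≤ i + 1 / 4 := by
  have : (0 : ℝ) < m := by exact_mod_cast pos_of_gt hj
  have : (j : ℝ) + 1 ≤ m := by exact_mod_cast hj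
  have : (j : ℝ) / (4 * m) + 1 / (8 * m) ≤ 1 / 4 := by
    field_simp
    linarith
  unfold kink
  linarith

lemma kink_le {m j : ℕ} (i : ℕ) (hj : j < m) : kink m i j ≤ i + 1 / 4 :=
  (le_add_of_nonneg_right (by positivity)).trans (kink_add_one_div_le i hj)

lemma abs_kink_sub_kink_le {m j j' : ℕ} (i i' : ℕ) (hj : j < m) (hj' : j' < m) :
    |kink m i j - kink m i' j'| ≤ |(i : ℝ) - i'| + 1 / 4 := by
  have := kink_le i hj
  have := natCast_le_kink m i j
  have := kink_le i' hj'
  have := natCast_le_kink m i' j'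
  have := neg_abs_le ((i : ℝ) - i')
  have := le_abs_self ((i : ℝ) - i')
  rw [abs_le]
  constructor <;> linarith

lemma one_div_le_abs_kink_add_sub_kink {m : ℕ} (hm : 0 < m) (i j j' : ℕ) :
    1 / (8 * (m : ℝ)) ≤ |kink m i j + 1 / (8 * m) - kink m i j'| := by
  have hdiff : kink m i j + 1 / (8 * m) - kink m i j' =
      (2 * ((j - j' : ℤ) : ℝ) + 1) / (8 * m) := by
    unfold kink; push_cast; field_simp; ring
  rw [hdiff, abs_div, abs_of_pos (by positivity : (0 : ℝ) < 8 * m)]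
  gcongr
  exact one_le_abs_two_mul_add_one _

/-- The function whose epigraphs, over all `m` and all `i, j < m`, carve the lower boundary of the
body. It is a small perturbation of the tangent line at `1 / m`. On the `m`-th patch, where `x` is
within `xScale m * m` of `1 / m`, the summand `tangent i` gives the pieces different slopes, the
absolute value adds a kink at `kink m i j`, and the coordinate `2 * m ^ 4 * z` selects `j`. -/
noncomputable def barrier (m i j : ℕ) (x z : ℝ) : ℝ :=
  tangent (1 / m) x + yScale m * (tangent i ((x - 1 / m) / xScale m)
    + |(x - 1 / m) / xScale m - kink m i j| / 2 + tangent (m + j) (2 * (m : ℝ) ^ 4 * z))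

lemma xScale_mul_tangent_add_abs_add_tangent_le {m i j : ℕ} (hi : i < m) (hj : j < m) {u z : ℝ}
    (hu : |u| ≤ 5) (hz : |z| ≤ 2) :
    xScale m * (tangent i (u / xScale m) + |u / xScale m - kink m i j| / 2
      + tangent (m + j) (2 * (m : ℝ) ^ 4 * z)) ≤ 16 * (m : ℝ) ^ 2 := by
  have hm : 0 < m := pos_of_gt hi
  have hm₁ : (1 : ℝ) ≤ m := by exact_mod_cast hm
  have hi' : (i : ℝ) + 1 ≤ m := by exact_mod_cast hi
  have hj' : (j : ℝ) ≤ m := by exact_mod_cast hj.le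
  have hρ := xScale_pos hm
  have habs : |u / xScale m| = |u| / xScale m := by rw [abs_div, abs_of_pos hρ]
  have tangent_i : xScale m * tangent i (u / xScale m) ≤ 10 * m :=
    calc xScale m * tangent i (u / xScale m)
        ≤ xScale m * (2 * i * (|u| / xScale m)) := by
          gcongr; exact habs ▸ tangent_le_two_mul_abs (by positivity) _
      _ = 2 * i * |u| := by field_simp
      _ ≤ 2 * m * 5 := by gcongr
      _ = 10 * m := by ring
  have kink_ij : xScale m * |u / xScale m - kink m i j| ≤ 6 := by
    have hkink : |kink m i j| ≤ m := by
      rw [abs_of_nonneg (by unfold kink; positivity)]; linarith [kink_le i hj]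
    calc xScale m * |u / xScale m - kink m i j|
        ≤ xScale m * (|u| / xScale m + m) := by
          gcongr; exact (abs_sub _ _).trans (by rw [habs]; gcongr)
      _ = |u| + xScale m * (m : ℝ) ^ 1 := by field_simp
      _ ≤ 6 := by linarith [xScale_mul_pow_le hm (n := 1) (by norm_num)]
  have tangent_j : xScale m * tangent (m + j) (2 * (m : ℝ) ^ 4 * z) ≤ 1 :=
    calc xScale m * tangent (m + j) (2 * (m : ℝ) ^ 4 * z)
        ≤ xScale m * (2 * (m + j) * |2 * (m : ℝ) ^ 4 * z|) := by
          gcongr; exact tangent_le_two_mul_abs (by positivity) _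
      _ ≤ xScale m * (2 * (m + m) * (2 * (m : ℝ) ^ 4 * 2)) := by
          rw [abs_mul, abs_of_nonneg (by positivity : 0 ≤ 2 * (m : ℝ) ^ 4)]; gcongr
      _ = 16 * (xScale m * (m : ℝ) ^ 5) := by ring
      _ ≤ 1 := by linarith [xScale_mul_pow_le hm (n := 5) (by norm_num)]
  nlinarith

lemma barrier_le {m i j : ℕ} (hi : i < m) (hj : j < m) {x z : ℝ} (hx : |x| ≤ 4) (hz : |z| ≤ 2) :
    barrier m i j x z ≤ tangent (1 / m) x + 1 / (16 * (m : ℝ) ^ 4) := by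
  have hm : 0 < m := pos_of_gt hi
  have hu : |x - 1 / m| ≤ 5 := by
    have : |(1 / m : ℝ)| ≤ 1 := by
      rw [abs_of_nonneg (by positivity)]; exact div_le_one_of_le₀ (by exact_mod_cast hm) (by simp)
    linarith [abs_sub x (1 / m)]
  have := xScale_mul_tangent_add_abs_add_tangent_le hi hj hu hz
  have := slopeScale_pos hm
  unfold barrier yScale
  rw [mul_right_comm]
  calc _ ≤ tangent (1 / m) x + 16 * (m : ℝ) ^ 2 * slopeScale m := by gcongr
    _ = tangent (1 / m) x + 1 / (16 * (m : ℝ) ^ 4) := by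
      unfold slopeScale; congr 1; field_simp; norm_num

lemma barrier_le_sq_add_one {m i j : ℕ} (hi : i < m) (hj : j < m) {x z : ℝ} (hx : |x| ≤ 4)
    (hz : |z| ≤ 2) : barrier m i j x z ≤ x ^ 2 + 1 := by
  have hm₁ : (1 : ℝ) ≤ m := by exact_mod_cast pos_of_gt hi
  have : 1 / (16 * (m : ℝ) ^ 4) ≤ 1 := by
    rw [div_le_one (by positivity)]
    linarith [one_le_pow₀ hm₁ (n := 4)]
  have := barrier_le hi hj hx hz
  rw [tangent_eq_sq_sub] at this
  linarith [sq_nonneg (x - 1 / m)]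

lemma one_div_two_mul_sq_le_abs_inv_sub_inv {m n : ℕ} (hm : 0 < m) (hn : 0 < n) (hmn : m ≠ n) :
    1 / (2 * (m : ℝ) ^ 2) ≤ |1 / (m : ℝ) - 1 / n| := by
  have hm₁ : (1 : ℝ) ≤ m := by exact_mod_cast hm
  have hdist : (1 : ℝ) ≤ |(n : ℝ) - m| := by
    have : (1 : ℤ) ≤ |(n : ℤ) - m| := Int.one_le_abs (by omega)
    exact_mod_cast this
  have hn_le : (n : ℝ) ≤ m + |(n : ℝ) - m| := by linarith [le_abs_self ((n : ℝ) - m)]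
  have hdiff : 1 / (m : ℝ) - 1 / n = (n - m) / (m * n) := by field_simp
  rw [hdiff, abs_div, abs_of_pos (by positivity : (0 : ℝ) < m * n),
    div_le_div_iff₀ (by positivity) (by positivity)]
  calc 1 * (m * n : ℝ) ≤ m * (m + |(n : ℝ) - m|) := by rw [one_mul]; gcongr
    _ ≤ m * (m * |(n : ℝ) - m| + m * |(n : ℝ) - m|) := by
      gcongr
      · exact le_mul_of_one_le_right (by positivity) hdist
      · exact le_mul_of_one_le_left (abs_nonneg _) hm₁
    _ = |(n : ℝ) - m| * (2 * (m : ℝ) ^ 2) := by ring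

/-- Patches with different indices do not interfere. -/
lemma barrier_le_of_ne {m n i j : ℕ} (hm : 0 < m) (hi : i < n) (hj : j < n) (hnm : n ≠ m)
    {s z : ℝ} (hs₀ : 0 ≤ s) (hs : s ≤ 1 / (8 * (m : ℝ) ^ 2)) (hz : |z| ≤ 2) :
    barrier n i j (s + 1 / m) z ≤ (s + 1 / m) ^ 2 - s ^ 2 := by
  have hn : 0 < n := pos_of_gt hi
  have hm₁ : (1 : ℝ) ≤ m := by exact_mod_cast hm
  set g := |1 / (m : ℝ) - 1 / n| with hg
  have hsg : s ≤ g / 4 := by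
    have := one_div_two_mul_sq_le_abs_inv_sub_inv hm hn hnm.symm
    have : 1 / (8 * (m : ℝ) ^ 2) = 1 / (2 * (m : ℝ) ^ 2) / 4 := by field_simp; norm_num
    linarith
  have hng : 1 / (16 * (n : ℝ) ^ 4) ≤ (g / 2) ^ 2 :=
    calc 1 / (16 * (n : ℝ) ^ 4) = (1 / (2 * (n : ℝ) ^ 2) / 2) ^ 2 := by field_simp; norm_num
      _ ≤ (g / 2) ^ 2 := by
        have := one_div_two_mul_sq_le_abs_inv_sub_inv hn hm hnm
        rw [abs_sub_comm] at this
        gcongr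
  have hdist : 3 / 4 * g ≤ |s + 1 / m - 1 / n| := by
    have : g ≤ |s + 1 / m - 1 / n| + |s| := by
      rw [hg, show 1 / (m : ℝ) - 1 / n = s + 1 / m - 1 / n - s by ring]
      exact abs_sub _ _
    rw [abs_of_nonneg hs₀] at this
    linarith
  have hsq : (3 / 4 * g) ^ 2 ≤ (s + 1 / m - 1 / n) ^ 2 := by
    rw [← sq_abs (s + 1 / m - 1 / n)]; gcongr
  have hssq : s ^ 2 ≤ (g / 4) ^ 2 := by gcongr
  have hx : |s + 1 / m| ≤ 4 := by
    have : 1 / (m : ℝ) ≤ 1 := (div_le_one (by positivity)).2 hm₁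
    have : 1 / (8 * (m : ℝ) ^ 2) ≤ 1 := by
      rw [div_le_one (by positivity)]; linarith [one_le_pow₀ hm₁ (n := 2)]
    rw [abs_of_nonneg (by positivity)]
    linarith
  have := barrier_le hi hj hx hz
  rw [tangent_eq_sq_sub] at this
  nlinarith

lemma convex_setOf_le {E : Type*} [AddCommGroup E] [Module ℝ E] {f g : E → ℝ}
    (hf : ConvexOn ℝ univ f) (hg : ConcaveOn ℝ univ g) : Convex ℝ {x | f x ≤ g x} := by
  simpa using (hf.sub hg).convex_le 0

/-- The reflection of the moving body: `-body` is translated among the obstacles. Its top face is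
`q 1 = -q 0 ^ 2`, its bottom face is the graph of the supremum of the `barrier`s shifted down by
`64`, and `q 0 + |q 2| = 4` is a ridge. -/
def body : Set (Fin 3 → ℝ) :=
  {q | -4 ≤ q 0 ∧ q 0 + |q 2| ≤ 4 ∧ q 1 ≤ -q 0 ^ 2 ∧ -64 ≤ q 1 ∧
    ∀ m i j, i < m → j < m → barrier m i j (q 0) (q 2) - 64 ≤ q 1}

lemma mem_body_of_le {q : Fin 3 → ℝ} (h₀ : -4 ≤ q 0) (h₀₂ : q 0 + |q 2| ≤ 4) (h₂ : |q 2| ≤ 2)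
    (htop : q 1 ≤ -q 0 ^ 2) (hbot : q 0 ^ 2 - 63 ≤ q 1) : q ∈ body := by
  have hx : |q 0| ≤ 4 := abs_le.2 ⟨h₀, by linarith [abs_nonneg (q 2)]⟩
  refine ⟨h₀, h₀₂, htop, by linarith [sq_nonneg (q 0)], fun m i j hi hj ↦ ?_⟩
  linarith [barrier_le_sq_add_one hi hj hx h₂]

lemma convexOn_barrier {m : ℕ} (hm : 0 < m) (i j : ℕ) :
    ConvexOn ℝ univ fun q : Fin 3 → ℝ ↦ barrier m i j (q 0) (q 2) := by
  have hβ := (yScale_pos hm).le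
  refine ⟨convex_univ, fun q _ r _ a b ha hb hab ↦ ?_⟩
  have habs := abs_add_le (a * ((q 0 - 1 / m) / xScale m - kink m i j))
    (b * ((r 0 - 1 / m) / xScale m - kink m i j))
  rw [abs_mul, abs_mul, abs_of_nonneg ha, abs_of_nonneg hb] at habs
  obtain rfl : a = 1 - b := by linarith
  have := mul_le_mul_of_nonneg_left habs hβ
  simp only [barrier, tangent, Pi.add_apply, Pi.smul_apply, smul_eq_mul]
  ring_nf at this ⊢
  linarith

lemma convex_body : Convex ℝ body := by
  have convex_coord (k : Fin 3) : ConvexOn ℝ univ fun q : Fin 3 → ℝ ↦ q k :=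
    (LinearMap.proj k : (Fin 3 → ℝ) →ₗ[ℝ] ℝ).convexOn convex_univ
  have concave_coord (k : Fin 3) : ConcaveOn ℝ univ fun q : Fin 3 → ℝ ↦ q k :=
    (LinearMap.proj k : (Fin 3 → ℝ) →ₗ[ℝ] ℝ).concaveOn convex_univ
  have convex_abs : ConvexOn ℝ univ fun q : Fin 3 → ℝ ↦ |q 2| :=
    (convexOn_norm convex_univ).comp_linearMap (LinearMap.proj 2 : (Fin 3 → ℝ) →ₗ[ℝ] ℝ)
  have convex_sq : ConvexOn ℝ univ fun q : Fin 3 → ℝ ↦ q 0 ^ 2 :=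
    (even_two.convexOn_pow (𝕜 := ℝ)).comp_linearMap (LinearMap.proj 0 : (Fin 3 → ℝ) →ₗ[ℝ] ℝ)
  have convex_const (c : ℝ) : ConvexOn ℝ univ fun _ : Fin 3 → ℝ ↦ c :=
    convexOn_const c convex_univ
  have concave_const (c : ℝ) : ConcaveOn ℝ univ fun _ : Fin 3 → ℝ ↦ c :=
    concaveOn_const c convex_univ
  unfold body
  simp only [ofPred_and, ofPred_forall]
  refine (convex_setOf_le (convex_const _) (concave_coord 0)).inter <|
    (convex_setOf_le ((convex_coord 0).add convex_abs) (concave_const 4)).inter <|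
    (convex_setOf_le (convex_coord 1) convex_sq.neg).inter <|
    (convex_setOf_le (convex_const _) (concave_coord 1)).inter ?_
  refine convex_iInter fun m ↦ convex_iInter fun i ↦ convex_iInter fun j ↦
    convex_iInter fun hi ↦ convex_iInter fun _ ↦ ?_
  exact convex_setOf_le ((convexOn_barrier (pos_of_gt hi) i j).sub (concave_const 64))
    (concave_coord 1)

lemma isClosed_body : IsClosed body := by
  have continuous_barrier (m i j : ℕ) :
      Continuous fun q : Fin 3 → ℝ ↦ barrier m i j (q 0) (q 2) := by
    unfold barrier tangent
    fun_prop
  unfold body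
  simp only [ofPred_and, ofPred_forall]
  refine (isClosed_le (by fun_prop) (by fun_prop)).inter <|
    (isClosed_le (by fun_prop) (by fun_prop)).inter <|
    (isClosed_le (by fun_prop) (by fun_prop)).inter <|
    (isClosed_le (by fun_prop) (by fun_prop)).inter ?_
  exact isClosed_iInter fun m ↦ isClosed_iInter fun i ↦ isClosed_iInter fun j ↦
    isClosed_iInter fun _ ↦ isClosed_iInter fun _ ↦ isClosed_le (by fun_prop) (by fun_prop)

lemma isCompact_body : IsCompact body := by
  refine Metric.isCompact_of_isClosed_isBounded isClosed_body <|
    (Metric.isBounded_closedBall (x := 0) (r := 64)).subset fun q ⟨h₀, h₀₂, htop, hbot, _⟩ ↦ ?_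
  have := abs_nonneg (q 2)
  have := sq_nonneg (q 0)
  rw [mem_closedBall_zero_iff, pi_norm_le_iff_of_nonneg (by norm_num)]
  simp only [Real.norm_eq_abs, Fin.forall_fin_succ, Fin.succ_zero_eq_one, Fin.succ_one_eq_two,
    IsEmpty.forall_iff, and_true]
  refine ⟨abs_le.2 ⟨?_, ?_⟩, abs_le.2 ⟨?_, ?_⟩, ?_⟩ <;> linarith

lemma nonempty_interior_neg {E : Type*} [TopologicalSpace E] [InvolutiveNeg E] [ContinuousNeg E]
    {s : Set E} (hs : (interior s).Nonempty) : (interior (-s)).Nonempty := by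
  rw [← neg_preimage, ← Homeomorph.coe_neg, ← Homeomorph.preimage_interior]
  exact hs.neg

lemma interior_body_nonempty : (interior body).Nonempty := by
  refine ⟨![0, -8, 0], mem_interior.2 ⟨{q | -4 < q 0 ∧ q 0 + |q 2| < 4 ∧ |q 2| < 2 ∧
    q 1 < -q 0 ^ 2 ∧ q 0 ^ 2 - 63 < q 1}, ?_, ?_, by
    simp only [mem_ofPred_eq, Matrix.cons_val]; norm_num⟩⟩
  · rintro q ⟨h₀, h₀₂, h₂, htop, hbot⟩
    exact mem_body_of_le h₀.le h₀₂.le h₂.le htop.le hbot.le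
  · simp only [ofPred_and]
    exact (isOpen_lt (by fun_prop) (by fun_prop)).inter <|
      (isOpen_lt (by fun_prop) (by fun_prop)).inter <|
      (isOpen_lt (by fun_prop) (by fun_prop)).inter <|
      (isOpen_lt (by fun_prop) (by fun_prop)).inter <|
      isOpen_lt (by fun_prop) (by fun_prop)

/-- Scaled coordinates on the translation vectors near the origin. The second coordinate is measured
from the tangent line of slope `2 / m`. -/
noncomputable def chart (m : ℕ) (p : ℝ × ℝ × ℝ) : Fin 3 → ℝ :=
  ![xScale m * p.1, 2 * (xScale m * p.1) / m + yScale m * p.2.1, zScale m * p.2.2]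

/-- The inverse of `chart m`. -/
noncomputable def coords (m : ℕ) (t : Fin 3 → ℝ) : ℝ × ℝ × ℝ :=
  (t 0 / xScale m, (t 1 - 2 * t 0 / m) / yScale m, t 2 / zScale m)

lemma continuous_coords (m : ℕ) : Continuous (coords m) := by
  unfold coords
  fun_prop

lemma coords_chart {m : ℕ} (hm : 0 < m) (p : ℝ × ℝ × ℝ) : coords m (chart m p) = p := by
  have := (xScale_pos hm).ne'
  have := (yScale_pos hm).ne'
  have := (zScale_pos hm).ne'
  ext <;> simp [coords, chart] <;> field_simp

lemma chart_coords {m : ℕ} (hm : 0 < m) (t : Fin 3 → ℝ) : chart m (coords m t) = t := by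
  have := (xScale_pos hm).ne'
  have := (yScale_pos hm).ne'
  have := (zScale_pos hm).ne'
  ext k
  fin_cases k <;> simp [coords, chart] <;> field_simp
  ring

/-- The range of the scaled coordinates which contains the bounded components. -/
def window (m : ℕ) : Set (ℝ × ℝ × ℝ) :=
  Ico 0 (m : ℝ) ×ˢ Icc (-1) (2 * (m : ℝ) ^ 2) ×ˢ Icc (-(512 * (m : ℝ) ^ 2)) (m : ℝ)

section Window

variable {m : ℕ} {X Y Z : ℝ}

lemma xScale_mul_mem_Icc_of_mem_window (hm : 0 < m) (h : (X, Y, Z) ∈ window m) :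
    xScale m * X ∈ Icc 0 (1 / (8 * (m : ℝ) ^ 2)) := by
  obtain ⟨⟨hX₀, hX⟩, -⟩ := h
  dsimp only at hX₀ hX
  have hρ := xScale_pos hm
  refine ⟨by positivity, ?_⟩
  calc xScale m * X ≤ xScale m * (m : ℝ) ^ 3 / (m : ℝ) ^ 2 := by
        rw [le_div_iff₀ (by positivity), pow_succ' _ 2, ← mul_assoc]; gcongr
    _ ≤ 1 / 8 / (m : ℝ) ^ 2 := by
        gcongr; linarith [xScale_mul_pow_le hm (n := 3) (by norm_num)]
    _ = 1 / (8 * (m : ℝ) ^ 2) := div_div _ _ _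

lemma xScale_mul_le_of_mem_window (hm : 0 < m) (h : (X, Y, Z) ∈ window m) :
    xScale m * X ≤ 1 / 8 := by
  refine (xScale_mul_mem_Icc_of_mem_window hm h).2.trans ?_
  have : (1 : ℝ) ≤ (m : ℝ) ^ 2 := one_le_pow₀ (by exact_mod_cast hm)
  gcongr
  linarith

lemma abs_yScale_mul_le_of_mem_window (hm : 0 < m) (h : (X, Y, Z) ∈ window m) :
    |yScale m * Y| ≤ 1 / 8 := by
  obtain ⟨-, ⟨hY₀, hY⟩, -⟩ := h
  dsimp only at hY₀ hY
  have hβ := yScale_pos hm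
  have : (1 : ℝ) ≤ (m : ℝ) ^ 2 := one_le_pow₀ (by exact_mod_cast hm)
  rw [abs_mul, abs_of_pos hβ]
  calc yScale m * |Y| ≤ yScale m * (2 * (m : ℝ) ^ 2) := by
        gcongr; exact abs_le.2 ⟨by linarith, hY⟩
    _ ≤ 1 / 8 := by linarith [yScale_mul_pow_le hm le_rfl]

lemma abs_zScale_mul_le_of_mem_window (hm : 0 < m) (h : (X, Y, Z) ∈ window m) :
    |zScale m * Z| ≤ 1 := by
  obtain ⟨-, -, ⟨hZ₀, hZ⟩⟩ := h
  dsimp only at hZ₀ hZ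
  have hγ := zScale_pos hm
  have hm₁ : (1 : ℝ) ≤ m := by exact_mod_cast hm
  rw [abs_mul, abs_of_pos hγ]
  calc zScale m * |Z| ≤ zScale m * (512 * (m : ℝ) ^ 2) := by
        gcongr; exact abs_le.2 ⟨hZ₀, by nlinarith⟩
    _ = 2048 * (xScale m * (m : ℝ) ^ 3) := by unfold zScale; ring
    _ ≤ 1 := by linarith [xScale_mul_pow_le hm (n := 3) (by norm_num)]

lemma two_mul_xScale_mul_div_mem_Icc_of_mem_window (hm : 0 < m) (h : (X, Y, Z) ∈ window m) :
    2 * (xScale m * X) / m ∈ Icc 0 (1 / 4) := by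
  have hX₀ := (xScale_mul_mem_Icc_of_mem_window hm h).1
  have hX := xScale_mul_le_of_mem_window hm h
  refine ⟨by positivity, ?_⟩
  rw [div_le_iff₀ (by positivity)]
  have : (1 : ℝ) ≤ m := by exact_mod_cast hm
  linarith

end Window

/-- The obstacle which pushes the `i`-th floor, a nearly straight piece of the top face, into the
window of the `m`-th patch. -/
noncomputable def floorObstacle (m i : ℕ) : Fin 3 → ℝ :=
  ![1 / m + i * slopeScale m + xScale m * i,
    (1 / m + i * slopeScale m + xScale m * i) ^ 2 - yScale m * i ^ 2 - (xScale m * i) ^ 2, 0]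

/-- The height in the scaled coordinates of the face blocked by `floorObstacle m i`. -/
noncomputable def floorHeight (m i : ℕ) (X : ℝ) : ℝ :=
  tangent i X - (X - i) ^ 2 / (16 * (m : ℝ) ^ 2)

/-- The obstacle which pushes the `m`-th patch of the bottom face into the window. The third
coordinate selects the summand `j` of the patch. -/
noncomputable def ceilingObstacle (m j : ℕ) : Fin 3 → ℝ :=
  ![-(1 / m), 64 - (1 / m) ^ 2 - yScale m * (m + j) ^ 2 - yScale m / (64 * m),
    -((m + j) / (2 * (m : ℝ) ^ 4))]

/-- The height in the scaled coordinates of the graph of `barrier m i' j'` on the face blocked by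
`ceilingObstacle m j`. -/
noncomputable def ceilingHeight (m j i' j' : ℕ) (X Z : ℝ) : ℝ :=
  tangent i' X + |X - kink m i' j'| / 2 + (m + j') / (256 * (m : ℝ) ^ 3) * Z - ((j : ℝ) - j') ^ 2
    - 1 / (64 * m)

/-- The obstacle which pushes the ridge of the body across the window along the plane `Z = k`. -/
noncomputable def shelfObstacle (m k : ℕ) : Fin 3 → ℝ :=
  ![xScale m * m - 4, 30, zScale m * k]

section Obstacles

variable {m : ℕ} {X Y Z : ℝ}

lemma top_floorObstacle_iff (hm : 0 < m) (i : ℕ) :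
    (chart m (X, Y, Z) - floorObstacle m i) 1 ≤ -(chart m (X, Y, Z) - floorObstacle m i) 0 ^ 2 ↔
      Y ≤ floorHeight m i X := by
  have hscaled : -(chart m (X, Y, Z) - floorObstacle m i) 0 ^ 2
      - (chart m (X, Y, Z) - floorObstacle m i) 1 = yScale m * (floorHeight m i X - Y) := by
    simp only [chart, floorObstacle, floorHeight, tangent, yScale, slopeScale_eq hm, Pi.sub_apply,
      Matrix.cons_val]
    field_simp
    ring
  rw [← sub_nonneg, hscaled, mul_nonneg_iff_of_pos_left (yScale_pos hm), sub_nonneg]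

lemma barrier_ceilingObstacle_iff (hm : 0 < m) (j i' j' : ℕ) :
    barrier m i' j' ((chart m (X, Y, Z) - ceilingObstacle m j) 0)
        ((chart m (X, Y, Z) - ceilingObstacle m j) 2) - 64
      ≤ (chart m (X, Y, Z) - ceilingObstacle m j) 1 ↔ ceilingHeight m j i' j' X Z ≤ Y := by
  have hu : ((chart m (X, Y, Z) - ceilingObstacle m j) 0 - 1 / m) / xScale m = X := by
    have := (xScale_pos hm).ne'
    simp only [chart, ceilingObstacle, Pi.sub_apply, Matrix.cons_val]
    field_simp
    ring
  have hv : 2 * (m : ℝ) ^ 4 * (chart m (X, Y, Z) - ceilingObstacle m j) 2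
      = Z / (512 * (m : ℝ) ^ 3) + (m + j) := by
    simp only [chart, ceilingObstacle, zScale, xScale, Pi.sub_apply, Matrix.cons_val]
    field_simp
    ring
  have hscaled : (chart m (X, Y, Z) - ceilingObstacle m j) 1
      - (barrier m i' j' ((chart m (X, Y, Z) - ceilingObstacle m j) 0)
        ((chart m (X, Y, Z) - ceilingObstacle m j) 2) - 64)
      = yScale m * (Y - ceilingHeight m j i' j' X Z) := by
    rw [barrier, hu, hv]
    simp only [chart, ceilingObstacle, ceilingHeight, tangent, Pi.sub_apply, Matrix.cons_val]
    field_simp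
    ring
  rw [← sub_nonneg, hscaled, mul_nonneg_iff_of_pos_left (yScale_pos hm), sub_nonneg]

lemma ridge_shelfObstacle_iff (hm : 0 < m) (k : ℕ) :
    (chart m (X, Y, Z) - shelfObstacle m k) 0 + |(chart m (X, Y, Z) - shelfObstacle m k) 2| ≤ 4 ↔
      X + 4 * m * |Z - k| ≤ m := by
  have hscaled : 4 - ((chart m (X, Y, Z) - shelfObstacle m k) 0
      + |(chart m (X, Y, Z) - shelfObstacle m k) 2|)
      = xScale m * (m - (X + 4 * m * |Z - k|)) := by
    simp only [chart, shelfObstacle, Pi.sub_apply, Matrix.cons_val]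
    rw [← mul_sub (zScale m), abs_mul, abs_of_pos (zScale_pos hm), zScale]
    ring
  rw [← sub_nonneg, hscaled, mul_nonneg_iff_of_pos_left (xScale_pos hm), sub_nonneg]

lemma floorObstacle_zero_mem_Icc {i : ℕ} (hi : i < m) : floorObstacle m i 0 ∈ Icc 0 2 := by
  have hm : 0 < m := pos_of_gt hi
  have hρ := xScale_pos hm
  have hσ := slopeScale_pos hm
  have hi' : (i : ℝ) ≤ m := by exact_mod_cast hi.le
  have hinv : 1 / (m : ℝ) ≤ 1 := div_le_one_of_le₀ (by exact_mod_cast hm) (by positivity)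
  have hslope : i * slopeScale m ≤ 1 / 256 :=
    calc i * slopeScale m ≤ m * slopeScale m := by gcongr
      _ = 16 * (xScale m * (m : ℝ) ^ 3) := by rw [slopeScale_eq hm]; ring
      _ ≤ 1 / 256 := by linarith [xScale_mul_pow_le hm (n := 3) (by norm_num)]
  have hshift : xScale m * i ≤ 1 / 4096 :=
    calc xScale m * i ≤ xScale m * (m : ℝ) ^ 1 := by rw [pow_one]; gcongr
      _ ≤ 1 / 4096 := xScale_mul_pow_le hm (by norm_num)
  simp only [floorObstacle, Matrix.cons_val]
  exact ⟨by positivity, by linarith⟩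

lemma chart_sub_floorObstacle_mem_body {i : ℕ} (hi : i < m) (h : (X, Y, Z) ∈ window m)
    (hY : Y ≤ floorHeight m i X) : chart m (X, Y, Z) - floorObstacle m i ∈ body := by
  have hm : 0 < m := pos_of_gt hi
  have htop := (top_floorObstacle_iff (Z := Z) hm i).2 hY
  have hX₀ := (xScale_mul_mem_Icc_of_mem_window hm h).1
  have hX := xScale_mul_le_of_mem_window hm h
  obtain ⟨hYl, -⟩ := abs_le.1 (abs_yScale_mul_le_of_mem_window hm h)
  have hZ := abs_zScale_mul_le_of_mem_window hm h
  have hshift := (two_mul_xScale_mul_div_mem_Icc_of_mem_window hm h).1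
  have hβ := yScale_pos hm
  obtain ⟨ha₀, ha⟩ := floorObstacle_zero_mem_Icc hi
  set a := floorObstacle m i 0 with ha_def
  have h₀ : (chart m (X, Y, Z) - floorObstacle m i) 0 = xScale m * X - a := by
    simp [chart, ha_def]
  have h₁ : (chart m (X, Y, Z) - floorObstacle m i) 1 = 2 * (xScale m * X) / m + yScale m * Y
      - (a ^ 2 - yScale m * i ^ 2 - (xScale m * i) ^ 2) := by
    simp [chart, floorObstacle, ha_def]
  have h₂ : (chart m (X, Y, Z) - floorObstacle m i) 2 = zScale m * Z := by
    simp [chart, floorObstacle]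
  refine mem_body_of_le ?_ ?_ ?_ htop ?_
  · rw [h₀]; linarith
  · rw [h₀, h₂]; linarith
  · rw [h₂]; linarith
  · rw [h₀, h₁]
    have : 0 ≤ yScale m * i ^ 2 := by positivity
    nlinarith

lemma ceilingObstacle_two_mem_Icc {j : ℕ} (hj : j < m) : ceilingObstacle m j 2 ∈ Icc (-1) 0 := by
  have hm : 0 < m := pos_of_gt hj
  have hj' : (j : ℝ) ≤ m := by exact_mod_cast hj.le
  have : (m : ℝ) ≤ (m : ℝ) ^ 4 := le_self_pow₀ (by exact_mod_cast hm) (by norm_num)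
  simp only [ceilingObstacle, Matrix.cons_val]
  refine ⟨neg_le_neg (div_le_one_of_le₀ (by linarith) (by positivity)), ?_⟩
  exact neg_nonpos.2 (by positivity)

lemma yScale_mul_add_sq_mem_Icc_of_mem_window {j : ℕ} (hj : j < m) (h : (X, Y, Z) ∈ window m) :
    yScale m * (Y + (m + j) ^ 2 + 1 / (64 * m)) ∈ Icc 0 1 := by
  obtain ⟨-, ⟨hY₀, hY⟩, -⟩ := h
  dsimp only at hY₀ hY
  have hm : 0 < m := pos_of_gt hj
  have hm₁ : (1 : ℝ) ≤ m := by exact_mod_cast hm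
  have hj' : (j : ℝ) ≤ m := by exact_mod_cast hj.le
  have hβ := yScale_pos hm
  constructor
  · have : (1 : ℝ) ≤ (m + j) ^ 2 := one_le_pow₀ (by linarith [(j.cast_nonneg : (0 : ℝ) ≤ j)])
    have : 0 ≤ 1 / (64 * (m : ℝ)) := by positivity
    exact mul_nonneg hβ.le (by linarith)
  · have : 1 / (64 * (m : ℝ)) ≤ (m : ℝ) ^ 2 :=
      (div_le_one_of_le₀ (by linarith) (by positivity)).trans (one_le_pow₀ hm₁)
    calc yScale m * (Y + (m + j) ^ 2 + 1 / (64 * m))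
        ≤ yScale m * (2 * (m : ℝ) ^ 2 + (m + m) ^ 2 + (m : ℝ) ^ 2) := by gcongr
      _ = 7 * (yScale m * (m : ℝ) ^ 2) := by ring
      _ ≤ 1 := by linarith [yScale_mul_pow_le hm le_rfl]

lemma chart_sub_ceilingObstacle_mem_body {j : ℕ} (hj : j < m) (h : (X, Y, Z) ∈ window m)
    (hY : ∀ i' < m, ∀ j' < m, ceilingHeight m j i' j' X Z ≤ Y) :
    chart m (X, Y, Z) - ceilingObstacle m j ∈ body := by
  have hm : 0 < m := pos_of_gt hj
  obtain ⟨hX₀, hX₁⟩ := xScale_mul_mem_Icc_of_mem_window hm h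
  have hX := xScale_mul_le_of_mem_window hm h
  obtain ⟨hZ₀, hZ₁⟩ := abs_le.1 (abs_zScale_mul_le_of_mem_window hm h)
  obtain ⟨hs₀, hs₁⟩ := two_mul_xScale_mul_div_mem_Icc_of_mem_window hm h
  obtain ⟨hl₀, hl₁⟩ := yScale_mul_add_sq_mem_Icc_of_mem_window hj h
  obtain ⟨hc₀, hc₁⟩ := ceilingObstacle_two_mem_Icc hj
  have hinv₀ : 0 ≤ 1 / (m : ℝ) := by positivity
  have hinv : 1 / (m : ℝ) ≤ 1 := div_le_one_of_le₀ (by exact_mod_cast hm) (by positivity)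
  have hinv_sq : (1 / (m : ℝ)) ^ 2 ≤ 1 := pow_le_one₀ hinv₀ hinv
  have hbarrier (i' j' : ℕ) := barrier_ceilingObstacle_iff (X := X) (Y := Y) (Z := Z) hm j i' j'
  set q := chart m (X, Y, Z) - ceilingObstacle m j with hq
  have h₀ : q 0 = xScale m * X + 1 / m := by simp [hq, chart, ceilingObstacle]
  have h₁ : q 1 = 2 * (xScale m * X) / m + (1 / m) ^ 2 - 64
      + yScale m * (Y + (m + j) ^ 2 + 1 / (64 * m)) := by
    simp only [hq, chart, ceilingObstacle, Pi.sub_apply, Matrix.cons_val]; ring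
  have h₂ : |q 2| ≤ 2 := by
    simp only [hq, chart, Pi.sub_apply, Matrix.cons_val]
    exact abs_le.2 ⟨by linarith, by linarith⟩
  have hq₀ : q 0 ^ 2 ≤ 2 ^ 2 := by rw [h₀]; gcongr; linarith
  refine ⟨by linarith, by linarith, by linarith, by linarith [sq_nonneg (1 / (m : ℝ))],
    fun n i' j' hi' hj' ↦ ?_⟩
  rcases eq_or_ne n m with rfl | hn
  · exact (hbarrier i' j').2 (hY i' hi' j' hj')
  · have hother := barrier_le_of_ne hm hi' hj' hn hX₀ hX₁ h₂
    rw [← h₀] at hother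
    have hsq : q 0 ^ 2 - (xScale m * X) ^ 2 = 2 * (xScale m * X) / m + (1 / m) ^ 2 := by
      rw [h₀]; ring
    linarith

lemma chart_sub_shelfObstacle_mem_body {k : ℕ} (hk : k < m) (h : (X, Y, (k : ℝ)) ∈ window m) :
    chart m (X, Y, (k : ℝ)) - shelfObstacle m k ∈ body := by
  have hm : 0 < m := pos_of_gt hk
  have hX₀ := (xScale_mul_mem_Icc_of_mem_window hm h).1
  obtain ⟨hYl, hYr⟩ := abs_le.1 (abs_yScale_mul_le_of_mem_window hm h)
  obtain ⟨hs₀, hs₁⟩ := two_mul_xScale_mul_div_mem_Icc_of_mem_window hm h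
  have hridge := (ridge_shelfObstacle_iff (X := X) (Y := Y) (Z := k) hm k).2
    (by simpa using h.1.2.le)
  have hρm := xScale_mul_pow_le hm (n := 1) (by norm_num)
  set q := chart m (X, Y, (k : ℝ)) - shelfObstacle m k with hq
  have h₀ : q 0 = xScale m * X - xScale m * (m : ℝ) ^ 1 + 4 := by
    simp only [hq, chart, shelfObstacle, Pi.sub_apply, Matrix.cons_val]; ring
  have h₁ : q 1 = 2 * (xScale m * X) / m + yScale m * Y - 30 := by
    simp [hq, chart, shelfObstacle]
  have h₂ : q 2 = 0 := by simp [hq, chart, shelfObstacle]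
  have h₀r : q 0 ≤ 4 := by simpa [h₂] using hridge
  have hsq : q 0 ^ 2 ≤ 4 ^ 2 := by
    have : 0 ≤ q 0 := by rw [h₀]; linarith
    gcongr
  exact mem_body_of_le (by linarith) hridge (by simp [h₂]) (by linarith) (by linarith)

end Obstacles

/-- The obstacles of the three families, indexed by their family and their number in it. -/
noncomputable def obstacle (m : ℕ) : Fin m ⊕ Fin m ⊕ Fin m → Fin 3 → ℝ :=
  Sum.elim (fun i ↦ floorObstacle m i) <|
    Sum.elim (fun j ↦ ceilingObstacle m j) fun k ↦ shelfObstacle m k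

/-- The set of obstacles for the number `m`. -/
noncomputable def obstacles (m : ℕ) : Finset (Fin 3 → ℝ) := Finset.univ.image (obstacle m)

lemma mem_freeSpace_obstacles_iff {m : ℕ} {t : Fin 3 → ℝ} :
    t ∈ freeSpace (-body) (obstacles m : Set (Fin 3 → ℝ)) ↔
      (∀ i < m, t - floorObstacle m i ∉ body) ∧ (∀ j < m, t - ceilingObstacle m j ∉ body) ∧
        ∀ k < m, t - shelfObstacle m k ∉ body := by
  simp only [mem_freeSpace_neg, obstacles, Finset.coe_image, Finset.coe_univ, image_univ,
    forall_mem_range, Sum.forall, obstacle, Sum.elim_inl, Sum.elim_inr, Fin.forall_iff]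

lemma obstacle_injective {m : ℕ} (hm : 0 < m) : Injective (obstacle m) := by
  have hρ := xScale_pos hm
  have hσ := slopeScale_pos hm
  have hfloor₀ (i : Fin m) : 0 ≤ floorObstacle m i 0 := (floorObstacle_zero_mem_Icc i.2).1
  have hceiling₀ (j : Fin m) : ceilingObstacle m j 0 = -(1 / m) := by simp [ceilingObstacle]
  have hinv₀ : 0 < 1 / (m : ℝ) := by positivity
  have hinv : 1 / (m : ℝ) ≤ 1 := div_le_one_of_le₀ (by exact_mod_cast hm) (by positivity)
  have hshelf₀ (k : Fin m) : shelfObstacle m k 0 < -1 := by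
    simp only [shelfObstacle, Matrix.cons_val]
    linarith [xScale_mul_pow_le hm (n := 1) (by norm_num), pow_one (m : ℝ)]
  refine Injective.sumElim (fun i i' h ↦ ?_) (Injective.sumElim (fun j j' h ↦ ?_) (fun k k' h ↦ ?_)
    fun j k h ↦ ?_) fun i a h ↦ ?_
  · have h₀ := congrFun h 0
    simp only [floorObstacle, Matrix.cons_val] at h₀
    have : (slopeScale m + xScale m) * i = (slopeScale m + xScale m) * i' := by linarith
    exact Fin.ext (by exact_mod_cast mul_left_cancel₀ (by positivity) this)
  · have h₂ := congrFun h 2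
    simp only [ceilingObstacle, Matrix.cons_val] at h₂
    field_simp at h₂
    exact Fin.ext (by exact_mod_cast (by linarith : (j : ℝ) = j'))
  · have h₂ := congrFun h 2
    simp only [shelfObstacle, Matrix.cons_val] at h₂
    exact Fin.ext (by exact_mod_cast mul_left_cancel₀ (zScale_pos hm).ne' h₂)
  · exact ne_of_apply_ne (· 0) (by linarith [hceiling₀ j, hshelf₀ k] : _ < _).ne' h
  · rcases a with j | k
    · have h₀ : floorObstacle m i 0 = ceilingObstacle m j 0 := congrFun h 0
      linarith [hfloor₀ i, hceiling₀ j]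
    · have h₀ : floorObstacle m i 0 = shelfObstacle m k 0 := congrFun h 0
      linarith [hfloor₀ i, hshelf₀ k]

lemma card_obstacles {m : ℕ} (hm : 0 < m) : (obstacles m).card = 3 * m := by
  rw [obstacles, Finset.card_image_of_injective _ (obstacle_injective hm)]
  simp only [Finset.card_univ, Fintype.card_sum, Fintype.card_fin]
  ring

section Faces

variable {m : ℕ} {X Y Z : ℝ}

lemma chart_notMem_of_ceilingHeight_le_floorHeight {i j : ℕ} (hi : i < m) (hj : j < m)
    (h : (X, Y, Z) ∈ window m)
    (hle : ∀ i' < m, ∀ j' < m, ceilingHeight m j i' j' X Z ≤ floorHeight m i X) :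
    chart m (X, Y, Z) ∉ freeSpace (-body) (obstacles m : Set (Fin 3 → ℝ)) := by
  rw [mem_freeSpace_obstacles_iff]
  rintro ⟨hfloor, hceiling, -⟩
  rcases le_total Y (floorHeight m i X) with hY | hY
  · exact hfloor i hi (chart_sub_floorObstacle_mem_body hi h hY)
  · exact hceiling j hj (chart_sub_ceilingObstacle_mem_body hj h
      fun i' hi' j' hj' ↦ (hle i' hi' j' hj').trans hY)

lemma chart_notMem_of_eq_neg_one (hm : 0 < m) (h : (X, -1, Z) ∈ window m) :
    chart m (X, -1, Z) ∉ freeSpace (-body) (obstacles m : Set (Fin 3 → ℝ)) := by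
  have hX : X ^ 2 / (16 * (m : ℝ) ^ 2) ≤ 1 := by
    have : X ^ 2 ≤ (m : ℝ) ^ 2 := pow_le_pow_left₀ h.1.1 h.1.2.le 2
    exact div_le_one_of_le₀ (by linarith [sq_nonneg X]) (by positivity)
  have hfloor : -1 ≤ floorHeight m 0 X := by simpa [floorHeight, tangent] using hX
  exact fun ht ↦ (mem_freeSpace_obstacles_iff.1 ht).1 0 hm
    (chart_sub_floorObstacle_mem_body hm h hfloor)

lemma slope_mul_le {j : ℕ} (hj : j < m) (hZ : Z ≤ m) :
    (m + j) / (256 * (m : ℝ) ^ 3) * Z ≤ 1 / (128 * m) := by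
  have hm : 0 < m := pos_of_gt hj
  have hj' : (j : ℝ) ≤ m := by exact_mod_cast hj.le
  calc (m + j) / (256 * (m : ℝ) ^ 3) * Z
        ≤ (m + j) / (256 * (m : ℝ) ^ 3) * (m : ℝ) := by gcongr
    _ ≤ (m + m) / (256 * (m : ℝ) ^ 3) * (m : ℝ) := by gcongr
    _ = 1 / (128 * (m : ℝ)) := by field_simp; norm_num

lemma ceilingHeight_le {i' j' : ℕ} (j : ℕ) (hj' : j' < m) (hZ : Z ≤ m) :
    ceilingHeight m j i' j' X Z
      ≤ tangent i' X + |X - kink m i' j'| / 2 - ((j : ℝ) - j') ^ 2 - 1 / (128 * m) := by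
  have hm : (0 : ℝ) < m := by exact_mod_cast pos_of_gt hj'
  have hslope := slope_mul_le hj' hZ
  have : 1 / (64 * (m : ℝ)) = 1 / (128 * m) + 1 / (128 * m) := by field_simp; norm_num
  unfold ceilingHeight
  linarith

lemma abs_sub_kink_le {j : ℕ} (i : ℕ) (hj : j < m) : |X - kink m i j| ≤ |X - i| + 1 / 4 := by
  have hkink : |kink m i j - i| ≤ 1 / 4 :=
    abs_le.2 ⟨by linarith [natCast_le_kink m i j], by linarith [kink_le i hj]⟩
  calc |X - kink m i j| = |(X - i) - (kink m i j - i)| := by ring_nf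
    _ ≤ |X - i| + |kink m i j - i| := abs_sub _ _
    _ ≤ |X - i| + 1 / 4 := by gcongr

lemma chart_notMem_of_eq_two_mul_sq (hm : 0 < m) (h : (X, 2 * (m : ℝ) ^ 2, Z) ∈ window m) :
    chart m (X, 2 * (m : ℝ) ^ 2, Z) ∉ freeSpace (-body) (obstacles m : Set (Fin 3 → ℝ)) := by
  have hm₁ : (1 : ℝ) ≤ (m : ℝ) ^ 2 := one_le_pow₀ (by exact_mod_cast hm)
  have hX : X ^ 2 ≤ (m : ℝ) ^ 2 := pow_le_pow_left₀ h.1.1 h.1.2.le 2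
  refine fun ht ↦ (mem_freeSpace_obstacles_iff.1 ht).2.1 0 hm
    (chart_sub_ceilingObstacle_mem_body hm h fun i' _ j' hj' ↦ ?_)
  have hceiling := ceilingHeight_le (X := X) (i' := i') 0 hj' h.2.2.2
  have hkink := abs_sub_kink_le (X := X) i' hj'
  have : 0 ≤ 1 / (128 * (m : ℝ)) := by positivity
  rw [tangent_eq_sq_sub, ← sq_abs (X - i')] at hceiling
  nlinarith [sq_nonneg (|X - i'| - 1 / 4), sq_nonneg (((0 : ℕ) : ℝ) - j')]

lemma chart_notMem_of_eq_kink {i j : ℕ} (hi : i < m) (hj : j < m)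
    (h : (kink m i j, Y, Z) ∈ window m) :
    chart m (kink m i j, Y, Z) ∉ freeSpace (-body) (obstacles m : Set (Fin 3 → ℝ)) := by
  refine chart_notMem_of_ceilingHeight_le_floorHeight hi hj h fun i' _ j' hj' ↦ ?_
  have hm₁ : (1 : ℝ) ≤ m := by exact_mod_cast pos_of_gt hi
  have htangent := tangent_add_half_abs_sub_le (i' := i') (natCast_le_kink m i j) (kink_le i hj)
  have hceiling := ceilingHeight_le (X := kink m i j) (Z := Z) (i' := i') j hj' h.2.2.2
  have hkink : |kink m i j - kink m i' j'| / 2 - ((j : ℝ) - j') ^ 2 ≤ |(i : ℝ) - i'| / 2 := by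
    rcases eq_or_ne j j' with rfl | hne
    · simp [kink]
    · have : (1 : ℝ) ≤ ((j : ℝ) - j') ^ 2 := by
        have : (1 : ℤ) ≤ |(j : ℤ) - j'| := Int.one_le_abs (by omega)
        exact (one_le_sq_iff_one_le_abs _).2 (by exact_mod_cast this)
      linarith [abs_kink_sub_kink_le i i' hj hj']
  have hfloor : (kink m i j - i) ^ 2 / (16 * (m : ℝ) ^ 2) ≤ 1 / (128 * m) := by
    calc (kink m i j - i) ^ 2 / (16 * (m : ℝ) ^ 2)
        ≤ (1 / 4) ^ 2 / (16 * (m : ℝ)) := by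
          gcongr
          · linarith [natCast_le_kink m i j]
          · linarith [kink_le i hj]
          · exact le_self_pow₀ hm₁ two_ne_zero
      _ ≤ 1 / (128 * (m : ℝ)) := by
          rw [div_le_div_iff₀ (by positivity) (by positivity)]; linarith
  unfold floorHeight
  linarith

lemma chart_notMem_of_eq_natCast {k : ℕ} (hk : k < m) (h : (X, Y, (k : ℝ)) ∈ window m) :
    chart m (X, Y, (k : ℝ)) ∉ freeSpace (-body) (obstacles m : Set (Fin 3 → ℝ)) :=
  fun ht ↦ (mem_freeSpace_obstacles_iff.1 ht).2.2 k hk (chart_sub_shelfObstacle_mem_body hk h)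

lemma chart_notMem_of_eq_neg_mul_sq (hm : 0 < m)
    (h : (X, Y, -(512 * (m : ℝ) ^ 2)) ∈ window m) :
    chart m (X, Y, -(512 * (m : ℝ) ^ 2)) ∉
      freeSpace (-body) (obstacles m : Set (Fin 3 → ℝ)) := by
  have hm₁ : (1 : ℝ) ≤ m := by exact_mod_cast hm
  obtain ⟨⟨hX₀, hX⟩, -⟩ := id h
  have hi : ⌊X⌋₊ < m := (Nat.floor_lt hX₀).2 hX
  refine chart_notMem_of_ceilingHeight_le_floorHeight hi hm h fun i' _ j' hj' ↦ ?_
  have hslope : (m + j') / (256 * (m : ℝ) ^ 3) * -(512 * (m : ℝ) ^ 2) ≤ -2 := by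
    calc (m + j') / (256 * (m : ℝ) ^ 3) * -(512 * (m : ℝ) ^ 2) = -(2 + 2 * j' / m) := by
          field_simp; ring
      _ ≤ -2 := neg_le_neg (le_add_of_nonneg_right (by positivity))
  have hkink := abs_sub_kink_le (X := X) i' hj'
  have hfract : (X - ⌊X⌋₊) ^ 2 ≤ 1 :=
    pow_le_one₀ (sub_nonneg.2 (Nat.floor_le hX₀)) (by linarith [Nat.lt_floor_add_one X])
  have hfloor : (X - ⌊X⌋₊) ^ 2 / (16 * (m : ℝ) ^ 2) ≤ 1 / 16 := by
    gcongr
    linarith [one_le_pow₀ hm₁ (n := 2)]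
  have : 0 ≤ 1 / (64 * (m : ℝ)) := by positivity
  unfold ceilingHeight floorHeight
  rw [tangent_eq_sq_sub, tangent_eq_sq_sub, ← sq_abs (X - i')]
  nlinarith [sq_nonneg (|X - i'| - 1 / 4), sq_nonneg (((0 : ℕ) : ℝ) - j')]

end Faces

/-- The `n`-th wall between slots in the first scaled coordinate, where `n = i * m + j` numbers the
pairs `(i, j)` in increasing order of `kink m i j`. -/
noncomputable def xWall (m n : ℕ) : ℝ := kink m (n / m) (n % m)

/-- The walls between slots in the third scaled coordinate. -/
noncomputable def zWall (m : ℕ) : ℕ → ℝ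
  | 0 => -(512 * (m : ℝ) ^ 2)
  | k + 1 => k

/-- The scaled coordinates of the cell with index `(n, k)`. -/
noncomputable def slot (m n k : ℕ) : Set (ℝ × ℝ × ℝ) :=
  Ioo (xWall m n) (xWall m (n + 1)) ×ˢ Ioo (-1) (2 * (m : ℝ) ^ 2) ×ˢ
    Ioo (zWall m k) (zWall m (k + 1))

section Slots

variable {m n k : ℕ}

lemma xWall_eq (hm : 0 < m) (n : ℕ) : xWall m n = n / m - 3 * (n % m : ℕ) / (4 * m) := by
  have hdiv : (n : ℝ) = m * (n / m : ℕ) + (n % m : ℕ) := by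
    exact_mod_cast (Nat.div_add_mod n m).symm
  rw [xWall, kink, hdiv]
  field_simp
  ring

lemma xWall_add_lt_xWall_succ (hm : 0 < m) (n : ℕ) :
    xWall m n + 1 / (8 * m) < xWall m (n + 1) := by
  have hmod : (n + 1) % m ≤ n % m + 1 := by
    rw [← Nat.mod_add_mod]
    exact Nat.mod_le _ _
  have hmod' : (((n + 1) % m : ℕ) : ℝ) ≤ (n % m : ℕ) + 1 := by exact_mod_cast hmod
  rw [xWall_eq hm, xWall_eq hm, ← sub_pos]
  calc (0 : ℝ) < 1 / (8 * m) := by positivity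
    _ = 1 / m - 3 / (4 * m) - 1 / (8 * m) := by field_simp; norm_num
    _ ≤ 1 / m - 3 * (((n + 1) % m : ℕ) - (n % m : ℕ)) / (4 * m) - 1 / (8 * m) := by
      gcongr; linarith
    _ = _ := by push_cast; ring

lemma monotone_xWall (hm : 0 < m) : Monotone (xWall m) :=
  monotone_nat_of_le_succ fun n ↦ by
    have : 0 ≤ 1 / (8 * (m : ℝ)) := by positivity
    linarith [xWall_add_lt_xWall_succ hm n]

lemma xWall_mem_Ico (hn : n < m * m) : xWall m n ∈ Ico 0 (m : ℝ) := by
  have hm : 0 < m := Nat.pos_of_mul_pos_left (pos_of_gt hn)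
  have hi : ((n / m : ℕ) : ℝ) + 1 ≤ m := by exact_mod_cast Nat.div_lt_of_lt_mul hn
  have := kink_le (n / m) (Nat.mod_lt n hm)
  exact ⟨(Nat.cast_nonneg _).trans (natCast_le_kink m _ _), by unfold xWall; linarith⟩

lemma monotone_zWall (m : ℕ) : Monotone (zWall m) := by
  refine monotone_nat_of_le_succ fun k ↦ ?_
  rcases k with _ | k
  · simp [zWall]
  · simp [zWall]

lemma zWall_mem_Icc (hk : k ≤ m) : zWall m k ∈ Icc (-(512 * (m : ℝ) ^ 2)) (m : ℝ) :=
  ⟨monotone_zWall m k.zero_le, monotone_zWall m (hk.trans m.le_succ)⟩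

lemma disjoint_slot {n' k' : ℕ} (hm : 0 < m) (hne : (n, k) ≠ (n', k')) :
    Disjoint (slot m n k) (slot m n' k') := by
  rw [slot, slot, Set.disjoint_prod, Set.disjoint_prod]
  by_cases hn : n = n'
  · exact .inr (.inr ((monotone_zWall m).pairwise_disjoint_on_Ioo_succ fun hk ↦
      hne (Prod.ext hn hk)))
  · exact .inl ((monotone_xWall hm).pairwise_disjoint_on_Ioo_succ hn)

lemma isOpen_slot (m n k : ℕ) : IsOpen (slot m n k) :=
  isOpen_Ioo.prod (isOpen_Ioo.prod isOpen_Ioo)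

lemma closure_slot_subset_Icc (m n k : ℕ) : closure (slot m n k) ⊆
    Icc (xWall m n) (xWall m (n + 1)) ×ˢ Icc (-1) (2 * (m : ℝ) ^ 2) ×ˢ
      Icc (zWall m k) (zWall m (k + 1)) :=
  closure_minimal
    (prod_mono Ioo_subset_Icc_self (prod_mono Ioo_subset_Icc_self Ioo_subset_Icc_self))
    (isClosed_Icc.prod (isClosed_Icc.prod isClosed_Icc))

lemma closure_slot_subset_window (hn : n + 1 < m * m) (hk : k < m) :
    closure (slot m n k) ⊆ window m :=
  (closure_slot_subset_Icc m n k).trans <| prod_mono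
    (ordConnected_Ico.out (xWall_mem_Ico (by omega)) (xWall_mem_Ico hn)) <| prod_mono subset_rfl <|
    ordConnected_Icc.out (zWall_mem_Icc hk.le) (zWall_mem_Icc hk)

lemma chart_notMem_of_eq_xWall (hn : n < m * m) {Y Z : ℝ} (h : (xWall m n, Y, Z) ∈ window m) :
    chart m (xWall m n, Y, Z) ∉ freeSpace (-body) (obstacles m : Set (Fin 3 → ℝ)) :=
  chart_notMem_of_eq_kink (Nat.div_lt_of_lt_mul hn)
    (Nat.mod_lt n (Nat.pos_of_mul_pos_left (pos_of_gt hn))) h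

lemma chart_notMem_of_eq_zWall (hm : 0 < m) (hk : k ≤ m) {X Y : ℝ}
    (h : (X, Y, zWall m k) ∈ window m) :
    chart m (X, Y, zWall m k) ∉ freeSpace (-body) (obstacles m : Set (Fin 3 → ℝ)) := by
  rcases k with _ | k
  · exact chart_notMem_of_eq_neg_mul_sq hm h
  · exact chart_notMem_of_eq_natCast hk h

lemma chart_notMem_of_mem_frontier_slot (hn : n + 1 < m * m) (hk : k < m) {p : ℝ × ℝ × ℝ}
    (hp : p ∈ frontier (slot m n k)) :
    chart m p ∉ freeSpace (-body) (obstacles m : Set (Fin 3 → ℝ)) := by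
  have hm : 0 < m := pos_of_gt hk
  obtain ⟨X, Y, Z⟩ := p
  have hwindow := closure_slot_subset_window hn hk hp.1
  obtain ⟨⟨hX₀, hX₁⟩, ⟨hY₀, hY₁⟩, hZ₀, hZ₁⟩ := closure_slot_subset_Icc m n k hp.1
  have hnot : (X, Y, Z) ∉ slot m n k := (isOpen_slot m n k).interior_eq ▸ hp.2
  dsimp only at hX₀ hX₁ hY₀ hY₁ hZ₀ hZ₁
  rcases hX₀.eq_or_lt with rfl | hX₀
  · exact chart_notMem_of_eq_xWall (by omega) hwindow
  rcases hX₁.eq_or_lt with rfl | hX₁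
  · exact chart_notMem_of_eq_xWall hn hwindow
  rcases hY₀.eq_or_lt with rfl | hY₀
  · exact chart_notMem_of_eq_neg_one hm hwindow
  rcases hY₁.eq_or_lt with rfl | hY₁
  · exact chart_notMem_of_eq_two_mul_sq hm hwindow
  rcases hZ₀.eq_or_lt with rfl | hZ₀
  · exact chart_notMem_of_eq_zWall hm hk.le hwindow
  rcases hZ₁.eq_or_lt with rfl | hZ₁
  · exact chart_notMem_of_eq_zWall hm hk hwindow
  exact absurd ⟨⟨hX₀, hX₁⟩, ⟨hY₀, hY₁⟩, hZ₀, hZ₁⟩ hnot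

/-- A point of the slot `(n, k)` just above all floors. -/
noncomputable def slotPoint (m n k : ℕ) : ℝ × ℝ × ℝ :=
  (xWall m n + 1 / (8 * m), tangent (n / m : ℕ) (xWall m n + 1 / (8 * m)) + 1 / (64 * m), k - 1 / 2)

lemma tangent_le_tangent_slotPoint (hm : 0 < m) (n i' : ℕ) :
    tangent i' (slotPoint m n k).1 ≤ tangent (n / m : ℕ) (slotPoint m n k).1 := by
  have hX₀ : ((n / m : ℕ) : ℝ) ≤ (slotPoint m n k).1 :=
    (natCast_le_kink m _ _).trans (le_add_of_nonneg_right (by positivity))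
  have h := tangent_add_half_abs_sub_le (i' := i') hX₀
    (kink_add_one_div_le (n / m) (Nat.mod_lt n hm))
  exact (le_add_of_nonneg_right (by positivity)).trans h

lemma slotPoint_mem_slot (hn : n + 1 < m * m) (hk : k < m) : slotPoint m n k ∈ slot m n k := by
  have hm : 0 < m := pos_of_gt hk
  have hm₁ : (1 : ℝ) ≤ (m : ℝ) ^ 2 := one_le_pow₀ (by exact_mod_cast hm)
  have hstep : 0 < 1 / (8 * (m : ℝ)) := by positivity
  have hX₀ : xWall m n < (slotPoint m n k).1 := lt_add_of_pos_right _ hstep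
  have hX₁ : (slotPoint m n k).1 < xWall m (n + 1) := xWall_add_lt_xWall_succ hm n
  have hXm : (slotPoint m n k).1 ^ 2 ≤ (m : ℝ) ^ 2 :=
    pow_le_pow_left₀ ((xWall_mem_Ico (by omega)).1.trans hX₀.le)
      (hX₁.trans (xWall_mem_Ico hn).2).le 2
  have hlift₀ : 0 < 1 / (64 * (m : ℝ)) := by positivity
  have hlift₁ : 1 / (64 * (m : ℝ)) ≤ 1 / 64 := by
    gcongr
    exact le_mul_of_one_le_right (by norm_num) (by exact_mod_cast hm)
  have htangent₀ : 0 ≤ tangent (n / m : ℕ) (slotPoint m n k).1 := by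
    simpa [tangent] using tangent_le_tangent_slotPoint (k := k) hm n 0
  have htangent₁ : tangent (n / m : ℕ) (slotPoint m n k).1 ≤ (slotPoint m n k).1 ^ 2 := by
    rw [tangent_eq_sq_sub]
    exact sub_le_self _ (sq_nonneg _)
  have hY : (slotPoint m n k).2.1 =
      tangent (n / m : ℕ) (slotPoint m n k).1 + 1 / (64 * m) := rfl
  have hZ₀ : zWall m k < k - 1 / 2 := by
    rcases k with _ | k
    · simp only [zWall, Nat.cast_zero]; linarith
    · simp only [zWall, Nat.cast_succ]; linarith
  exact ⟨⟨hX₀, hX₁⟩, ⟨by linarith, by linarith⟩, hZ₀, sub_lt_self _ (by norm_num)⟩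

lemma slotPoint_lt_ceilingHeight {j : ℕ} (hj : j < m) (n k : ℕ) :
    (slotPoint m n k).2.1 <
      ceilingHeight m j (n / m) j (slotPoint m n k).1 (slotPoint m n k).2.2 := by
  have hm : 0 < m := pos_of_gt hj
  have hm₁ : (1 : ℝ) ≤ m := by exact_mod_cast hm
  have hkink : 1 / (8 * (m : ℝ)) ≤ |(slotPoint m n k).1 - kink m (n / m) j| :=
    one_div_le_abs_kink_add_sub_kink hm _ _ _
  have hslope : (m + j) / (256 * (m : ℝ) ^ 3) * (1 / 2 - k) ≤ 1 / (128 * m) :=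
    slope_mul_le hj (by linarith [k.cast_nonneg (α := ℝ)])
  have hmargin : 1 / (64 * (m : ℝ)) + 1 / (64 * m) + 1 / (128 * m) < 1 / (8 * m) / 2 := by
    field_simp; norm_num
  simp only [slotPoint, ceilingHeight, sub_self] at hkink ⊢
  linarith

lemma chart_slotPoint_mem_freeSpace (hn : n < m * m) (k : ℕ) :
    chart m (slotPoint m n k) ∈ freeSpace (-body) (obstacles m : Set (Fin 3 → ℝ)) := by
  have hm : 0 < m := Nat.pos_of_mul_pos_left (pos_of_gt hn)
  refine mem_freeSpace_obstacles_iff.2 ⟨fun i _ hbody ↦ ?_, fun j hj hbody ↦ ?_,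
    fun k' _ hbody ↦ ?_⟩
  · have hfloor := (top_floorObstacle_iff hm i).1 hbody.2.2.1
    have hlift : 0 < 1 / (64 * (m : ℝ)) := by positivity
    have hgap : 0 ≤ ((slotPoint m n k).1 - i) ^ 2 / (16 * (m : ℝ) ^ 2) := by positivity
    have htangent := tangent_le_tangent_slotPoint (k := k) hm n i
    unfold floorHeight at hfloor
    simp only [slotPoint] at hfloor hgap htangent
    linarith
  · have hceiling := (barrier_ceilingObstacle_iff hm j (n / m) j).1
      (hbody.2.2.2.2 m (n / m) j (Nat.div_lt_of_lt_mul hn) hj)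
    exact hceiling.not_gt (slotPoint_lt_ceilingHeight hj n k)
  · have hridge := (ridge_shelfObstacle_iff hm k').1 hbody.2.1
    have hX : 0 ≤ xWall m n + 1 / (8 * m) :=
      add_nonneg (xWall_mem_Ico hn).1 (by positivity)
    have hZ : 2 * (m : ℝ) ≤ 4 * m * |(k : ℝ) - 1 / 2 - k'| := by
      have hodd := one_le_abs_two_mul_add_one (k - k' - 1)
      have : 2 * ((k - k' - 1 : ℤ) : ℝ) + 1 = 2 * ((k : ℝ) - 1 / 2 - k') := by push_cast; ring
      rw [this, abs_mul, abs_two] at hodd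
      calc 2 * (m : ℝ) ≤ 2 * m * (2 * |(k : ℝ) - 1 / 2 - k'|) :=
            le_mul_of_one_le_right (by positivity) hodd
        _ = 4 * m * |(k : ℝ) - 1 / 2 - k'| := by ring
    have : (0 : ℝ) < m := by exact_mod_cast hm
    linarith

end Slots

lemma outer_mem_freeSpace (m : ℕ) :
    ![100, 0, 0] ∈ freeSpace (-body) (obstacles m : Set (Fin 3 → ℝ)) := by
  have notMem {p : Fin 3 → ℝ} (hp : p 0 ≤ 2) : (![100, 0, 0] : Fin 3 → ℝ) - p ∉ body := by
    rintro ⟨-, hridge, -⟩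
    have := abs_nonneg (((![100, 0, 0] : Fin 3 → ℝ) - p) 2)
    simp only [Pi.sub_apply, Matrix.cons_val] at hridge this
    linarith
  refine mem_freeSpace_obstacles_iff.2 ⟨fun i hi ↦ notMem (floorObstacle_zero_mem_Icc hi).2,
    fun j _ ↦ notMem ?_, fun k hk ↦ notMem ?_⟩
  · simp only [ceilingObstacle, Matrix.cons_val]
    exact (neg_nonpos.2 (by positivity)).trans zero_le_two
  · simp only [shelfObstacle, Matrix.cons_val]
    linarith [xScale_mul_pow_le (pos_of_gt hk) (n := 1) (by norm_num), pow_one (m : ℝ)]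

lemma coords_outer_notMem_slot {m n : ℕ} (hn : n + 1 < m * m) (k : ℕ) :
    coords m ![100, 0, 0] ∉ slot m n k := by
  rintro ⟨⟨-, hX⟩, -⟩
  have hm : 0 < m := Nat.pos_of_mul_pos_left (pos_of_gt hn)
  have hX : 100 / xScale m < m := hX.trans (xWall_mem_Ico hn).2
  rw [div_lt_iff₀' (xScale_pos hm)] at hX
  linarith [xScale_mul_pow_le hm (n := 1) (by norm_num), pow_one (m : ℝ)]

theorem succ_le_mk_connectedComponents_freeSpace {m : ℕ} (hm : 0 < m) :
    ((m ^ 3 - m + 1 : ℕ) : Cardinal) ≤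
      #(ConnectedComponents (freeSpace (-body) (obstacles m : Set (Fin 3 → ℝ)))) := by
  have hcard : ((m ^ 3 - m + 1 : ℕ) : Cardinal) = #(Option (Fin (m * m - 1) × Fin m)) := by
    rw [mk_fintype, Fintype.card_option, Fintype.card_prod, Fintype.card_fin, Fintype.card_fin,
      Nat.sub_mul, one_mul, pow_succ, sq]
  have hlt (p : Fin (m * m - 1) × Fin m) : (p.1 : ℕ) + 1 < m * m := by omega
  rw [hcard]
  refine option_le_mk_connectedComponents_of_frontier
    (U := fun p : Fin (m * m - 1) × Fin m ↦ coords m ⁻¹' slot m p.1 p.2)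
    (fun p ↦ (isOpen_slot _ _ _).preimage (continuous_coords m)) (fun p ↦ ?_) (fun p q hpq ↦ ?_)
    (fun p ↦ ?_) ?_
  · refine disjoint_left.2 fun t ht ↦ ?_
    rw [← chart_coords hm t]
    exact chart_notMem_of_mem_frontier_slot (hlt p) p.2.2
      ((continuous_coords m).frontier_preimage_subset _ ht)
  · have hne : ((p.1 : ℕ), (p.2 : ℕ)) ≠ ((q.1 : ℕ), (q.2 : ℕ)) := by
      simpa only [ne_eq, Prod.ext_iff, Fin.ext_iff] using hpq
    exact (disjoint_slot hm hne).preimage (coords m)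
  · refine ⟨chart m (slotPoint m p.1 p.2),
      chart_slotPoint_mem_freeSpace (Nat.lt_of_succ_lt (hlt p)) _, ?_⟩
    rw [mem_preimage, coords_chart hm]
    exact slotPoint_mem_slot (hlt p) p.2.2
  · refine ⟨![100, 0, 0], outer_mem_freeSpace m, ?_⟩
    simp only [mem_iUnion, not_exists, mem_preimage]
    exact fun p ↦ coords_outer_notMem_slot (hlt p) p.2

end FreeSpace

/-- **Corollary (motion planning).** There exist a convex body `K` in `ℝ³` and, for
every positive integer `m`, a set `P` of `3m` point obstacles such that the free
space for moving `K` by translations while avoiding `P` has at least `m³ − m + 1`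
connected components. -/
theorem free_space_many_components :
    ∃ K : Set (Fin 3 → ℝ),
      IsCompact K ∧ Convex ℝ K ∧ (interior K).Nonempty ∧
      ∀ m : ℕ, 0 < m →
        ∃ P : Finset (Fin 3 → ℝ), P.card = 3 * m ∧
          ((m ^ 3 - m + 1 : ℕ) : Cardinal) ≤
            Cardinal.mk (ConnectedComponents ↥{t : Fin 3 → ℝ | (t +ᵥ K) ∩ ↑P = ∅}) :=
  ⟨-FreeSpace.body, FreeSpace.isCompact_body.neg, FreeSpace.convex_body.neg,
    FreeSpace.nonempty_interior_neg FreeSpace.interior_body_nonempty, fun m hm ↦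
      ⟨FreeSpace.obstacles m, FreeSpace.card_obstacles hm,
        FreeSpace.succ_le_mk_connectedComponents_freeSpace hm⟩⟩
end
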